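/- arXiv:math/0703592 — 11 statements merged into one kernel-verified Lean document; each statement's English description precedes it below -/
import Mathlib

section
/- If m ≺ n in the Sharkovsky ordering and a continuous map f : I → I of a compact interval I has a period-m point, then f also has a period-n point. -/
/-- `x` is a periodic point of `f` with least period `m`. -/
def PeriodPt (f : ℝ → ℝ) (m : ℕ) (x : ℝ) : Prop :=
  f^[m] x = x ∧ ∀ i : ℕ, 0 < i → i < m → f^[i] x ≠ x

/-- The Sharkovsky ordering `m ≺ n`: writing `m = 2^a * p` and `n = 2^b * q` with `p`, `q` odd,
`m ≺ n` iff `(p > 1 ∧ q > 1 ∧ (a < b ∨ (a = b ∧ p < q))) ∨ (p > 1 ∧ q = 1) ∨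
(p = 1 ∧ q = 1 ∧ b < a)`. -/
def SharkovskyLt (m n : ℕ) : Prop :=
  ∃ a p b q : ℕ, Odd p ∧ Odd q ∧ m = 2 ^ a * p ∧ n = 2 ^ b * q ∧
    ((1 < p ∧ 1 < q ∧ (a < b ∨ (a = b ∧ p < q))) ∨ (1 < p ∧ q = 1) ∨
      (p = 1 ∧ q = 1 ∧ b < a))

open Function Set

/-- Continuity of iterates, in a form convenient for the intermediate value theorem. -/
lemma sh_ivt_fix {g : ℝ → ℝ} (hg : Continuous g) {s t : ℝ} (hst : s ≤ t) (hs : s < g s)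
    (ht : g t < t) : ∃ x, s < x ∧ x < t ∧ g x = x := by
  have h : ContinuousOn (fun x => g x - x) (Icc s t) := by fun_prop
  have := intermediate_value_Ioo' hst h
  obtain ⟨x, hx, hx2⟩ := this (show (0 : ℝ) ∈ Ioo (g t - t) (g s - s) by constructor <;> linarith)
  exact ⟨x, hx.1, hx.2, by simpa [sub_eq_zero] using hx2⟩

lemma sh_ivt_fix' {g : ℝ → ℝ} (hg : Continuous g) {s t : ℝ} (hst : s ≤ t) (hs : g s < s)
    (ht : t < g t) : ∃ x, s < x ∧ x < t ∧ g x = x := by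
  have h : ContinuousOn (fun x => g x - x) (Icc s t) := by fun_prop
  have := intermediate_value_Ioo hst h
  obtain ⟨x, hx, hx2⟩ := this (show (0 : ℝ) ∈ Ioo (g s - s) (g t - t) by constructor <;> linarith)
  exact ⟨x, hx.1, hx.2, by simpa [sub_eq_zero] using hx2⟩

/-- least solution of `g x = k x` in a compact interval -/
lemma sh_least {g k : ℝ → ℝ} (hg : Continuous g) (hk : Continuous k) {s t : ℝ}
    (hne : ∃ x, s ≤ x ∧ x ≤ t ∧ g x = k x) :
    ∃ x, s ≤ x ∧ x ≤ t ∧ g x = k x ∧ ∀ y, s ≤ y → y ≤ t → g y = k y → x ≤ y := by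
  have hc : IsCompact (Icc s t ∩ {x | g x = k x}) :=
    isCompact_Icc.inter_right (isClosed_eq hg hk)
  obtain ⟨x, hx⟩ := hc.exists_isLeast (by
    obtain ⟨x, h1, h2, h3⟩ := hne
    exact ⟨x, ⟨h1, h2⟩, h3⟩)
  exact ⟨x, hx.1.1.1, hx.1.1.2, hx.1.2, fun y h1 h2 h3 => hx.2 ⟨⟨h1, h2⟩, h3⟩⟩

/-- greatest solution of `g x = k x` in a compact interval -/
lemma sh_greatest {g k : ℝ → ℝ} (hg : Continuous g) (hk : Continuous k) {s t : ℝ}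
    (hne : ∃ x, s ≤ x ∧ x ≤ t ∧ g x = k x) :
    ∃ x, s ≤ x ∧ x ≤ t ∧ g x = k x ∧ ∀ y, s ≤ y → y ≤ t → g y = k y → y ≤ x := by
  have hc : IsCompact (Icc s t ∩ {x | g x = k x}) :=
    isCompact_Icc.inter_right (isClosed_eq hg hk)
  obtain ⟨x, hx⟩ := hc.exists_isGreatest (by
    obtain ⟨x, h1, h2, h3⟩ := hne
    exact ⟨x, ⟨h1, h2⟩, h3⟩)
  exact ⟨x, hx.1.1.1, hx.1.1.2, hx.1.2, fun y h1 h2 h3 => hx.2 ⟨⟨h1, h2⟩, h3⟩⟩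

lemma sh_minper {f : ℝ → ℝ} {n : ℕ} {x : ℝ} (hn : 0 < n) (h : f^[n] x = x)
    (h2 : ∀ i, 0 < i → i < n → f^[i] x ≠ x) : minimalPeriod f x = n := by
  have hp : IsPeriodicPt f n x := h
  have hle := hp.minimalPeriod_le hn
  have hpos := hp.minimalPeriod_pos hn
  by_contra hne
  exact h2 _ hpos (by omega) (isPeriodicPt_minimalPeriod f x)

lemma sh_minper_ne {f : ℝ → ℝ} {n : ℕ} {x : ℝ} (h : minimalPeriod f x = n) {i : ℕ}
    (hi : 0 < i) (hin : i < n) : f^[i] x ≠ x := fun hcon =>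
  not_isPeriodicPt_of_pos_of_lt_minimalPeriod hi.ne' (h ▸ hin) hcon

/-- Basic configuration attached to a periodic orbit. -/
lemma sh_setup {f : ℝ → ℝ} (hf : Continuous f) {m : ℕ} (hm : 3 ≤ m)
    (hx : ∃ x, minimalPeriod f x = m) :
    ∃ α v, α < v ∧ minimalPeriod f α = m ∧ (∀ i, α ≤ f^[i] α) ∧ v < f v ∧
      f v = f^[m-1] α ∧ f (f v) = α := by
  obtain ⟨x, hx⟩ := hx
  have hxper : x ∈ periodicPts f := minimalPeriod_pos_iff_mem_periodicPts.1 (by omega)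
  obtain ⟨k, hk, hkmin⟩ := Finset.exists_min_image (Finset.range m) (fun i => f^[i] x)
    ⟨0, by simp; omega⟩
  have hall : ∀ i, f^[k] x ≤ f^[i] x := by
    intro i
    rw [← iterate_mod_minimalPeriod_eq (n := i), hx]
    exact hkmin _ (by simp; exact Nat.mod_lt _ (by omega))
  set α := f^[k] x with hα
  have hαm : minimalPeriod f α = m := by
    rw [hα, minimalPeriod_apply_iterate hxper, hx]
  have hαmin : ∀ i, α ≤ f^[i] α := by
    intro i
    have : f^[i] α = f^[i + k] x := by rw [hα, iterate_add_apply]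
    rw [this]; exact hall _
  have hαper : f^[m] α = α := by rw [← hαm]; exact iterate_minimalPeriod
  set b := f^[m-1] α with hb
  have hfb : f b = α := by
    rw [hb, ← iterate_succ_apply' f, show (m-1).succ = m by omega, hαper]
  have hαb : α < b := lt_of_le_of_ne (hαmin _)
    (fun h => sh_minper_ne hαm (i := m-1) (by omega) (by omega) h.symm)
  have hex : ∃ i, f^[i] α < b ∧ b ≤ f^[i+1] α := by
    by_contra! hcon
    have : ∀ i, f^[i] α < b := by
      intro i
      induction i with
      | zero => simpa using hαb
      | succ i ih => exact hcon i ih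
    exact lt_irrefl _ (this (m-1))
  obtain ⟨i, hi1, hi2⟩ := hex
  rw [iterate_succ_apply'] at hi2
  obtain ⟨v, hv, hfv⟩ := intermediate_value_Icc' hi1.le hf.continuousOn
    (show b ∈ Icc (f b) (f (f^[i] α)) from ⟨by rw [hfb]; exact hαb.le, hi2⟩)
  have hvb : v < b := by
    refine lt_of_le_of_ne hv.2 ?_
    rintro rfl
    rw [hfb] at hfv
    exact hαb.ne hfv
  refine ⟨α, v, ?_, hαm, hαmin, by rw [hfv]; exact hvb, hfv, by rw [hfv, hfb]⟩
  refine lt_of_le_of_ne ((hαmin i).trans hv.1) ?_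
  intro h
  have : f^[2] α = α := by
    show f (f α) = α
    conv_lhs => rw [h, hfv, hfb]
  exact sh_minper_ne hαm (by norm_num) (by omega) this

/-- A point of period two to the left of `v`, with no fixed point in between. -/
lemma sh_two {f : ℝ → ℝ} (hf : Continuous f) {α v : ℝ} (hαv : α < v) (hα : α < f (f α))
    (hv : v < f v) (hv2 : f (f v) = α) :
    ∃ c, c < v ∧ f (f c) = c ∧ ∀ x, c ≤ x → x ≤ v → x < f x := by
  have hff : Continuous (fun x => f (f x)) := hf.comp hf
  by_cases hfix : ∃ x, α ≤ x ∧ x ≤ v ∧ f x = x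
  · obtain ⟨w, hw1, hw2, hw3, hwmax⟩ := sh_greatest hf continuous_id hfix
    simp only [id] at hw3 hwmax
    have hwv : w < v := lt_of_le_of_ne hw2 (by rintro rfl; linarith)
    obtain ⟨z, hz1, hz2, hz3⟩ := sh_ivt_fix hf (s := v) (t := f v) hv.le hv (by linarith)
    obtain ⟨u, hu, hu2⟩ := intermediate_value_Ioo hwv.le hf.continuousOn
      (show z ∈ Ioo (f w) (f v) from ⟨by linarith, by linarith⟩)
    obtain ⟨c, hc1, hc2, hc3⟩ := sh_ivt_fix hff (s := u) (t := v) hu.2.le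
      (by simp only [hu2, hz3]; linarith [hu.2]) (by linarith)
    refine ⟨c, hc2, hc3, fun x hx1 hx2 => ?_⟩
    by_contra! hcon
    rcases hcon.lt_or_eq with h | h
    · obtain ⟨y, hy1, hy2, hy3⟩ := sh_ivt_fix' hf hx2 h hv
      have := hwmax y (by linarith [hu.1]) (by linarith) hy3
      linarith [hu.1]
    · have := hwmax x (by linarith [hu.1]) hx2 h
      linarith [hu.1]
  · push Not at hfix
    obtain ⟨c, hc1, hc2, hc3⟩ := sh_ivt_fix hff (s := α) (t := v) hαv.le hα (by linarith)
    refine ⟨c, hc2, hc3, fun x hx1 hx2 => ?_⟩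
    by_contra! hcon
    rcases hcon.lt_or_eq with h | h
    · obtain ⟨y, hy1, hy2, hy3⟩ := sh_ivt_fix' hf hx2 h hv
      exact hfix y (by linarith) (by linarith) hy3
    · exact hfix x (by linarith) hx2 h

lemma sh_alpha {f : ℝ → ℝ} {m : ℕ} (hm : 3 ≤ m) {α : ℝ} (h : minimalPeriod f α = m)
    (h2 : ∀ i, α ≤ f^[i] α) : α < f (f α) :=
  lt_of_le_of_ne (h2 2) (fun hcon => sh_minper_ne h (i := 2) (by norm_num) (by omega) hcon.symm)

/-- (A) any period at least two forces period two. -/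
lemma sh_A {f : ℝ → ℝ} (hf : Continuous f) {m : ℕ} (hm : 2 ≤ m)
    (hx : ∃ x, minimalPeriod f x = m) : ∃ x, minimalPeriod f x = 2 := by
  rcases hm.eq_or_lt with rfl | hm
  · exact hx
  obtain ⟨α, v, hαv, hαm, hαmin, hv, -, hv2⟩ := sh_setup hf hm hx
  obtain ⟨c, hcv, hc, hcx⟩ := sh_two hf hαv (sh_alpha hm hαm hαmin) hv hv2
  refine ⟨c, sh_minper (by norm_num) hc fun i h1 h2 => ?_⟩
  obtain rfl : i = 1 := by omega
  exact (hcx c le_rfl hcv.le).ne'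

lemma sh_odd_iter {f : ℝ → ℝ} {y : ℝ} (hy : f (f y) = y) {q : ℕ} (hq : Odd q) :
    f^[q] y = f y := by
  obtain ⟨k, rfl⟩ := hq
  have h : (f^[2])^[k] y = y := iterate_fixed hy k
  have h2 : f^[Nat.succ (2 * k)] y = f y := by
    rw [iterate_succ_apply' f (2 * k), iterate_mul, h]
  exact h2

/-- (B) -/
lemma sh_B {f : ℝ → ℝ} (hf : Continuous f) {m q : ℕ} (hm : 3 ≤ m) (hmo : Odd m) (hqo : Odd q)
    (hmq : m < q) (hx : ∃ x, minimalPeriod f x = m) : ∃ x, minimalPeriod f x = q := by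
  have hff : Continuous (fun x => f (f x)) := hf.comp hf
  obtain ⟨α, v, hαv, hαm, hαmin, hv, -, hv2⟩ := sh_setup hf hm hx
  obtain ⟨c, hcv, hc, hcx⟩ := sh_two hf hαv (sh_alpha hm hαm hαmin) hv hv2
  have hαper : f^[m] α = α := by rw [← hαm]; exact iterate_minimalPeriod
  obtain ⟨y, hcy, hyv, hy, hymax⟩ := sh_greatest hff continuous_id ⟨c, le_rfl, hcv.le, hc⟩
  simp only [id] at hy hymax
  have hyv : y < v := lt_of_le_of_ne hyv (by rintro rfl; linarith)
  have hfy : y < f y := hcx y hcy hyv.le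
  have hlt : ∀ x, y < x → x ≤ v → f (f x) < x := by
    intro x h1 h2
    by_contra! hcon
    rcases hcon.lt_or_eq with h | h
    · obtain ⟨w, hw1, hw2, hw3⟩ := sh_ivt_fix hff (s := x) (t := v) h2 h (by linarith)
      have := hymax w (by linarith) hw2.le hw3
      linarith
    · have := hymax x (by linarith) h2 h.symm
      linarith
  -- the descending step
  have hstep : ∀ k, Odd k → ∀ p, y < p → p ≤ v → f^[k] p = p →
      ∃ p', y < p' ∧ p' < p ∧ f^[k+2] p' = p' := by
    intro k hk p h1 h2 h3
    refine sh_ivt_fix (hf.iterate (k+2)) h1.le ?_ ?_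
    · rw [sh_odd_iter hy (by grind)]; exact hfy
    · rw [add_comm, iterate_add_apply, h3]; exact hlt p h1 h2
  have hstep' : ∀ j k, Odd k → ∀ p, y < p → p ≤ v → f^[k] p = p →
      ∃ p', y < p' ∧ p' < p ∧ f^[k+2*(j+1)] p' = p' := by
    intro j
    induction j with
    | zero => intro k hk p; simpa using hstep k hk p
    | succ j ih =>
      intro k hk p h1 h2 h3
      obtain ⟨p', h1', h2', h3'⟩ := ih k hk p h1 h2 h3
      obtain ⟨p'', a1, a2, a3⟩ := hstep _ (by grind) p' h1' (by linarith) h3'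
      exact ⟨p'', a1, by linarith, a3⟩
  have hm2 : ∃ p, y < p ∧ p < v ∧ f^[m+2] p = p := by
    refine sh_ivt_fix (hf.iterate (m+2)) hyv.le ?_ ?_
    · rw [sh_odd_iter hy (by grind)]; exact hfy
    · rw [iterate_add_apply]
      show f^[m] (f (f v)) < v
      rw [hv2, hαper]; exact hαv
  have hq : ∃ p, y ≤ p ∧ p ≤ v ∧ f^[q] p = id p := by
    obtain ⟨p, h1, h2, h3⟩ := hm2
    by_cases hqm : q = m + 2
    · exact ⟨p, h1.le, h2.le, by rw [hqm]; exact h3⟩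
    · obtain ⟨j, hj⟩ : ∃ j, q = m + 2 + 2 * (j+1) := by
        obtain ⟨r, hr⟩ := hmo
        obtain ⟨s, hs⟩ := hqo
        exact ⟨s - r - 2, by omega⟩
      obtain ⟨p', a1, a2, a3⟩ := hstep' j (m+2) (by grind) p h1 h2.le h3
      exact ⟨p', a1.le, by linarith, by rw [hj]; exact a3⟩
  obtain ⟨p, hp1, hp2, hp3, hpmin⟩ := sh_least (hf.iterate q) continuous_id hq
  simp only [id] at hp3 hpmin
  have hyp : y < p := by
    refine lt_of_le_of_ne hp1 ?_
    rintro rfl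
    rw [sh_odd_iter hy hqo] at hp3
    linarith
  refine ⟨p, ?_⟩
  have hdvd : minimalPeriod f p ∣ q := IsPeriodicPt.minimalPeriod_dvd hp3
  have hkodd : Odd (minimalPeriod f p) := Odd.of_dvd_nat hqo hdvd
  have hkle := Nat.le_of_dvd (by omega) hdvd
  by_contra hne
  obtain ⟨j, hj⟩ : ∃ j, q = minimalPeriod f p + 2 * (j+1) := by
    obtain ⟨r, hr⟩ := hkodd
    obtain ⟨s, hs⟩ := hqo
    exact ⟨s - r - 1, by omega⟩
  obtain ⟨p', a1, a2, a3⟩ := hstep' j _ hkodd p hyp hp2 iterate_minimalPeriod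
  rw [← hj] at a3
  have := hpmin p' a1.le (by linarith) a3
  linarith

/-- Horseshoe lemma. -/
lemma sh_horse {h : ℝ → ℝ} (hh : Continuous h) {d s e : ℝ} (hds : d < s) (hse : s < e)
    (hd : h d = e) (he : h e = e) (hs : h s = d) (n : ℕ) (hn : 0 < n) :
    ∃ x, d < x ∧ x < s ∧ minimalPeriod h x = n := by
  have hdn : ∀ n, 0 < n → h^[n] d = e := by
    intro n hn
    obtain ⟨k, rfl⟩ : ∃ k, n = k + 1 := ⟨n - 1, by omega⟩
    rw [iterate_succ_apply, hd]
    exact iterate_fixed he k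
  -- descending
  have hstep : ∀ n, 0 < n → ∀ x, d < x → x ≤ s → h^[n] x = x →
      ∃ x', d < x' ∧ x' < x ∧ h^[n+1] x' = x' := by
    intro n hn x h1 h2 h3
    have : ∃ w, d < w ∧ w ≤ x ∧ h^[n] w = s := by
      obtain ⟨w, hw, hw2⟩ := intermediate_value_Icc' h1.le (hh.iterate n).continuousOn
        (show s ∈ Icc (h^[n] x) (h^[n] d) by rw [h3, hdn n hn]; exact ⟨h2, hse.le⟩)
      refine ⟨w, lt_of_le_of_ne hw.1 ?_, hw.2, hw2⟩
      rintro rfl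
      rw [hdn n hn] at hw2
      linarith
    obtain ⟨w, hw1, hw2, hw3⟩ := this
    obtain ⟨x', a1, a2, a3⟩ := sh_ivt_fix (hh.iterate (n+1)) hw1.le
      (by rw [hdn _ (by omega)]; linarith) (by rw [iterate_succ_apply', hw3, hs]; exact hw1)
    exact ⟨x', a1, by linarith, a3⟩
  have hstep' : ∀ j n, 0 < n → ∀ x, d < x → x ≤ s → h^[n] x = x →
      ∃ x', d < x' ∧ x' < x ∧ h^[n+(j+1)] x' = x' := by
    intro j
    induction j with
    | zero => intro n hn x; simpa using hstep n hn x
    | succ j ih =>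
      intro n hn x h1 h2 h3
      obtain ⟨p', h1', h2', h3'⟩ := ih n hn x h1 h2 h3
      obtain ⟨p'', a1, a2, a3⟩ := hstep _ (by omega) p' h1' (by linarith) h3'
      exact ⟨p'', a1, by linarith, a3⟩
  have hone : ∃ x, d < x ∧ x < s ∧ h^[1] x = x :=
    sh_ivt_fix (hh.iterate 1) hds.le (by simp [hd]; linarith) (by simp [hs]; linarith)
  have hex : ∃ x, d ≤ x ∧ x ≤ s ∧ h^[n] x = id x := by
    obtain ⟨x, h1, h2, h3⟩ := hone
    by_cases hn1 : n = 1
    · exact ⟨x, h1.le, h2.le, by rw [hn1]; exact h3⟩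
    · obtain ⟨x', a1, a2, a3⟩ := hstep' (n-2) 1 (by omega) x h1 h2.le h3
      exact ⟨x', a1.le, by linarith, by rw [show n = 1 + (n-2+1) by omega]; exact a3⟩
  obtain ⟨p, hp1, hp2, hp3, hpmin⟩ := sh_least (hh.iterate n) continuous_id hex
  simp only [id] at hp3 hpmin
  have hdp : d < p := by
    refine lt_of_le_of_ne hp1 ?_
    rintro rfl
    rw [hdn n hn] at hp3
    linarith
  have hps : p < s := by
    refine lt_of_le_of_ne hp2 ?_
    rintro rfl
    have h1 : h^[n] (h p) = h p := by rw [← iterate_succ_apply, iterate_succ_apply', hp3]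
    rw [hs, hdn n hn] at h1
    linarith
  refine ⟨p, hdp, hps, ?_⟩
  have hper : IsPeriodicPt h n p := hp3
  have hpos := hper.minimalPeriod_pos hn
  have hkle := hper.minimalPeriod_le hn
  by_contra hne
  obtain ⟨p', a1, a2, a3⟩ := hstep' (n - minimalPeriod h p - 1) _ hpos p hdp hps.le
    iterate_minimalPeriod
  rw [show minimalPeriod h p + (n - minimalPeriod h p - 1 + 1) = n by omega] at a3
  have := hpmin p' a1.le (by linarith) a3
  linarith

/-- (C) -/
lemma sh_C {f : ℝ → ℝ} (hf : Continuous f) {m k : ℕ} (hm : 3 ≤ m) (hmo : Odd m) (hk : 0 < k)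
    (hx : ∃ x, minimalPeriod f x = m) : ∃ x, minimalPeriod f x = 2 * k := by
  have hff : Continuous (fun x => f (f x)) := hf.comp hf
  obtain ⟨α, v, hαv, hαm, hαmin, hv, hvb, hv2⟩ := sh_setup hf hm hx
  -- first fixed point of `f` to the right of `v`
  obtain ⟨z, hz1, hz2, hz3, hzmin⟩ := sh_least hf continuous_id (s := v) (t := f v) (by
    obtain ⟨z, h1, h2, h3⟩ := sh_ivt_fix hf (s := v) (t := f v) hv.le hv (by linarith)
    exact ⟨z, h1.le, h2.le, h3⟩)
  simp only [id] at hz3 hzmin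
  have hzb : z < f v := lt_of_le_of_ne hz2 (by rintro h; rw [← h] at hv2; linarith)
  obtain ⟨e, he1, he2, he3, hemin⟩ := sh_least hff continuous_id (s := v) (t := z)
    ⟨z, hz1, le_rfl, by simp only [hz3, id]⟩
  simp only [id] at he3 hemin
  have hve : v < e := lt_of_le_of_ne he1 (by rintro rfl; linarith)
  have hfe : e ≤ f e := by
    by_contra! hcon
    obtain ⟨w, h1, h2, h3⟩ := sh_ivt_fix hf he1 hv hcon
    have := hzmin w h1.le (by linarith) h3
    linarith
  have hlt : ∀ x, v ≤ x → x < e → f (f x) < x := by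
    intro x h1 h2
    by_contra! hcon
    rcases hcon.lt_or_eq with h | h
    · obtain ⟨w, hw1, hw2, hw3⟩ := sh_ivt_fix' hff (s := v) (t := x) h1 (by linarith) h
      have := hemin w (by linarith) (by linarith) hw3
      linarith
    · have := hemin x (by linarith) (by linarith) h.symm
      linarith
  have hex : ∃ x, α ≤ x ∧ x ≤ v ∧ e ≤ f (f x) := by
    by_contra! hcon
    have hle : ∀ j, (f^[2])^[j] α ≤ e := by
      intro j
      induction j with
      | zero => simp; linarith
      | succ j ih =>
        have hge : α ≤ (f^[2])^[j] α := by rw [← iterate_mul]; exact hαmin _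
        rw [iterate_succ_apply']
        show f (f _) ≤ e
        rcases le_or_gt ((f^[2])^[j] α) v with h | h
        · exact (hcon _ hge h).le
        · rcases ih.lt_or_eq with h' | h'
          · exact (hlt _ h.le h').le.trans ih
          · rw [h', he3]
    obtain ⟨r, hr⟩ := hmo
    have := hle r
    rw [← iterate_mul, show 2 * r = m - 1 by omega, ← hvb] at this
    linarith
  obtain ⟨x0, hx01, hx02, hx03⟩ := hex
  obtain ⟨d, hd1, hd2, hd3, hdmax⟩ := sh_greatest hff (continuous_const (y := e)) (s := α) (t := v)
    (by
      obtain ⟨w, hw, hw2⟩ := intermediate_value_Icc' hx02 hff.continuousOn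
        (show e ∈ Icc (f (f v)) (f (f x0)) from ⟨by linarith, hx03⟩)
      exact ⟨w, by linarith [hw.1], hw.2, hw2⟩)
  have hdv : d < v := lt_of_le_of_ne hd2 (by rintro rfl; linarith)
  have hlte : ∀ x, d < x → x < e → f (f x) < e := by
    intro x h1 h2
    rcases le_or_gt v x with h | h
    · exact (hlt x h h2).trans h2
    · by_contra! hcon
      obtain ⟨w, hw, hw2⟩ := intermediate_value_Icc' h.le hff.continuousOn
        (show e ∈ Icc (f (f v)) (f (f x)) from ⟨by linarith, hcon⟩)
      have := hdmax w (by linarith [hw.1]) hw.2 hw2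
      linarith [hw.1]
  have hne : ∀ x, d < x → x < e → f x ≠ e := by
    intro x h1 h2 h3
    have := hlte x h1 h2
    rw [h3] at this
    linarith
  have hfgt : ∀ x, d < x → x < e → e < f x := by
    intro x h1 h2
    by_contra! hcon
    have himg : IsPreconnected (f '' Ioo d e) := isPreconnected_Ioo.image f hf.continuousOn
    obtain ⟨w, hw, hw2⟩ := himg.Icc_subset (mem_image_of_mem f ⟨h1, h2⟩)
      (mem_image_of_mem f (⟨hdv, hve⟩ : v ∈ Ioo d e)) (show e ∈ Icc (f x) (f v) from
        ⟨hcon, by linarith⟩)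
    exact hne w hw.1 hw.2 hw2
  -- the truncated second iterate
  set h : ℝ → ℝ := fun x => max (f (f x)) d with hh
  have hhc : Continuous h := hff.max continuous_const
  have hde : d < e := by linarith
  have hhd : h d = e := by simp only [hh, hd3]; exact max_eq_left hde.le
  have hhe : h e = e := by simp only [hh, he3]; exact max_eq_left hde.le
  have hhv : h v = d := by simp only [hh, hv2]; exact max_eq_right hd1
  obtain ⟨p, hp1, hp2, hp⟩ := sh_horse hhc hdv hve hhd hhe hhv k hk
  have hpe : p < e := by linarith
  have hpp : h^[k] p = p := by rw [← hp]; exact iterate_minimalPeriod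
  have hdorb : ∀ i, h^[i] p ≠ d := by
    intro i hi
    have h1 : ∀ j, h^[j + 1 + i] p = e := by
      intro j
      rw [iterate_add_apply, hi, iterate_succ_apply, hhd]
      exact iterate_fixed hhe j
    have h2 : h^[k * (i + 1)] p = p := by
      rw [iterate_mul]; exact iterate_fixed hpp _
    have h3 : k * (i+1) = (k * (i+1) - 1 - i) + 1 + i := by
      have : i + 1 ≤ k * (i+1) := Nat.le_mul_of_pos_left _ hk
      omega
    rw [h3, h1] at h2
    linarith
  have horb : ∀ i, (f^[2])^[i] p = h^[i] p ∧ d < h^[i] p ∧ h^[i] p < e := by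
    intro i
    induction i with
    | zero => exact ⟨rfl, hp1, hpe⟩
    | succ i ih =>
      obtain ⟨i1, i2, i3⟩ := ih
      have hnd := hdorb (i+1)
      have hlt' := hlte _ i2 i3
      rw [iterate_succ_apply'] at hnd
      rw [iterate_succ_apply' (f^[2]) i, iterate_succ_apply' h i, i1]
      have hmx : h (h^[i] p) = max (f (f (h^[i] p))) d := rfl
      have hgt : d < f (f (h^[i] p)) := by
        by_contra! hcon
        exact hnd (by rw [hmx, max_eq_right hcon])
      rw [hmx, max_eq_left hgt.le]
      exact ⟨rfl, hgt, hlt'⟩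
  refine ⟨p, sh_minper (by omega) ?_ ?_⟩
  · rw [iterate_mul, (horb k).1, hpp]
  · intro i hi1 hi2 hi3
    rcases Nat.even_or_odd' i with ⟨j, rfl | rfl⟩
    · rw [iterate_mul, (horb j).1] at hi3
      exact sh_minper_ne hp (by omega) (by omega) hi3
    · rw [iterate_succ_apply', iterate_mul, (horb j).1] at hi3
      have := hfgt _ (horb j).2.1 (horb j).2.2
      linarith

/-- Passing to an iterate. -/
lemma sh_R1 {f : ℝ → ℝ} {d k : ℕ} (hd : 0 < d) (h : ∃ x, minimalPeriod f x = d * k) :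
    ∃ x, minimalPeriod f^[d] x = k := by
  obtain ⟨x, hx⟩ := h
  refine ⟨x, ?_⟩
  rw [minimalPeriod_iterate_eq_div_gcd hd.ne', hx, Nat.gcd_eq_right (Dvd.intro _ rfl)]
  exact Nat.mul_div_cancel_left _ hd

lemma sh_R3 {f : ℝ → ℝ} {a k : ℕ} (h : ∃ x, minimalPeriod f^[2 ^ a] x = k) :
    ∃ c ≤ a, (Even k → c = a) ∧ ∃ x, minimalPeriod f x = 2 ^ c * k := by
  obtain ⟨x, hx⟩ := h
  rw [minimalPeriod_iterate_eq_div_gcd (by positivity)] at hx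
  obtain ⟨c, hc, hg⟩ := (Nat.dvd_prime_pow Nat.prime_two).1
    (Nat.gcd_dvd_right (minimalPeriod f x) (2 ^ a))
  have hN : minimalPeriod f x = 2 ^ c * k := by
    rw [← hx, hg, Nat.mul_div_cancel']
    rw [← hg]; exact Nat.gcd_dvd_left _ _
  refine ⟨c, hc, fun hk => ?_, x, hN⟩
  by_contra hne
  have h1 : 2 ^ (c+1) ∣ Nat.gcd (minimalPeriod f x) (2 ^ a) := by
    refine Nat.dvd_gcd ?_ (pow_dvd_pow 2 (by omega))
    rw [hN, pow_succ]
    exact Nat.mul_dvd_mul_left _ hk.two_dvd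
  rw [hg, Nat.pow_dvd_pow_iff_le_right (by norm_num)] at h1
  omega

lemma sh_R2 {f : ℝ → ℝ} {a k : ℕ} (hk : Even k) (h : ∃ x, minimalPeriod f^[2 ^ a] x = k) :
    ∃ x, minimalPeriod f x = 2 ^ a * k := by
  obtain ⟨c, -, hc, h⟩ := sh_R3 h
  rw [← hc hk]; exact h

/-- periods `2 ^ b` -/
lemma sh_pow2 {f : ℝ → ℝ} (hf : Continuous f) {b k : ℕ} (hk : 0 < k)
    (h : ∃ x, minimalPeriod f x = 2 ^ (b + 1) * k) : ∃ x, minimalPeriod f x = 2 ^ (b + 1) := by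
  rw [pow_succ, mul_assoc] at h
  rw [pow_succ]
  exact sh_R2 even_two (sh_A (hf.iterate _) (m := 2 * k) (by omega) (sh_R1 (by positivity) h))

/-- all multiples `2 ^ (a + 1) * j` -/
lemma sh_even {f : ℝ → ℝ} (hf : Continuous f) {a p j : ℕ} (hp : 1 < p) (hpo : Odd p) (hj : 0 < j)
    (h : ∃ x, minimalPeriod f x = 2 ^ a * p) : ∃ x, minimalPeriod f x = 2 ^ a * (2 * j) :=
  sh_R2 (by simp) (sh_C (hf.iterate _) (by grind) hpo hj (sh_R1 (by positivity) h))

lemma sh_main {f : ℝ → ℝ} (hf : Continuous f) {m n : ℕ} (hmn : SharkovskyLt m n)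
    (hfix : ∃ x, f x = x)
    (hx : ∃ x, minimalPeriod f x = m) : ∃ x, minimalPeriod f x = n := by
  obtain ⟨a, p, b, q, hp, hq, rfl, rfl, h⟩ := hmn
  have hlt : ∀ a b p q, Odd p → Odd q → 1 < p → a < b → (∃ x, minimalPeriod f x = 2 ^ a * p) →
      ∃ x, minimalPeriod f x = 2 ^ b * q := by
    intro a b p q hp hq h1 hab hx
    have := sh_even hf (j := 2 ^ (b - a - 1) * q) h1 hp (by have := hq.pos; positivity) hx
    obtain ⟨r, rfl⟩ : ∃ r, b = a + 1 + r := ⟨b - a - 1, by omega⟩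
    rw [show a + 1 + r - a - 1 = r by omega] at this
    convert this using 3
    ring
  rcases h with ⟨hp1, hq1, hab | ⟨rfl, hpq⟩⟩ | ⟨hp1, rfl⟩ | ⟨rfl, rfl, hba⟩
  · exact hlt a b p q hp hq hp1 hab hx
  · obtain ⟨c, hc, -, h⟩ := sh_R3 (sh_B (hf.iterate (2 ^ a)) (by grind) hp hq hpq
      (sh_R1 (by positivity) hx))
    rcases hc.eq_or_lt with rfl | hc
    · exact h
    · exact hlt c a q q hq hq hq1 hc h
  · rcases lt_or_ge a b with hab | hab
    · exact hlt a b p 1 hp hq hp1 hab hx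
    · rcases b with _ | b
      · obtain ⟨x, hx⟩ := hfix
        exact ⟨x, by simpa [minimalPeriod_eq_one_iff_isFixedPt, IsFixedPt] using hx⟩
      · obtain ⟨r, rfl⟩ : ∃ r, a = b + 1 + r := ⟨a - (b+1), by omega⟩
        rw [mul_one]
        refine sh_pow2 hf (k := 2 ^ r * p) (by positivity) ?_
        rwa [← mul_assoc, ← pow_add]
  · rcases b with _ | b
    · obtain ⟨x, hx⟩ := hfix
      exact ⟨x, by simpa [minimalPeriod_eq_one_iff_isFixedPt, IsFixedPt] using hx⟩
    · obtain ⟨r, rfl⟩ : ∃ r, a = b + 1 + r := ⟨a - (b+1), by omega⟩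
      rw [mul_one]
      refine sh_pow2 hf (k := 2 ^ r * 1) (by positivity) ?_
      rwa [← mul_assoc, ← pow_add]

theorem sharkovsky_forcing (a b : ℝ) (hab : a ≤ b) (f : ℝ → ℝ)
    (hcont : ContinuousOn f (Set.Icc a b))
    (hmaps : Set.MapsTo f (Set.Icc a b) (Set.Icc a b))
    (m n : ℕ) (hm : 0 < m) (hn : 0 < n) (hmn : SharkovskyLt m n)
    (hx : ∃ x ∈ Set.Icc a b, PeriodPt f m x) :
    ∃ y ∈ Set.Icc a b, PeriodPt f n y := by
  set F : ℝ → ℝ := IccExtend hab ((Icc a b).domRestrict f) with hF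
  have hFc : Continuous F := (continuousOn_iff_continuous_domRestrict.1 hcont).Icc_extend'
  have hFf : ∀ x ∈ Icc a b, F x = f x := fun x hx => by
    rw [hF, IccExtend_of_mem hab _ hx]; rfl
  have hFm : ∀ x, F x ∈ Icc a b := fun x => by
    simp only [hF, IccExtend, comp]
    exact hmaps (projIcc a b hab x).2
  have hit : ∀ x ∈ Icc a b, ∀ i, F^[i] x = f^[i] x ∧ f^[i] x ∈ Icc a b := by
    intro x hx i
    induction i with
    | zero => exact ⟨rfl, hx⟩
    | succ i ih =>
      rw [iterate_succ_apply', iterate_succ_apply', ih.1, hFf _ ih.2]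
      exact ⟨rfl, hmaps ih.2⟩
  have hfix : ∃ x, F x = x := by
    have hc : ContinuousOn (fun x => F x - x) (Icc a b) := by fun_prop
    obtain ⟨x, -, hx⟩ := intermediate_value_Icc' hab hc
      (show (0:ℝ) ∈ Icc (F b - b) (F a - a) from
        ⟨by linarith [(hFm b).2], by linarith [(hFm a).1]⟩)
    exact ⟨x, by simpa [sub_eq_zero] using hx⟩
  obtain ⟨x, hxI, hx1, hx2⟩ := hx
  obtain ⟨y, hy⟩ := sh_main hFc hmn hfix ⟨x, sh_minper hm (by rw [(hit x hxI m).1, hx1])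
    (fun i h1 h2 => by rw [(hit x hxI i).1]; exact hx2 i h1 h2)⟩
  have hyn : F^[n] y = y := by rw [← hy]; exact iterate_minimalPeriod
  have hyI : y ∈ Icc a b := by
    rw [← hyn, show n = (n - 1) + 1 by omega, iterate_succ_apply']
    exact hFm _
  refine ⟨y, hyI, by rw [← (hit y hyI n).1, hyn], fun i h1 h2 => ?_⟩
  rw [← (hit y hyI i).1]
  exact sh_minper_ne hy h1 h2
end

section
/- For every positive integer n there exists a continuous map f : [0,1] → [0,1] that has a period-n point but has no period-m point for any positive integer m with m ≺ n in the Sharkovsky ordering. -/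
open Function in
lemma periodPt_iff (f : ℝ → ℝ) (m : ℕ) (hm : 0 < m) (x : ℝ) :
    PeriodPt f m x ↔ minimalPeriod f x = m := by
  constructor
  · rintro ⟨h1, h2⟩
    have hp : IsPeriodicPt f m x := h1
    have hle := hp.minimalPeriod_le hm
    have hpos := hp.minimalPeriod_pos hm
    rcases hle.lt_or_eq with h | h
    · exact absurd (isPeriodicPt_minimalPeriod f x) (h2 _ hpos h)
    · exact h
  · rintro rfl
    refine ⟨isPeriodicPt_minimalPeriod f x, fun i hi him h => ?_⟩
    have hp : IsPeriodicPt f i x := h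
    exact absurd (hp.minimalPeriod_le hi) (by omega)

open Function in
lemma PeriodPt.orbit {f : ℝ → ℝ} {m : ℕ} (hm : 0 < m) {x : ℝ} (h : PeriodPt f m x) (j : ℕ) :
    PeriodPt f m (f^[j] x) := by
  rw [periodPt_iff f m hm] at *
  have hp : x ∈ periodicPts f := minimalPeriod_pos_iff_mem_periodicPts.1 (by omega)
  rw [minimalPeriod_apply_iterate hp, h]

/-- The inductive property. -/
def SharkGood (n : ℕ) (f : ℝ → ℝ) : Prop :=
  Continuous f ∧ (∀ x, 0 ≤ x → x ≤ 1 → 0 ≤ f x ∧ f x ≤ 1) ∧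
    (∃ x, 0 ≤ x ∧ x ≤ 1 ∧ PeriodPt f n x) ∧
    ∀ m : ℕ, 0 < m → SharkovskyLt m n → ∀ x, 0 ≤ x → x ≤ 1 → ¬ PeriodPt f m x

/-- Clamping to the unit interval. -/
noncomputable def clampU (x : ℝ) : ℝ := max 0 (min x 1)

lemma clampU_cont : Continuous clampU := by unfold clampU; fun_prop
lemma clampU_low {x : ℝ} (h : x ≤ 0) : clampU x = 0 := by
  unfold clampU; rw [min_eq_left (by linarith), max_eq_left h]
lemma clampU_high {x : ℝ} (h : 1 ≤ x) : clampU x = 1 := by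
  unfold clampU; rw [min_eq_right h, max_eq_right (by norm_num)]
lemma clampU_mid {x : ℝ} (h : 0 ≤ x) (h1 : x ≤ 1) : clampU x = x := by
  unfold clampU; rw [min_eq_left h1, max_eq_right h]

/-- The doubling construction. -/
noncomputable def dbl (f : ℝ → ℝ) (x : ℝ) : ℝ :=
  (2 + f (clampU (3 * x))) / 3 * clampU (2 - 3 * x) + clampU (3 * x - 2) / 3

lemma dbl_low (f : ℝ → ℝ) {x : ℝ} (h0 : 0 ≤ x) (h1 : x ≤ 1 / 3) :
    dbl f x = (2 + f (3 * x)) / 3 := by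
  unfold dbl
  rw [clampU_mid (x := 3 * x) (by linarith) (by linarith), clampU_high (x := 2 - 3 * x) (by linarith),
    clampU_low (x := 3 * x - 2) (by linarith)]
  ring

lemma dbl_mid (f : ℝ → ℝ) {x : ℝ} (h0 : 1 / 3 ≤ x) (h1 : x ≤ 2 / 3) :
    dbl f x = (2 + f 1) / 3 * (2 - 3 * x) := by
  unfold dbl
  rw [clampU_high (x := 3 * x) (by linarith), clampU_mid (x := 2 - 3 * x) (by linarith) (by linarith),
    clampU_low (x := 3 * x - 2) (by linarith)]
  ring

lemma dbl_high (f : ℝ → ℝ) {x : ℝ} (h0 : 2 / 3 ≤ x) (h1 : x ≤ 1) :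
    dbl f x = x - 2 / 3 := by
  unfold dbl
  rw [clampU_low (x := 2 - 3 * x) (by linarith),
    clampU_mid (x := 3 * x - 2) (by linarith) (by linarith)]
  ring

lemma iter_mem {f : ℝ → ℝ} {a b : ℝ} (hf : ∀ x, a ≤ x → x ≤ b → a ≤ f x ∧ f x ≤ b)
    {x : ℝ} (h0 : a ≤ x) (h1 : x ≤ b) (i : ℕ) : a ≤ f^[i] x ∧ f^[i] x ≤ b := by
  induction i with
  | zero => exact ⟨h0, h1⟩
  | succ i ih => rw [Function.iterate_succ_apply']; exact hf _ ih.1 ih.2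

lemma dbl_iter {f : ℝ → ℝ} (hf : ∀ x, 0 ≤ x → x ≤ 1 → 0 ≤ f x ∧ f x ≤ 1)
    {y : ℝ} (h0 : 0 ≤ y) (h1 : y ≤ 1) (i : ℕ) : (dbl f)^[2 * i] (y / 3) = f^[i] y / 3 := by
  induction i with
  | zero => rfl
  | succ i ih =>
    rw [show 2 * (i + 1) = 2 * i + 1 + 1 by ring, Function.iterate_succ_apply',
      Function.iterate_succ_apply', ih, Function.iterate_succ_apply']
    have h := iter_mem hf h0 h1 i
    have h' := hf _ h.1 h.2
    rw [dbl_low f (x := f^[i] y / 3) (by linarith) (by linarith),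
      show 3 * (f^[i] y / 3) = f^[i] y by ring, dbl_high f (by linarith) (by linarith)]
    ring

lemma dbl_iter_odd {f : ℝ → ℝ} (hf : ∀ x, 0 ≤ x → x ≤ 1 → 0 ≤ f x ∧ f x ≤ 1)
    {y : ℝ} (h0 : 0 ≤ y) (h1 : y ≤ 1) (i : ℕ) : 2 / 3 ≤ (dbl f)^[2 * i + 1] (y / 3) := by
  rw [Function.iterate_succ_apply', dbl_iter hf h0 h1]
  have h := iter_mem hf h0 h1 i
  have h' := hf _ h.1 h.2
  rw [dbl_low f (by linarith) (by linarith), show 3 * (f^[i] y / 3) = f^[i] y by ring]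
  linarith

lemma dbl_maps {f : ℝ → ℝ} (hf : ∀ x, 0 ≤ x → x ≤ 1 → 0 ≤ f x ∧ f x ≤ 1) :
    ∀ x, 0 ≤ x → x ≤ 1 → 0 ≤ dbl f x ∧ dbl f x ≤ 1 := by
  intro x h0 h1
  rcases le_total x (1 / 3) with h | h
  · rw [dbl_low f h0 h]
    have := hf (3 * x) (by linarith) (by linarith)
    constructor <;> linarith
  · rcases le_total x (2 / 3) with h' | h'
    · rw [dbl_mid f h h']
      have := hf 1 (by norm_num) le_rfl
      constructor
      · apply mul_nonneg <;> linarith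
      · apply mul_le_one₀ <;> linarith
    · rw [dbl_high f h' h1]
      constructor <;> linarith

lemma dbl_good {n : ℕ} {f : ℝ → ℝ} (h : SharkGood n f) : SharkGood (2 * n) (dbl f) := by
  obtain ⟨hc, hf, ⟨y, hy0, hy1, hy⟩, hno⟩ := h
  have hg := dbl_maps hf
  refine ⟨?_, hg, ⟨y / 3, by linarith, by linarith, ?_, ?_⟩, ?_⟩
  · have := clampU_cont
    unfold dbl
    fun_prop
  · rw [dbl_iter hf hy0 hy1, hy.1]
  · intro i hi hin he
    rcases Nat.even_or_odd' i with ⟨j, rfl | rfl⟩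
    · rw [dbl_iter hf hy0 hy1] at he
      exact hy.2 j (by omega) (by omega) (by linarith)
    · have := dbl_iter_odd hf hy0 hy1 j
      linarith
  · intro m hm hlt x hx0 hx1 hp
    -- no low points
    have hlow : ∀ z, 0 ≤ z → z ≤ 1 → ¬ PeriodPt (dbl f) m (z / 3) := by
      intro z hz0 hz1 hz
      rcases Nat.even_or_odd' m with ⟨j, rfl | rfl⟩
      · obtain ⟨a, p, b, q, hp, hq, hma, hnb, hh⟩ := hlt
        have hb : b ≠ 0 := by
          rintro rfl
          rw [pow_zero, one_mul] at hnb
          rw [← hnb] at hq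
          exact absurd hq (by simp)
        have ha : a ≠ 0 := by
          rintro rfl
          rw [pow_zero, one_mul] at hma
          rw [← hma] at hp
          exact absurd hp (by simp)
        obtain ⟨b, rfl⟩ := Nat.exists_eq_succ_of_ne_zero hb
        obtain ⟨a, rfl⟩ := Nat.exists_eq_succ_of_ne_zero ha
        refine hno j (by omega) ⟨a, p, b, q, hp, hq, ?_, ?_, ?_⟩ z hz0 hz1 ⟨?_, ?_⟩
        · rw [pow_succ] at hma; linarith
        · rw [pow_succ] at hnb; linarith
        · omega
        · have := hz.1
          rw [dbl_iter hf hz0 hz1] at this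
          linarith
        · intro i hi hij he
          refine hz.2 (2 * i) (by omega) (by omega) ?_
          rw [dbl_iter hf hz0 hz1, he]
      · have := dbl_iter_odd hf hz0 hz1 j
        rw [hz.1] at this
        linarith
    have hlow' : ∀ j, 1 / 3 < (dbl f)^[j] x := by
      intro j
      by_contra hj
      have hmem := iter_mem hg hx0 hx1 j
      refine hlow (3 * (dbl f)^[j] x) (by linarith) (by linarith) ?_
      have := hp.orbit hm j
      rwa [show 3 * (dbl f)^[j] x / 3 = (dbl f)^[j] x by ring]
    have hmid : ∀ j, (dbl f)^[j] x < 2 / 3 := by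
      intro j
      by_contra hj
      have hmem := iter_mem hg hx0 hx1 j
      have := hlow' (j + 1)
      rw [Function.iterate_succ_apply', dbl_high f (by linarith) hmem.2] at this
      linarith
    have hf1 := hf 1 (by norm_num) le_rfl
    set s := 2 + f 1 with hs
    have hs1 : 0 < 1 + s := by linarith
    obtain ⟨c, hcc⟩ : ∃ c : ℝ, c * (1 + s) = 2 * s / 3 := ⟨2 * s / 3 / (1 + s), by field_simp⟩
    have hexp : ∀ j, (dbl f)^[j] x - c = (-s) ^ j * (x - c) := by
      intro j
      induction j with
      | zero => simp
      | succ j ih =>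
        rw [Function.iterate_succ_apply', dbl_mid f (hlow' j).le (hmid j).le, ← hs, pow_succ,
          mul_right_comm, ← ih]
        linarith
    have hm1 : m ≠ 1 := by
      rintro rfl
      obtain ⟨a, p, b, q, hp, hq, hma, hnb, hh⟩ := hlt
      have h1 := Nat.eq_one_of_mul_eq_one_left hma.symm
      have h2 := Nat.eq_one_of_mul_eq_one_right hma.symm
      have : a = 0 := by
        by_contra ha
        have := Nat.one_lt_two_pow ha
        omega
      omega
    have hxc : x = c := by
      by_contra hne
      have h := hexp m
      rw [hp.1] at h
      have hd : x - c ≠ 0 := sub_ne_zero.2 hne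
      have h1 : (-s) ^ m = 1 := by
        have : ((-s) ^ m - 1) * (x - c) = 0 := by linarith
        rcases mul_eq_zero.1 this with h | h
        · linarith
        · exact absurd h hd
      have h2 : s ^ m = 1 := by
        have := congrArg abs h1
        rwa [abs_pow, abs_neg, abs_one, abs_of_nonneg (by linarith)] at this
      have h3 : 1 < s ^ m := one_lt_pow₀ (by linarith) (by omega)
      linarith
    refine hp.2 1 one_pos (by omega) ?_
    have := hexp 1
    rw [hxc] at this ⊢
    linarith

/-- The Stefan map on `[-k,k]`. -/
noncomputable def stef (k : ℝ) (y : ℝ) : ℝ := min (k * (y + k)) (1 - y - clampU y)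

lemma stef_a {k y : ℝ} (hk : 1 ≤ k) (h0 : -k ≤ y) (h : y ≤ -k + 1) : stef k y = k * (y + k) := by
  unfold stef
  rw [clampU_low (by linarith), min_eq_left]
  nlinarith
lemma stef_b {k y : ℝ} (hk : 1 ≤ k) (h0 : -k + 1 ≤ y) (h : y ≤ 0) : stef k y = 1 - y := by
  unfold stef
  rw [clampU_low (by linarith), min_eq_right] <;> nlinarith
lemma stef_c {k y : ℝ} (hk : 1 ≤ k) (h0 : 0 ≤ y) (h : y ≤ 1) : stef k y = 1 - 2 * y := by
  unfold stef
  rw [clampU_mid h0 h, min_eq_right] <;> nlinarith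
lemma stef_d {k y : ℝ} (hk : 1 ≤ k) (h0 : 1 ≤ y) : stef k y = - y := by
  unfold stef
  rw [clampU_high h0, min_eq_right] <;> nlinarith

lemma stef_maps {k : ℝ} (hk : 1 ≤ k) : ∀ y, -k ≤ y → y ≤ k → -k ≤ stef k y ∧ stef k y ≤ k := by
  intro y h0 h1
  rcases le_total y (-k + 1) with h | h
  · rw [stef_a hk h0 h]; constructor <;> nlinarith
  rcases le_total y 0 with h' | h'
  · rw [stef_b hk h h']; constructor <;> linarith
  rcases le_total y 1 with h'' | h''
  · rw [stef_c hk h' h'']; constructor <;> linarith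
  · rw [stef_d hk h'']; constructor <;> linarith

lemma stef_right {k y : ℝ} (hk : 1 ≤ k) (h : 1 / 3 < y) : stef k y < 1 / 3 := by
  rcases le_total y 1 with h'' | h''
  · rw [stef_c hk (by linarith) h'']; linarith
  · rw [stef_d hk h'']; linarith

lemma stef_left {k y : ℝ} (hk : 1 ≤ k) (h0 : -k + 1 ≤ y) (h : y < 1 / 3) : 1 / 3 < stef k y := by
  rcases le_total y 0 with h' | h'
  · rw [stef_b hk h0 h']; linarith
  · rw [stef_c hk h' (by linarith)]; linarith

lemma stef_sq {k y : ℝ} (hk : 1 ≤ k) (h0 : -k + 1 ≤ y) (h : y < 1 / 3) :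
    y - 1 ≤ stef k (stef k y) ∧ stef k (stef k y) < 1 / 3 := by
  refine ⟨?_, stef_right hk (stef_left hk h0 h)⟩
  rcases le_total y 0 with h' | h'
  · rw [stef_b hk h0 h', stef_d hk (by linarith)]; linarith
  · rw [stef_c hk h' (by linarith), stef_c hk (by linarith) (by linarith)]; linarith

lemma stef_sq_iter {k w : ℝ} (hk : 1 ≤ k) (h0 : 0 ≤ w) (h : w < 1 / 3) (j : ℕ) (hj : (j : ℝ) ≤ k) :
    -(j : ℝ) ≤ (stef k)^[2 * j] w ∧ (stef k)^[2 * j] w < 1 / 3 := by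
  induction j with
  | zero => exact ⟨by simpa using h0, h⟩
  | succ j ih =>
    push_cast at hj
    obtain ⟨h1, h2⟩ := ih (by linarith)
    rw [show 2 * (j + 1) = 2 * j + 1 + 1 by ring, Function.iterate_succ_apply',
      Function.iterate_succ_apply']
    have := stef_sq hk (by linarith) h2
    push_cast
    exact ⟨by linarith, this.2⟩

lemma stef_no {k : ℕ} (hk : 1 ≤ k) {m : ℕ} (hm1 : 1 < m) (hodd : Odd m) (hmk : m < 2 * k + 1)
    {x : ℝ} (h0 : -(k : ℝ) ≤ x) (h1 : x ≤ k) : ¬ PeriodPt (stef k) m x := by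
  intro hp
  have hk' : (1 : ℝ) ≤ k := by exact_mod_cast hk
  have hmem := iter_mem (stef_maps hk') h0 h1
  have hne : ∀ j, (stef k)^[j] x ≠ 1 / 3 := by
    intro j hj
    refine (hp.orbit (by omega) j).2 1 one_pos hm1 ?_
    rw [hj, Function.iterate_one, stef_c hk' (by norm_num) (by norm_num)]
    norm_num
  by_cases hz : ∃ j, (stef k)^[j] x < 1 / 3 ∧ (stef k)^[j + 1] x < 1 / 3
  · obtain ⟨j, hj, hj1⟩ := hz
    have hpj := (hp.orbit (by omega) j).1
    have hmj := hmem j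
    rw [Function.iterate_succ_apply'] at hj1
    set z := (stef k)^[j] x with hzdef
    have hzl : z < -k + 1 := by
      by_contra hcon
      have := stef_left hk' (not_lt.1 hcon) hj
      linarith
    have hw : 0 ≤ stef k z := by
      rw [stef_a hk' hmj.1 hzl.le]
      apply mul_nonneg <;> linarith
    obtain ⟨i, rfl⟩ := hodd
    have hik : ((i : ℝ) + 1) ≤ k := by
      have : i + 1 ≤ k := by omega
      exact_mod_cast this
    have := (stef_sq_iter hk' hw hj1 i (by linarith)).1
    rw [← Function.iterate_succ_apply, Nat.succ_eq_add_one, hpj] at this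
    linarith
  · push Not at hz
    have halt : ∀ i, ((stef k)^[i] x < 1 / 3 ↔ (Even i ↔ x < 1 / 3)) := by
      intro i
      induction i with
      | zero => simp
      | succ i ih =>
        have hstep : (stef k)^[i + 1] x < 1 / 3 ↔ ¬ (stef k)^[i] x < 1 / 3 := by
          constructor
          · intro h h'
            exact absurd (hz i h') (not_le.2 h)
          · intro h
            rw [Function.iterate_succ_apply']
            exact stef_right hk' (lt_of_le_of_ne (not_lt.1 h) (Ne.symm (hne i)))
        rw [hstep, ih, Nat.even_add_one]
        tauto
    have := halt m
    rw [hp.1] at this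
    have : ¬ Even m := Nat.not_even_iff_odd.2 hodd
    tauto

lemma stef_orbit {k : ℕ} (hk : 1 ≤ k) (j : ℕ) (hj : j ≤ k) : (stef k)^[2 * j] 0 = -(j : ℝ) := by
  have hk' : (1 : ℝ) ≤ k := by exact_mod_cast hk
  induction j with
  | zero => simp
  | succ j ih =>
    have hj' : (j : ℝ) + 1 ≤ k := by exact_mod_cast hj
    have hj0 : (0 : ℝ) ≤ j := Nat.cast_nonneg j
    rw [show 2 * (j + 1) = 2 * j + 1 + 1 by ring, Function.iterate_succ_apply',
      Function.iterate_succ_apply', ih (by omega), stef_b (y := -(j : ℝ)) hk' (by linarith) (by linarith),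
      stef_d hk' (by linarith)]
    push_cast
    ring

lemma stef_per {k : ℕ} (hk : 1 ≤ k) : PeriodPt (stef k) (2 * k + 1) 0 := by
  have hk' : (1 : ℝ) ≤ k := by exact_mod_cast hk
  constructor
  · rw [Function.iterate_succ_apply', stef_orbit hk k le_rfl, stef_a hk' le_rfl (by linarith)]
    ring
  · intro i hi hik he
    rcases Nat.even_or_odd' i with ⟨j, rfl | rfl⟩
    · rw [stef_orbit hk j (by omega)] at he
      have : (j : ℝ) = 0 := by linarith
      have : j = 0 := by exact_mod_cast this
      omega
    · have hj : (j : ℝ) + 1 ≤ k := by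
        have : j + 1 ≤ k := by omega
        exact_mod_cast this
      have hj0 : (0 : ℝ) ≤ j := Nat.cast_nonneg j
      rw [Function.iterate_succ_apply', stef_orbit hk j (by omega),
        stef_b hk' (by linarith) (by linarith)] at he
      linarith

lemma stef_good {k : ℕ} (hk : 1 ≤ k) : ∃ F, SharkGood (2 * k + 1) F := by
  have hk' : (1 : ℝ) ≤ k := by exact_mod_cast hk
  have hk0 : (0 : ℝ) < 2 * k := by linarith
  let φ : ℝ → ℝ := fun x => 2 * k * x - k
  let F : ℝ → ℝ := fun x => (stef k (2 * k * x - k) + k) / (2 * k)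
  have hsemi : Function.Semiconj φ F (stef k) := by
    intro x
    simp only [φ, F]
    field_simp
    ring
  have hinj : Function.Injective φ := by
    intro x y h
    simp only [φ] at h
    have : 2 * (k : ℝ) * (x - y) = 0 := by linarith
    rcases mul_eq_zero.1 this with h | h <;> linarith
  have hper : ∀ m x, PeriodPt F m x ↔ PeriodPt (stef k) m (φ x) := by
    intro m x
    have hi : ∀ i, F^[i] x = x ↔ (stef k)^[i] (φ x) = φ x := by
      intro i
      rw [← (hsemi.iterate_right i).eq x, hinj.eq_iff]
    simp only [PeriodPt, ne_eq, hi]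
  have hφ : ∀ x, 0 ≤ x → x ≤ 1 → -(k : ℝ) ≤ φ x ∧ φ x ≤ k := by
    intro x h0 h1
    simp only [φ]
    constructor <;> nlinarith
  refine ⟨F, ?_, ?_, ⟨1 / 2, by norm_num, by norm_num, ?_⟩, ?_⟩
  · have := clampU_cont
    simp only [F, stef]
    fun_prop
  · intro x h0 h1
    have h := hφ x h0 h1
    have := stef_maps hk' _ h.1 h.2
    simp only [F]
    simp only [φ] at this
    constructor
    · apply div_nonneg <;> linarith
    · rw [div_le_one hk0]; linarith
  · rw [hper]
    have : φ (1 / 2) = 0 := by simp only [φ]; ring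
    rw [this]
    exact stef_per hk
  · intro m hm hlt x h0 h1
    rw [hper]
    obtain ⟨a, p, b, q, hp, hq, hma, hnb, hh⟩ := hlt
    have hb : b = 0 := by
      by_contra hb
      obtain ⟨b, rfl⟩ := Nat.exists_eq_succ_of_ne_zero hb
      rw [pow_succ, mul_right_comm] at hnb
      omega
    subst hb
    rw [pow_zero, one_mul] at hnb
    have ha : a = 0 := by omega
    subst ha
    rw [pow_zero, one_mul] at hma
    subst hma
    exact stef_no hk (by omega) hp (by omega) (hφ x h0 h1).1 (hφ x h0 h1).2

lemma one_good : SharkGood 1 (fun _ => 0) := by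
  refine ⟨continuous_const, fun x _ _ => by norm_num,
    ⟨0, le_rfl, zero_le_one, rfl, fun i hi hi1 => by omega⟩, ?_⟩
  intro m hm hlt x h0 h1 hp
  have hm1 : 1 < m := by
    obtain ⟨a, p, b, q, hp, hq, hma, hnb, hh⟩ := hlt
    by_contra hcon
    obtain rfl : m = 1 := by omega
    have h1 := Nat.eq_one_of_mul_eq_one_left hma.symm
    have h2 := Nat.eq_one_of_mul_eq_one_right hma.symm
    have h3 := Nat.eq_one_of_mul_eq_one_left hnb.symm
    have h4 := Nat.eq_one_of_mul_eq_one_right hnb.symm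
    have : a = 0 := by
      by_contra ha
      have := Nat.one_lt_two_pow ha
      omega
    omega
  refine (hp.orbit hm 1).2 1 one_pos hm1 ?_
  simp

lemma all_good : ∀ n : ℕ, 0 < n → ∃ f, SharkGood n f := by
  intro n
  induction n using Nat.strong_induction_on with
  | _ n ih =>
    intro hn
    rcases Nat.even_or_odd' n with ⟨k, rfl | rfl⟩
    · obtain ⟨f, hf⟩ := ih k (by omega) (by omega)
      exact ⟨_, dbl_good hf⟩
    · rcases Nat.eq_zero_or_pos k with rfl | hk
      · exact ⟨_, one_good⟩
      · exact stef_good hk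

theorem sharkovsky_converse (n : ℕ) (hn : 0 < n) :
    ∃ f : ℝ → ℝ, ContinuousOn f (Set.Icc 0 1) ∧
      Set.MapsTo f (Set.Icc 0 1) (Set.Icc 0 1) ∧
      (∃ x ∈ Set.Icc (0:ℝ) 1, PeriodPt f n x) ∧
      ∀ m : ℕ, 0 < m → SharkovskyLt m n → ¬ ∃ x ∈ Set.Icc (0:ℝ) 1, PeriodPt f m x := by
  obtain ⟨f, hc, hf, ⟨x, h0, h1, hx⟩, hno⟩ := all_good n hn
  refine ⟨f, hc.continuousOn, fun y hy => hf y hy.1 hy.2, ⟨x, ⟨h0, h1⟩, hx⟩, ?_⟩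
  rintro m hm hlt ⟨y, hy, hp⟩
  exact hno m hm hlt y hy.1 hy.2 hp
end

section
/- If a continuous map f : I → I of a compact interval I has a period-m point for some integer m ≥ 3, then f has a period-2 point. -/
theorem fixed_of_signs (a b : ℝ) (g : ℝ → ℝ) (hg : ContinuousOn g (Set.Icc a b))
    (u v : ℝ) (hu : a ≤ u) (huv : u ≤ v) (hv : v ≤ b) (h1 : u ≤ g u) (h2 : g v ≤ v) :
    ∃ x, u ≤ x ∧ x ≤ v ∧ g x = x := by
  have hc : ContinuousOn (fun x => g x - x) (Set.Icc u v) :=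
    (hg.mono (Set.Icc_subset_Icc hu hv)).sub continuousOn_id
  have := intermediate_value_Icc' huv hc
  obtain ⟨x, hx, he⟩ := this (show (0:ℝ) ∈ _ from ⟨by linarith, by linarith⟩)
  exact ⟨x, hx.1, hx.2, by simpa [sub_eq_zero] using he⟩

theorem two_of_up (a b : ℝ) (f : ℝ → ℝ)
    (hcont : ContinuousOn f (Set.Icc a b))
    (hmaps : Set.MapsTo f (Set.Icc a b) (Set.Icc a b))
    (t : ℝ) (ht : t ∈ Set.Icc a b) (h1 : t < f t) (h2 : f (f t) ≤ t) :
    ∃ y ∈ Set.Icc a b, f (f y) = y ∧ f y ≠ y := by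
  by_contra hno
  push Not at hno
  have hgc : ContinuousOn (fun x => f (f x)) (Set.Icc a b) := hcont.comp hcont hmaps
  have ha : a ∈ Set.Icc a b := ⟨le_rfl, ht.1.trans ht.2⟩
  have hKc : IsCompact (Set.Icc a t ∩ (fun x => f (f x) - x) ⁻¹' {0}) := by
    apply IsCompact.of_isClosed_subset isCompact_Icc _ Set.inter_subset_left
    exact ((hgc.sub continuousOn_id).mono
      (Set.Icc_subset_Icc le_rfl ht.2)).preimage_isClosed_of_isClosed isClosed_Icc isClosed_singleton
  obtain ⟨w, hw1, hw2, hw3⟩ := fixed_of_signs a b _ hgc a t le_rfl ht.1 ht.2 (hmaps (hmaps ha)).1 h2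
  obtain ⟨z, ⟨hz, hz0⟩, hmax⟩ := hKc.exists_isGreatest ⟨w, ⟨hw1, hw2⟩, by simp [hw3]⟩
  have hz1 : f (f z) = z := by simpa [sub_eq_zero] using hz0
  have hzI : z ∈ Set.Icc a b := ⟨hz.1, hz.2.trans ht.2⟩
  have hz2 := hno z hzI hz1
  obtain ⟨x, hx, hxt⟩ := intermediate_value_Icc hz.2
    (hcont.mono (Set.Icc_subset_Icc hz.1 ht.2)) (show t ∈ _ from ⟨by rw [hz2]; exact hz.2, h1.le⟩)
  obtain ⟨y, hy1, hy2, hy3⟩ := fixed_of_signs a b _ hgc x t (hz.1.trans hx.1) hx.2 ht.2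
    (by simp only [hxt]; linarith [hx.2]) h2
  have hyz : y ≤ z := hmax ⟨⟨by linarith [hz.1, hx.1], hy2⟩, by simp [hy3]⟩
  have hxz : x = z := le_antisymm (hy1.trans hyz) hx.1
  have : z = t := by rw [← hz2, ← hxz, hxt]
  rw [this] at hz2
  linarith

theorem period_ge_three_implies_period_two (a b : ℝ) (hab : a ≤ b) (f : ℝ → ℝ)
    (hcont : ContinuousOn f (Set.Icc a b))
    (hmaps : Set.MapsTo f (Set.Icc a b) (Set.Icc a b))
    (m : ℕ) (hm : 3 ≤ m) (x : ℝ) (hx : x ∈ Set.Icc a b) (hper : PeriodPt f m x) :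
    ∃ y ∈ Set.Icc a b, PeriodPt f 2 y := by
  suffices h : ∃ y ∈ Set.Icc a b, f (f y) = y ∧ f y ≠ y by
    obtain ⟨y, hy, h1, h2⟩ := h
    refine ⟨y, hy, h1, fun i hi hi2 => ?_⟩
    obtain rfl : i = 1 := by omega
    exact h2
  obtain ⟨hp, hq⟩ := hper
  classical
  let P : Finset ℝ := (Finset.range m).image (fun i => f^[i] x)
  have hPne : P.Nonempty := ⟨x, Finset.mem_image.2 ⟨0, by simp; omega, rfl⟩⟩
  have hPI : ∀ y ∈ P, y ∈ Set.Icc a b := by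
    intro y hy
    obtain ⟨i, -, rfl⟩ := Finset.mem_image.1 hy
    exact hmaps.iterate i hx
  have hPf : ∀ y ∈ P, f y ∈ P := by
    intro y hy
    obtain ⟨i, hi, rfl⟩ := Finset.mem_image.1 hy
    have hi := Finset.mem_range.1 hi
    simp only [← Function.iterate_succ_apply' f]
    by_cases h : i + 1 < m
    · exact Finset.mem_image.2 ⟨i+1, by simpa using h, rfl⟩
    · obtain rfl : m = i + 1 := by omega
      exact Finset.mem_image.2 ⟨0, by simp, by simpa using hp.symm⟩
  have hPn : ∀ y ∈ P, f y ≠ y := by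
    intro y hy he
    obtain ⟨i, hi, rfl⟩ := Finset.mem_image.1 hy
    have hi := Finset.mem_range.1 hi
    have h1 : f^[m - i] (f^[i] x) = f^[i] x := Function.iterate_fixed he _
    rw [← Function.iterate_add_apply, Nat.sub_add_cancel hi.le, hp] at h1
    simp only [← h1] at he
    exact hq 1 (by omega) (by omega) he
  have hU : (P.filter (fun y => y < f y)).Nonempty := by
    have h := P.min'_mem hPne
    exact ⟨P.min' hPne, Finset.mem_filter.2 ⟨h,
      lt_of_le_of_ne (P.min'_le _ (hPf _ h)) (hPn _ h).symm⟩⟩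
  obtain ⟨p, hpU, hpm⟩ := Finset.exists_max_image _ id hU
  obtain ⟨hpP, hpf⟩ := Finset.mem_filter.1 hpU
  obtain ⟨q, hqV, hqm⟩ := Finset.exists_min_image (P.filter (fun y => p < y)) id
    ⟨f p, Finset.mem_filter.2 ⟨hPf _ hpP, hpf⟩⟩
  obtain ⟨hqP, hpq⟩ := Finset.mem_filter.1 hqV
  simp only [id] at hpm hqm
  have hqfp : q ≤ f p := hqm _ (Finset.mem_filter.2 ⟨hPf _ hpP, hpf⟩)
  have hfq : f q < q := by
    by_contra h
    have := hpm q (Finset.mem_filter.2 ⟨hqP, lt_of_le_of_ne (not_lt.1 h) (hPn q hqP).symm⟩)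
    linarith
  have hfqp : f q ≤ p := by
    by_contra h
    have := hqm (f q) (Finset.mem_filter.2 ⟨hPf q hqP, not_le.1 h⟩)
    linarith
  have hpI := hPI p hpP
  have hqI := hPI q hqP
  obtain ⟨t, ht, htq⟩ := intermediate_value_Icc' hpq.le
    (hcont.mono (Set.Icc_subset_Icc hpI.1 hqI.2)) (show q ∈ _ from ⟨hfq.le, hqfp⟩)
  have htne : t ≠ q := by rintro rfl; linarith
  apply two_of_up a b f hcont hmaps t ⟨hpI.1.trans ht.1, ht.2.trans hqI.2⟩
  · rw [htq]; exact lt_of_le_of_ne ht.2 htne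
  · rw [htq]; exact hfqp.trans ht.1
end

section
/- If a continuous map f : I → I of a compact interval I has a period-m point for some odd integer m ≥ 3, then f has a period-(m+2) point. -/
/-- Fixed point by the intermediate value theorem: `g u ≥ u`, `g w ≤ w`. -/
theorem fix_of_ivt (g : ℝ → ℝ) (u w : ℝ) (huw : u ≤ w) (hg : ContinuousOn g (Set.Icc u w))
    (hu : u ≤ g u) (hw : g w ≤ w) : ∃ q ∈ Set.Icc u w, g q = q := by
  have hc : ContinuousOn (fun t => g t - t) (Set.Icc u w) := hg.sub continuousOn_id
  have h0 : (0 : ℝ) ∈ Set.Icc ((fun t => g t - t) w) ((fun t => g t - t) u) := by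
    constructor <;> simp only <;> linarith
  obtain ⟨q, hq, hq0⟩ := intermediate_value_Icc' huw hc h0
  exact ⟨q, hq, by simp only at hq0; linarith⟩

/-- In a cycle of length at least three there are `c < d` with `f d ≤ c`, `d ≤ f c`. -/
theorem exists_pair (a b : ℝ) (f : ℝ → ℝ)
    (hmaps : Set.MapsTo f (Set.Icc a b) (Set.Icc a b))
    (m : ℕ) (hm : 3 ≤ m)
    (x : ℝ) (hx : x ∈ Set.Icc a b) (hper : PeriodPt f m x) :
    ∃ c ∈ Set.Icc a b, ∃ d ∈ Set.Icc a b, c < d ∧ f d ≤ c ∧ d ≤ f c ∧ f^[m] d = d ∧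
      f (f c) ≠ c := by
  classical
  obtain ⟨hfix, hne⟩ := hper
  set P : Finset ℝ := (Finset.range m).image (fun i => f^[i] x) with hP
  have hmem : ∀ p, p ∈ P ↔ ∃ i < m, f^[i] x = p := by intro p; simp [hP]
  have hPf : ∀ p ∈ P, f p ∈ P := by
    intro p hp
    obtain ⟨i, hi, rfl⟩ := (hmem p).1 hp
    rw [hmem]
    by_cases h : i + 1 < m
    · exact ⟨i + 1, h, Function.iterate_succ_apply' f i x⟩
    · have : i + 1 = m := by omega
      refine ⟨0, by omega, ?_⟩
      rw [← Function.iterate_succ_apply' f i x, Nat.succ_eq_add_one, this, hfix]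
      rfl
  have hPI : ∀ p ∈ P, p ∈ Set.Icc a b := by
    intro p hp
    obtain ⟨i, hi, rfl⟩ := (hmem p).1 hp
    exact hmaps.iterate i hx
  have hPm : ∀ p ∈ P, f^[m] p = p := by
    intro p hp
    obtain ⟨i, hi, rfl⟩ := (hmem p).1 hp
    rw [← Function.iterate_add_apply, add_comm, Function.iterate_add_apply, hfix]
  have hPk : ∀ p ∈ P, ∀ k, 0 < k → k < m → f^[k] p ≠ p := by
    intro p hp k hk hkm h
    obtain ⟨i, hi, rfl⟩ := (hmem p).1 hp
    apply hne k hk hkm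
    have h1 : f^[m - i] (f^[i] x) = x := by
      rw [← Function.iterate_add_apply, Nat.sub_add_cancel hi.le, hfix]
    have h2 := congrArg (f^[m - i]) h
    rw [← Function.iterate_add_apply, add_comm, Function.iterate_add_apply, h1] at h2
    exact h2
  have hP1 : ∀ p ∈ P, f p ≠ p := fun p hp => hPk p hp 1 (by omega) (by omega)
  have hP2 : ∀ p ∈ P, f (f p) ≠ p := fun p hp => hPk p hp 2 (by omega) (by omega)
  have hPne : P.Nonempty := ⟨x, (hmem x).2 ⟨0, by omega, rfl⟩⟩
  -- the largest point moving to the right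
  have hQne : (P.filter (fun p => p < f p)).Nonempty := by
    refine ⟨P.min' hPne, Finset.mem_filter.2 ⟨P.min'_mem hPne, ?_⟩⟩
    exact lt_of_le_of_ne (P.min'_le _ (hPf _ (P.min'_mem hPne)))
      (Ne.symm (hP1 _ (P.min'_mem hPne)))
  obtain ⟨c, hcQ, hcmax⟩ := Finset.exists_max_image _ (fun t : ℝ => t) hQne
  obtain ⟨hcP, hcf⟩ := Finset.mem_filter.1 hcQ
  have hRne : (P.filter (fun p => c < p)).Nonempty :=
    ⟨f c, Finset.mem_filter.2 ⟨hPf c hcP, hcf⟩⟩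
  obtain ⟨d, hdR, hdmin⟩ := Finset.exists_min_image _ (fun t : ℝ => t) hRne
  obtain ⟨hdP, hcd⟩ := Finset.mem_filter.1 hdR
  have hfd : f d < d := by
    refine lt_of_le_of_ne (not_lt.1 fun h => ?_) (hP1 d hdP)
    have := hcmax d (Finset.mem_filter.2 ⟨hdP, h⟩)
    linarith
  refine ⟨c, hPI c hcP, d, hPI d hdP, hcd, not_lt.1 fun h => ?_,
    hdmin (f c) (Finset.mem_filter.2 ⟨hPf c hcP, hcf⟩), hPm d hdP, hP2 c hcP⟩
  have := hdmin (f d) (Finset.mem_filter.2 ⟨hPf d hdP, h⟩)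
  linarith

theorem iterate_odd_of_two (f : ℝ → ℝ) (y : ℝ) (h : f (f y) = y) (n : ℕ) (hn : Odd n) :
    f^[n] y = f y := by
  obtain ⟨k, rfl⟩ := hn
  rw [add_comm, Function.iterate_add_apply, Function.iterate_mul]
  have : (f^[2])^[k] y = y := Function.iterate_fixed (f := f^[2]) h k
  rw [this]
  rfl

theorem odd_period_implies_period_add_two (a b : ℝ) (hab : a ≤ b) (f : ℝ → ℝ)
    (hcont : ContinuousOn f (Set.Icc a b))
    (hmaps : Set.MapsTo f (Set.Icc a b) (Set.Icc a b))
    (m : ℕ) (hm : 3 ≤ m) (hodd : Odd m)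
    (x : ℝ) (hx : x ∈ Set.Icc a b) (hper : PeriodPt f m x) :
    ∃ y ∈ Set.Icc a b, PeriodPt f (m + 2) y := by
  obtain ⟨c, hc, d, hd, hcd, hfd, hfc, hdm, hc2⟩ := exists_pair a b f hmaps m hm x hx hper
  have hci : ∀ n, ContinuousOn (f^[n]) (Set.Icc a b) := fun n => hcont.iterate hmaps n
  have sub : ∀ {u w : ℝ}, a ≤ u → w ≤ b → Set.Icc u w ⊆ Set.Icc a b :=
    fun hu hw => Set.Icc_subset_Icc hu hw
  obtain ⟨z, hz, hfz⟩ := fix_of_ivt f c d hcd.le (hcont.mono (sub hc.1 hd.2))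
    (by linarith) (by linarith)
  have hzd : z < d := lt_of_le_of_ne hz.2 (by rintro rfl; linarith)
  have hzb : z ≤ b := hzd.le.trans hd.2
  obtain ⟨v, hv, hfv⟩ := intermediate_value_Icc' hz.1 (hcont.mono (sub hc.1 hzb))
    (show d ∈ Set.Icc (f z) (f c) from ⟨by linarith, hfc⟩)
  have hvz : v < z := lt_of_le_of_ne hv.2 (by rintro rfl; linarith)
  have hav : a ≤ v := hc.1.trans hv.1
  have hvb : v ≤ b := hvz.le.trans hzb
  have hf2v : f (f v) < v := by
    rw [hfv]
    refine lt_of_le_of_ne (hfd.trans hv.1) fun h => hc2 ?_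
    have hvc : v = c := le_antisymm (h ▸ hfd) hv.1
    rw [← hvc, hfv, h]
  have hmv : f^[m + 2] v < v := by
    have : f^[m + 2] v = f (f v) := by
      rw [Function.iterate_succ_apply', Function.iterate_succ_apply, hfv, hdm]
    rw [this]; exact hf2v
  have hc22 : ContinuousOn (fun t => f (f t)) (Set.Icc a b) := hci 2
  -- the largest point `y ≤ v` fixed by the second iterate
  obtain ⟨y, ⟨hyI, hy2⟩, hymax⟩ : ∃ y, IsGreatest {t | t ∈ Set.Icc a v ∧ f (f t) = t} y := by
    have hK : IsCompact {t | t ∈ Set.Icc a v ∧ f (f t) = t} := by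
      have : IsClosed {t | t ∈ Set.Icc a v ∧ f (f t) = t} :=
        isClosed_Icc.isClosed_eq (hc22.mono (sub le_rfl hvb)) continuousOn_id
      exact isCompact_Icc.of_isClosed_subset this fun t ht => ht.1
    apply hK.exists_isGreatest
    have ha : a ∈ Set.Icc a b := ⟨le_rfl, hab⟩
    obtain ⟨q, hq, h⟩ := fix_of_ivt (fun t => f (f t)) a v hav (hc22.mono (sub le_rfl hvb))
      (hmaps (hmaps ha)).1 hf2v.le
    exact ⟨q, hq, h⟩
  have hyv : y < v := lt_of_le_of_ne hyI.2 (by rintro rfl; linarith)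
  have hlt : ∀ t, y < t → t ≤ v → f (f t) < t := by
    intro t hyt htv
    by_contra! h
    obtain ⟨q, hq, hq2⟩ := fix_of_ivt (fun t => f (f t)) t v htv
      (hc22.mono (sub (hyI.1.trans hyt.le) hvb)) h hf2v.le
    have := hymax ⟨⟨by linarith [hq.1, hyI.1], hq.2⟩, hq2⟩
    linarith [hq.1]
  have hfy : z < f y := by
    by_contra! h
    obtain ⟨q, hq, hqz⟩ := intermediate_value_Icc hyv.le (hcont.mono (sub hyI.1 hvb))
      (show z ∈ Set.Icc (f y) (f v) from ⟨h, by linarith⟩)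
    have h2 : f (f q) = z := by rw [hqz, hfz]
    rcases hq.1.eq_or_lt with h3 | h3
    · rw [← h3, hy2] at h2; linarith
    · have := hlt q h3 hq.2
      linarith [hq.2]
  have hyodd : ∀ n, Odd n → y < f^[n] y := by
    intro n hn
    rw [iterate_odd_of_two f y hy2 n hn]; linarith
  have step : ∀ n, Odd n → ∀ p, y < p → p ≤ v → f^[n] p = p →
      ∃ q, y < q ∧ q < p ∧ f^[n + 2] q = q := by
    intro n hn p hyp hpv hp
    have h1 : f^[n + 2] p < p := by
      rw [add_comm, Function.iterate_add_apply, hp]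
      exact hlt p hyp hpv
    have h2 : y < f^[n + 2] y := hyodd _ (hn.add_even even_two)
    obtain ⟨q, hq, hqf⟩ := fix_of_ivt (f^[n + 2]) y p hyp.le
      ((hci _).mono (sub hyI.1 (hpv.trans hvb))) h2.le h1.le
    refine ⟨q, lt_of_le_of_ne hq.1 ?_, lt_of_le_of_ne hq.2 ?_, hqf⟩
    · rintro rfl; linarith
    · rintro rfl; linarith
  have steps : ∀ n, Odd n → ∀ p, y < p → p ≤ v → f^[n] p = p → ∀ k : ℕ,
      ∃ q, y < q ∧ q < p ∧ f^[n + 2 * (k + 1)] q = q := by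
    intro n hn p hyp hpv hp k
    induction k with
    | zero => exact step n hn p hyp hpv hp
    | succ k ih =>
      obtain ⟨q, h1, h2, h3⟩ := ih
      obtain ⟨r, h4, h5, h6⟩ := step (n + 2 * (k + 1)) (hn.add_even (even_two_mul _)) q h1
        (h2.le.trans hpv) h3
      exact ⟨r, h4, h5.trans h2, h6⟩
  have hodd2 : Odd (m + 2) := hodd.add_even even_two
  -- the smallest fixed point of the `(m+2)`-nd iterate in `[y, v]`
  obtain ⟨p, ⟨hpI, hpf⟩, hpmin⟩ :
      ∃ p, IsLeast {t | t ∈ Set.Icc y v ∧ f^[m + 2] t = t} p := by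
    have hcm := (hci (m + 2)).mono (sub hyI.1 hvb)
    have hK : IsCompact {t | t ∈ Set.Icc y v ∧ f^[m + 2] t = t} := by
      have : IsClosed {t | t ∈ Set.Icc y v ∧ f^[m + 2] t = t} :=
        isClosed_Icc.isClosed_eq hcm continuousOn_id
      exact isCompact_Icc.of_isClosed_subset this fun t ht => ht.1
    apply hK.exists_isLeast
    obtain ⟨q, hq, h⟩ := fix_of_ivt (f^[m + 2]) y v hyv.le hcm (hyodd _ hodd2).le hmv.le
    exact ⟨q, hq, h⟩
  have hyp : y < p := lt_of_le_of_ne hpI.1 (by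
    rintro rfl
    have := hyodd _ hodd2
    linarith)
  refine ⟨p, ⟨hyI.1.trans hpI.1, hpI.2.trans hvb⟩, hpf, ?_⟩
  intro i hi him hip
  have hdvd : Function.minimalPeriod f p ∣ m + 2 :=
    Function.IsPeriodicPt.minimalPeriod_dvd hpf
  have hle : Function.minimalPeriod f p ≤ i := Function.IsPeriodicPt.minimalPeriod_le hi hip
  have hnodd : Odd (Function.minimalPeriod f p) := hodd2.of_dvd_nat hdvd
  have hnp : f^[Function.minimalPeriod f p] p = p := Function.iterate_minimalPeriod
  generalize Function.minimalPeriod f p = n at *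
  obtain ⟨k, hk⟩ : ∃ k, m + 2 = n + 2 * (k + 1) := by
    obtain ⟨s, hs⟩ := hnodd
    obtain ⟨t, ht⟩ := hodd2
    exact ⟨t - s - 1, by omega⟩
  obtain ⟨q, h1, h2, h3⟩ := steps n hnodd p hyp hpI.2 hnp k
  rw [← hk] at h3
  have := hpmin ⟨⟨h1.le, h2.le.trans hpI.2⟩, h3⟩
  linarith
end

section
/- If a continuous map f : I → I of a compact interval I has a period-m point for some odd integer m ≥ 3, then f has a period-6 point and a period-(2m) point. -/
lemma first_hit (h : ℝ → ℝ) (hc : Continuous h) (c d p : ℝ) (hcd : c ≤ d) (h1 : h c ≤ p)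
    (h2 : p ≤ h d) : ∃ t ∈ Set.Icc c d, h t = p ∧ ∀ s, c ≤ s → s < t → h s < p := by
  have hK : IsCompact (Set.Icc c d ∩ {t | p ≤ h t}) :=
    isCompact_Icc.inter_right (isClosed_le continuous_const hc)
  obtain ⟨t, ⟨htI, ht⟩, hmin⟩ := hK.exists_isLeast ⟨d, ⟨hcd, le_rfl⟩, h2⟩
  have hlt : ∀ s, c ≤ s → s < t → h s < p := by
    intro s hs hst
    by_contra hcon
    have := hmin ⟨⟨hs, hst.le.trans htI.2⟩, not_lt.mp hcon⟩
    linarith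
  refine ⟨t, htI, ?_, hlt⟩
  obtain ⟨s, hs, hsp⟩ := intermediate_value_Icc htI.1 hc.continuousOn ⟨h1, ht⟩
  rcases hs.2.lt_or_eq with h3 | h3
  · have := hlt s hs.1 h3
    linarith
  · rw [← h3]; exact hsp

lemma last_hit (h : ℝ → ℝ) (hc : Continuous h) (c d p : ℝ) (hcd : c ≤ d) (h1 : h c ≤ p)
    (h2 : p ≤ h d) : ∃ t ∈ Set.Icc c d, h t = p ∧ ∀ s, s ≤ d → t < s → p < h s := by
  obtain ⟨t, ht, hp, hl⟩ := first_hit (fun u => - h (-u)) (by fun_prop) (-d) (-c) (-p)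
    (by linarith) (by simpa using h2) (by simpa using h1)
  refine ⟨-t, ⟨by linarith [ht.2], by linarith [ht.1]⟩, by simpa using hp, ?_⟩
  intro s hs hts
  have := hl (-s) (by linarith) (by linarith)
  simpa using this

lemma sub_up (h : ℝ → ℝ) (hc : Continuous h) (c d p q : ℝ) (hcd : c ≤ d) (hpq : p ≤ q)
    (h1 : h c ≤ p) (h2 : q ≤ h d) :
    ∃ c' d', c ≤ c' ∧ c' ≤ d' ∧ d' ≤ d ∧ h c' = p ∧ h d' = q ∧
      ∀ s ∈ Set.Icc c' d', h s ∈ Set.Icc p q := by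
  obtain ⟨t, ht, htq, hl⟩ := first_hit h hc c d q hcd (h1.trans hpq) h2
  obtain ⟨u, hu, hup, hl'⟩ := last_hit h hc c t p ht.1 h1 (by linarith)
  refine ⟨u, t, hu.1, hu.2, ht.2, hup, htq, ?_⟩
  intro s hs
  constructor
  · rcases hs.1.lt_or_eq with h3 | h3
    · exact (hl' s hs.2 h3).le
    · rw [← h3, hup]
  · rcases hs.2.lt_or_eq with h3 | h3
    · exact (hl s (hu.1.trans hs.1) h3).le
    · rw [h3, htq]

lemma sub_down (h : ℝ → ℝ) (hc : Continuous h) (c d p q : ℝ) (hcd : c ≤ d) (hpq : p ≤ q)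
    (h1 : q ≤ h c) (h2 : h d ≤ p) :
    ∃ c' d', c ≤ c' ∧ c' ≤ d' ∧ d' ≤ d ∧ h c' = q ∧ h d' = p ∧
      ∀ s ∈ Set.Icc c' d', h s ∈ Set.Icc p q := by
  obtain ⟨c', d', a1, a2, a3, a4, a5, a6⟩ := sub_up (fun u => - h u) (by fun_prop) c d (-q) (-p)
    hcd (by linarith) (by simpa using h1) (by simpa using h2)
  refine ⟨c', d', a1, a2, a3, by simpa using a4, by simpa using a5, ?_⟩
  intro s hs
  have := a6 s hs
  simp only [Set.mem_Icc] at this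
  exact ⟨by linarith [this.2], by linarith [this.1]⟩

/-- Nested intervals in `[v,e]`. -/
lemma nested (g : ℝ → ℝ) (hg : Continuous g) (v e : ℝ) (hve : v < e) (h1 : g v ≤ v) (h2 : g e = e)
    (k : ℕ) : ∃ p q, v ≤ p ∧ p ≤ q ∧ q ≤ e ∧ g^[k] p = v ∧ g^[k] q = e ∧
      ∀ s ∈ Set.Icc p q, ∀ i ≤ k, g^[i] s ∈ Set.Icc v e := by
  induction k with
  | zero =>
    refine ⟨v, e, le_rfl, hve.le, le_rfl, rfl, rfl, ?_⟩
    intro s hs i hi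
    obtain rfl : i = 0 := by omega
    exact hs
  | succ k ih =>
    obtain ⟨p, q, a1, a2, a3, a4, a5, a6⟩ := ih
    obtain ⟨c, d, b1, b2, b3, b4, b5, b6⟩ := sub_up g hg v e p q hve.le a2 (h1.trans a1)
      (by rw [h2]; exact a3)
    refine ⟨c, d, b1, b2, b3, ?_, ?_, ?_⟩
    · rw [Function.iterate_succ_apply, b4, a4]
    · rw [Function.iterate_succ_apply, b5, a5]
    · intro s hs i hi
      cases i with
      | zero => exact ⟨b1.trans hs.1, hs.2.trans b3⟩
      | succ i =>
        rw [Function.iterate_succ_apply]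
        exact a6 _ (b6 s hs) i (by omega)

lemma horseshoe (g : ℝ → ℝ) (hg : Continuous g) (d v e : ℝ) (hdv : d < v) (hve : v < e)
    (h1 : e ≤ g d) (h2 : g v ≤ d) (h3 : g e = e) (n : ℕ) (hn : 2 ≤ n) :
    ∃ y, g^[n] y = y ∧ (∀ i, 0 < i → i < n → g^[i] y ≠ y) ∧
      ∀ i, i < n → g^[i] y ∈ Set.Ioo d e := by
  obtain ⟨k, rfl⟩ : ∃ k, n = k + 2 := ⟨n - 2, by omega⟩
  obtain ⟨p, q, a1, a2, a3, a4, a5, a6⟩ := nested g hg v e hve (by linarith) h3 k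
  obtain ⟨c, c', b1, b2, b3, b4, b5, b6⟩ := sub_down g hg d v p q hdv.le a2 (a3.trans h1)
    (by linarith)
  have e1 : g^[k+2] c = e := by
    rw [Function.iterate_succ_apply, b4, Function.iterate_succ_apply', a5, h3]
  have e2 : g^[k+2] c' = g v := by
    rw [Function.iterate_succ_apply, b5, Function.iterate_succ_apply', a4]
  have hcont : Continuous (fun u => u - g^[k+2] u) := continuous_id.sub (hg.iterate _)
  obtain ⟨y, hy, hy0⟩ := intermediate_value_Icc b2 hcont.continuousOn
    (show (0:ℝ) ∈ Set.Icc (c - g^[k+2] c) (c' - g^[k+2] c') from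
      ⟨by rw [e1]; linarith, by rw [e2]; linarith⟩)
  have hyp : g^[k+2] y = y := by linarith
  have hK : ∀ i, 0 < i → i < k + 2 → g^[i] y ∈ Set.Icc v e := by
    intro i hi hik
    obtain ⟨j, rfl⟩ : ∃ j, i = j + 1 := ⟨i - 1, by omega⟩
    rw [Function.iterate_succ_apply]
    exact a6 _ (b6 y hy) j (by omega)
  have hg1 : g y ∈ Set.Icc v e := hK 1 (by omega) (by omega)
  have hyv : y < v := by
    rcases (hy.2.trans b3).lt_or_eq with h | h
    · exact h
    · rw [h] at hg1; linarith [hg1.1]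
  have hfix : ∀ j, g^[j] e = e := fun j => Function.iterate_fixed h3 j
  have hne : ∀ i, i < k + 2 → g^[i] y ≠ e := by
    intro i hi h
    have : g^[k+2] y = e := by
      rw [show k + 2 = (k + 2 - i) + i by omega, Function.iterate_add_apply, h, hfix]
    linarith
  refine ⟨y, hyp, ?_, ?_⟩
  · intro i hi hik h
    have := (hK i hi hik).1
    linarith
  · intro i hi
    rcases Nat.eq_zero_or_pos i with rfl | hi0
    · refine ⟨?_, by simp only [Function.iterate_zero, id]; linarith⟩
      rcases (b1.trans hy.1).lt_or_eq with h | h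
      · exact h
      · exfalso
        apply hne 1 (by omega)
        rw [← h] at hg1 ⊢
        exact le_antisymm hg1.2 h1
    · have := hK i hi0 hi
      exact ⟨by linarith [this.1], lt_of_le_of_ne this.2 (hne i hi)⟩

lemma final_step (f : ℝ → ℝ) (hf : Continuous f) (z d v e : ℝ) (hdv : d < v) (hve : v < e)
    (hez : e ≤ z) (hfz : ∀ t ∈ Set.Ioo d e, z < f t) (h1 : e ≤ f (f d)) (h2 : f (f v) ≤ d)
    (h3 : f (f e) = e) (n : ℕ) (hn : 2 ≤ n) : ∃ y, PeriodPt f (2 * n) y := by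
  obtain ⟨y, y1, y2, y3⟩ := horseshoe (f^[2]) (hf.iterate 2) d v e hdv hve h1 h2 h3 n hn
  refine ⟨y, by rw [Function.iterate_mul]; exact y1, ?_⟩
  intro i hi hin
  rcases Nat.even_or_odd' i with ⟨j, rfl | rfl⟩
  · rw [Function.iterate_mul]
    exact y2 j (by omega) (by omega)
  · rw [Function.iterate_succ_apply', Function.iterate_mul]
    have a1 := hfz _ (y3 j (by omega))
    have a2 := (y3 0 (by omega)).2
    simp only [Function.iterate_zero, id] at a2
    intro h
    linarith

lemma key (f : ℝ → ℝ) (hf : Continuous f) (z a v : ℝ) (m : ℕ) (hodd : Odd m)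
    (ha : f^[m] a = a) (hmin : ∀ j, a ≤ f^[j] a) (hav : a < v) (hvz : v < z) (hz : f z = z)
    (hfv : z < f v) (hffv : f (f v) = a) (n : ℕ) (hn : 2 ≤ n) : ∃ y, PeriodPt f (2 * n) y := by
  obtain ⟨e, heI, he, hel⟩ := first_hit (fun t => f (f t) - t) (by fun_prop) v z 0 hvz.le
    (by simp only [hffv]; linarith) (by simp [hz])
  have he' : f (f e) = e := by linarith
  have hve : v < e := by
    rcases heI.1.lt_or_eq with h | h
    · exact h
    · rw [← h, hffv] at he'; linarith
  have hfe : ∀ t, v ≤ t → t < e → z < f t := by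
    intro t hvt hte
    by_contra hcon
    obtain ⟨s, hs, hsz⟩ := intermediate_value_Icc' hvt hf.continuousOn ⟨not_lt.mp hcon, hfv.le⟩
    have := hel s hs.1 (hs.2.trans_lt hte)
    rw [hsz, hz] at this
    linarith [hs.2, heI.2]
  by_cases hc : f a ≤ z ∨ ∃ t ∈ Set.Icc a v, f t ≤ z
  · obtain ⟨t, ht, htz⟩ : ∃ t ∈ Set.Icc a v, f t ≤ z := by
      rcases hc with h | h
      · exact ⟨a, ⟨le_rfl, hav.le⟩, h⟩
      · exact h
    obtain ⟨d, hd, hdz, hdl⟩ := last_hit f hf t v z ht.2 htz hfv.le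
    have hdv : d < v := by
      rcases hd.2.lt_or_eq with h | h
      · exact h
      · rw [h] at hdz; linarith
    refine final_step f hf z d v e hdv hve heI.2 ?_ (by rw [hdz, hz]; exact heI.2)
      (by rw [hffv]; linarith [ht.1, hd.1]) he' n hn
    intro s hs
    rcases le_total s v with h | h
    · exact hdl s h hs.1
    · exact hfe s h hs.2
  · push Not at hc
    have hall : ∀ t, a ≤ t → t < e → z < f t := by
      intro t h1 h2
      rcases le_total t v with h | h
      · exact hc.2 t ⟨h1, h⟩
      · exact hfe t h h2
    by_cases hc2 : ∃ d ∈ Set.Icc a v, e ≤ f (f d)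
    · obtain ⟨d, hd, hde⟩ := hc2
      have hdv : d < v := by
        rcases hd.2.lt_or_eq with h | h
        · exact h
        · rw [h, hffv] at hde; linarith
      exact final_step f hf z d v e hdv hve heI.2
        (fun s hs => hall s (hd.1.trans hs.1.le) hs.2) hde (by rw [hffv]; exact hd.1) he' n hn
    · exfalso
      push Not at hc2
      have hlt : ∀ j, f^[2 * j] a < e := by
        intro j
        induction j with
        | zero => simp only [Nat.mul_zero, Function.iterate_zero, id]; linarith
        | succ j ih =>
          rw [show 2 * (j + 1) = (2 * j + 1) + 1 by ring, Function.iterate_succ_apply',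
            Function.iterate_succ_apply']
          rcases le_total (f^[2 * j] a) v with h | h
          · exact hc2 _ ⟨hmin _, h⟩
          · have := hel _ h ih
            linarith
      obtain ⟨j, rfl⟩ := hodd
      have := hall _ (hmin (2 * j)) (hlt j)
      have h5 : f (f^[2 * j] a) = a := (Function.iterate_succ_apply' f (2 * j) a).symm.trans ha
      linarith [hmin 0]

lemma main_cont (f : ℝ → ℝ) (hf : Continuous f) (m : ℕ) (hm : 3 ≤ m) (hodd : Odd m) (x : ℝ)
    (hx : PeriodPt f m x) (n : ℕ) (hn : 2 ≤ n) : ∃ y, PeriodPt f (2 * n) y := by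
  obtain ⟨hx1, hx2⟩ := hx
  obtain ⟨k, hk, hkmin⟩ := Finset.exists_min_image (Finset.range m) (fun i => f^[i] x)
    ⟨0, by simp; omega⟩
  simp only [Finset.mem_range] at hk hkmin
  have hmod : ∀ j, f^[j] x = f^[j % m] x := fun j =>
    ((show Function.IsPeriodicPt f m x from hx1).iterate_mod_apply j).symm
  obtain ⟨a, ha⟩ : ∃ a, a = f^[k] x := ⟨_, rfl⟩
  have hmin : ∀ j, a ≤ f^[j] a := by
    intro j
    rw [ha, ← Function.iterate_add_apply, hmod (j + k)]
    exact hkmin _ (Nat.mod_lt _ (by omega))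
  have ham : f^[m] a = a := by
    rw [ha, ← Function.iterate_add_apply, Nat.add_comm, Function.iterate_add_apply, hx1]
  have hxa : f^[m - k] a = x := by
    rw [ha, ← Function.iterate_add_apply, Nat.sub_add_cancel hk.le, hx1]
  have hfa : f a ≠ a := by
    intro h
    rw [Function.iterate_fixed h] at hxa
    apply hx2 1 (by omega) (by omega)
    rw [← hxa]; exact h
  have hffa : f (f a) ≠ a := by
    intro h
    obtain ⟨j, rfl⟩ := hodd
    apply hfa
    have h5 : f (f^[2 * j] a) = a := (Function.iterate_succ_apply' f (2 * j) a).symm.trans ham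
    rw [Function.iterate_mul, Function.iterate_fixed (show f^[2] a = a from h)] at h5
    exact h5
  obtain ⟨b, hb⟩ : ∃ b, b = f^[m-1] a := ⟨_, rfl⟩
  have hfb : f b = a := by
    rw [hb, ← Function.iterate_succ_apply' f, show (m - 1).succ = m by omega, ham]
  have hab : a < b := by
    refine lt_of_le_of_ne (by rw [hb]; exact hmin _) ?_
    intro h
    rw [← h] at hfb
    exact hfa hfb
  obtain ⟨t, ht, htb⟩ : ∃ t ∈ Set.Icc a b, b ≤ f t := by
    by_contra hcon
    push Not at hcon
    have : ∀ j, f^[j] a < b := by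
      intro j
      induction j with
      | zero => exact hab
      | succ j ih =>
        rw [Function.iterate_succ_apply']
        exact hcon _ ⟨hmin j, ih.le⟩
    have := this (m - 1)
    linarith
  have htb' : t < b := by
    rcases ht.2.lt_or_eq with h | h
    · exact h
    · rw [h] at htb; linarith
  obtain ⟨z, hz, hz0⟩ := intermediate_value_Icc' htb'.le
    (show Continuous (fun u => f u - u) by fun_prop).continuousOn
    (show (0:ℝ) ∈ Set.Icc (f b - b) (f t - t) from ⟨by linarith, by linarith⟩)
  have hz1 : f z = z := by linarith
  have hzb : z < b := by
    rcases hz.2.lt_or_eq with h | h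
    · exact h
    · rw [h] at hz1; linarith
  obtain ⟨v, hv, hvb⟩ := intermediate_value_Icc' hz.1 hf.continuousOn
    (show b ∈ Set.Icc (f z) (f t) from ⟨by linarith, htb⟩)
  have hvz : v < z := by
    rcases hv.2.lt_or_eq with h | h
    · exact h
    · rw [h] at hvb; linarith
  have hffv : f (f v) = a := by rw [hvb, hfb]
  have hav : a < v := by
    refine lt_of_le_of_ne (ht.1.trans hv.1) ?_
    intro h
    rw [← h] at hffv
    exact hffa hffv
  exact key f hf z a v m hodd ham hmin hav hvz hz1 (by linarith) hffv n hn

theorem odd_period_implies_period_six_and_double (a b : ℝ) (hab : a ≤ b) (f : ℝ → ℝ)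
    (hcont : ContinuousOn f (Set.Icc a b))
    (hmaps : Set.MapsTo f (Set.Icc a b) (Set.Icc a b))
    (m : ℕ) (hm : 3 ≤ m) (hodd : Odd m)
    (x : ℝ) (hx : x ∈ Set.Icc a b) (hper : PeriodPt f m x) :
    (∃ y ∈ Set.Icc a b, PeriodPt f 6 y) ∧ (∃ z ∈ Set.Icc a b, PeriodPt f (2 * m) z) := by
  obtain ⟨F, hF⟩ : ∃ F : ℝ → ℝ, F = fun t => f (Set.projIcc a b hab t) := ⟨_, rfl⟩
  have hFc : Continuous F := by
    rw [hF]
    exact hcont.comp_continuous (continuous_subtype_val.comp continuous_projIcc)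
      (fun t => (Set.projIcc a b hab t).2)
  have hFm : ∀ t, F t ∈ Set.Icc a b := by
    intro t
    rw [hF]
    exact hmaps (Set.projIcc a b hab t).2
  have hFe : ∀ t ∈ Set.Icc a b, F t = f t := by
    intro t ht
    rw [hF]
    simp only [Set.projIcc_of_mem hab ht]
  have hit : ∀ t ∈ Set.Icc a b, ∀ j, F^[j] t = f^[j] t ∧ f^[j] t ∈ Set.Icc a b := by
    intro t ht j
    induction j with
    | zero => exact ⟨rfl, ht⟩
    | succ j ih =>
      rw [Function.iterate_succ_apply', Function.iterate_succ_apply', ih.1]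
      exact ⟨hFe _ ih.2, hmaps ih.2⟩
  have hP : ∀ t ∈ Set.Icc a b, ∀ k, PeriodPt F k t ↔ PeriodPt f k t := by
    intro t ht k
    unfold PeriodPt
    simp only [(hit t ht _).1]
  have main : ∀ n, 2 ≤ n → ∃ y ∈ Set.Icc a b, PeriodPt f (2 * n) y := by
    intro n hn
    obtain ⟨y, hy⟩ := main_cont F hFc m hm hodd x ((hP x hx m).2 hper) n hn
    have hyI : y ∈ Set.Icc a b := by
      rw [← hy.1, show 2 * n = (2 * n - 1) + 1 by omega, Function.iterate_succ_apply']
      exact hFm _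
    exact ⟨y, hyI, (hP y hyI _).1 hy⟩
  exact ⟨main 3 (by omega), main m (by omega)⟩
end

section
/- Let J and L be closed subintervals of I with f(J) ⊇ L. Then there exists a closed subinterval K of J such that f(K) = L. -/
theorem exact_image_aux (f : ℝ → ℝ) (u v e g : ℝ) (huv : u ≤ v) (heg : e ≤ g)
    (hf : ContinuousOn f (Set.Icc u v)) (hu : f u = e) (hv : f v = g) :
    ∃ p q : ℝ, u ≤ p ∧ p ≤ q ∧ q ≤ v ∧ f '' Set.Icc p q = Set.Icc e g := by
  have hc1 : IsCompact (Set.Icc u v ∩ f ⁻¹' {g}) :=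
    isCompact_Icc.of_isClosed_subset
      (hf.preimage_isClosed_of_isClosed isClosed_Icc isClosed_singleton) Set.inter_subset_left
  obtain ⟨q, ⟨⟨huq, hqv⟩, hq⟩, hqmin⟩ := hc1.exists_isLeast ⟨v, ⟨huv, le_rfl⟩, hv⟩
  have hf2 : ContinuousOn f (Set.Icc u q) := hf.mono (Set.Icc_subset_Icc le_rfl hqv)
  have hc2 : IsCompact (Set.Icc u q ∩ f ⁻¹' {e}) :=
    isCompact_Icc.of_isClosed_subset
      (hf2.preimage_isClosed_of_isClosed isClosed_Icc isClosed_singleton) Set.inter_subset_left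
  obtain ⟨p, ⟨⟨hup, hpq⟩, hp⟩, hpmax⟩ := hc2.exists_isGreatest ⟨u, ⟨le_rfl, huq⟩, hu⟩
  have hq' : f q = g := hq
  have hp' : f p = e := hp
  refine ⟨p, q, hup, hpq, hqv, Set.Subset.antisymm ?_ ?_⟩
  · rintro _ ⟨x, ⟨hpx, hxq⟩, rfl⟩
    constructor
    · by_contra! h
      obtain ⟨y, ⟨hxy, hyq⟩, hy⟩ := intermediate_value_Icc hxq
        (hf2.mono (Set.Icc_subset_Icc (hup.trans hpx) le_rfl))
        (show e ∈ Set.Icc (f x) (f q) from ⟨h.le, hq'.symm ▸ heg⟩)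
      have h1 : y ≤ p := hpmax ⟨⟨hup.trans (hpx.trans hxy), hyq⟩, hy⟩
      have h2 : x = p := le_antisymm (hxy.trans h1) hpx
      rw [h2, hp'] at h
      exact lt_irrefl _ h
    · by_contra! h
      obtain ⟨y, ⟨hpy, hyx⟩, hy⟩ := intermediate_value_Icc hpx
        (hf2.mono (Set.Icc_subset_Icc hup hxq))
        (show g ∈ Set.Icc (f p) (f x) from ⟨hp'.symm ▸ heg, h.le⟩)
      have h1 : q ≤ y := hqmin ⟨⟨hup.trans hpy, hyx.trans (hxq.trans hqv)⟩, hy⟩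
      have h2 : x = q := le_antisymm hxq (h1.trans hyx)
      rw [h2, hq'] at h
      exact lt_irrefl _ h
  · have := intermediate_value_Icc hpq (hf2.mono (Set.Icc_subset_Icc hup le_rfl))
    rwa [hp', hq'] at this

theorem exists_subinterval_with_exact_image (a b : ℝ) (hab : a ≤ b) (f : ℝ → ℝ)
    (hcont : ContinuousOn f (Set.Icc a b))
    (hmaps : Set.MapsTo f (Set.Icc a b) (Set.Icc a b))
    (c d e g : ℝ) (hac : a ≤ c) (hcd : c ≤ d) (hdb : d ≤ b)
    (hae : a ≤ e) (heg : e ≤ g) (hgb : g ≤ b)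
    (hcover : Set.Icc e g ⊆ f '' Set.Icc c d) :
    ∃ p q : ℝ, c ≤ p ∧ p ≤ q ∧ q ≤ d ∧ f '' Set.Icc p q = Set.Icc e g := by
  obtain ⟨u, ⟨hcu, hud⟩, hu⟩ := hcover ⟨le_rfl, heg⟩
  obtain ⟨v, ⟨hcv, hvd⟩, hv⟩ := hcover ⟨heg, le_rfl⟩
  rcases le_total u v with h | h
  · obtain ⟨p, q, h1, h2, h3, h4⟩ := exact_image_aux f u v e g h heg
      (hcont.mono (Set.Icc_subset_Icc (hac.trans hcu) (hvd.trans hdb))) hu hv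
    exact ⟨p, q, hcu.trans h1, h2, h3.trans hvd, h4⟩
  · obtain ⟨p, q, h1, h2, h3, h4⟩ := exact_image_aux (fun x => - f x) v u (-g) (-e) h
      (neg_le_neg heg)
      (hcont.mono (Set.Icc_subset_Icc (hac.trans hcv) (hud.trans hdb))).neg
      (by simp [hv]) (by simp [hu])
    refine ⟨p, q, hcv.trans h1, h2, h3.trans hud, ?_⟩
    have h5 : f '' Set.Icc p q = Neg.neg '' ((fun x => - f x) '' Set.Icc p q) := by
      rw [Set.image_image]; simp
    rw [h5, h4]
    simp
end

section
/- Let J_0, J_1, …, J_{n-1}, J_n be closed subintervals of I with J_n = J_0 such that f(J_i) ⊇ J_{i+1} for i = 0, 1, …, n−1. Then there exists a point y ∈ J_0 such that f^i(y) ∈ J_i for i = 0, 1, …, n−1 and f^n(y) = y. -/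
theorem aux_image_Icc (g : ℝ → ℝ) (x y : ℝ) (hxy : x ≤ y) (hg : ContinuousOn g (Set.Icc x y))
    (huv : g x ≤ g y) :
    ∃ p q, x ≤ p ∧ p ≤ q ∧ q ≤ y ∧ g '' Set.Icc p q = Set.Icc (g x) (g y) := by
  have hK1 : IsCompact (Set.Icc x y ∩ g ⁻¹' {g x}) :=
    isCompact_Icc.of_isClosed_subset
      (hg.preimage_isClosed_of_isClosed isClosed_Icc isClosed_singleton) Set.inter_subset_left
  obtain ⟨p, ⟨⟨hxp, hpy⟩, hgp⟩, hpmax⟩ := hK1.exists_isGreatest ⟨x, ⟨le_rfl, hxy⟩, rfl⟩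
  have hgp' : g p = g x := hgp
  have hg2 : ContinuousOn g (Set.Icc p y) := hg.mono (Set.Icc_subset_Icc_left hxp)
  have hK2 : IsCompact (Set.Icc p y ∩ g ⁻¹' {g y}) :=
    isCompact_Icc.of_isClosed_subset
      (hg2.preimage_isClosed_of_isClosed isClosed_Icc isClosed_singleton) Set.inter_subset_left
  obtain ⟨q, ⟨⟨hpq, hqy⟩, hgq⟩, hqmin⟩ := hK2.exists_isLeast ⟨y, ⟨hpy, le_rfl⟩, rfl⟩
  have hgq' : g q = g y := hgq
  refine ⟨p, q, hxp, hpq, hqy, Set.Subset.antisymm ?_ ?_⟩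
  · rintro _ ⟨t, ⟨hpt, htq⟩, rfl⟩
    constructor
    · by_contra! hlt
      obtain ⟨s, ⟨hts, hsq⟩, hs⟩ := intermediate_value_Icc htq
        (hg2.mono (Set.Icc_subset_Icc hpt hqy)) (show g x ∈ Set.Icc (g t) (g q) from
          ⟨hlt.le, hgq' ▸ huv⟩)
      have hsp : s ≤ p := hpmax ⟨⟨by linarith, by linarith⟩, hs⟩
      have : t = p := by linarith
      rw [this] at hlt
      linarith
    · by_contra! hlt
      obtain ⟨s, ⟨hps, hst⟩, hs⟩ := intermediate_value_Icc hpt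
        (hg2.mono (Set.Icc_subset_Icc le_rfl (htq.trans hqy)))
        (show g y ∈ Set.Icc (g p) (g t) from ⟨hgp' ▸ huv, hlt.le⟩)
      have hqs : q ≤ s := hqmin ⟨⟨by linarith, by linarith⟩, hs⟩
      have : t = q := by linarith
      rw [this] at hlt
      linarith
  · have := intermediate_value_Icc hpq (hg2.mono (Set.Icc_subset_Icc le_rfl hqy))
    rwa [hgp', hgq'] at this

theorem aux_image_Icc' (g : ℝ → ℝ) (p q u v : ℝ) (hg : ContinuousOn g (Set.Icc p q))
    (huv : u ≤ v) (h : Set.Icc u v ⊆ g '' Set.Icc p q) :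
    ∃ p' q', p ≤ p' ∧ p' ≤ q' ∧ q' ≤ q ∧ g '' Set.Icc p' q' = Set.Icc u v := by
  obtain ⟨x, ⟨hpx, hxq⟩, rfl⟩ := h ⟨le_rfl, huv⟩
  obtain ⟨y, ⟨hpy, hyq⟩, rfl⟩ := h ⟨huv, le_rfl⟩
  rcases le_total x y with hxy | hxy
  · obtain ⟨p', q', h1, h2, h3, h4⟩ :=
      aux_image_Icc g x y hxy (hg.mono (Set.Icc_subset_Icc hpx hyq)) huv
    exact ⟨p', q', by linarith, h2, by linarith, h4⟩
  · obtain ⟨p', q', h1, h2, h3, h4⟩ :=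
      aux_image_Icc (fun t => - g t) y x hxy (hg.mono (Set.Icc_subset_Icc hpy hxq)).neg
        (neg_le_neg huv)
    refine ⟨p', q', by linarith, h2, by linarith, ?_⟩
    have h5 : (fun t : ℝ => -t) '' ((fun t => - g t) '' Set.Icc p' q') = g '' Set.Icc p' q' := by
      rw [Set.image_image]; simp
    rw [← h5, h4]
    simp

theorem cycle_of_intervals_gives_periodic_point (a b : ℝ) (hab : a ≤ b) (f : ℝ → ℝ)
    (hcont : ContinuousOn f (Set.Icc a b))
    (hmaps : Set.MapsTo f (Set.Icc a b) (Set.Icc a b))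
    (n : ℕ) (hn : 0 < n) (c d : ℕ → ℝ)
    (hsub : ∀ i ≤ n, a ≤ c i ∧ c i ≤ d i ∧ d i ≤ b)
    (hc : c n = c 0) (hd : d n = d 0)
    (hcyc : ∀ i < n, Set.Icc (c (i + 1)) (d (i + 1)) ⊆ f '' Set.Icc (c i) (d i)) :
    ∃ y ∈ Set.Icc (c 0) (d 0),
      (∀ i < n, f^[i] y ∈ Set.Icc (c i) (d i)) ∧ f^[n] y = y := by
  have hit : ∀ k, ContinuousOn f^[k] (Set.Icc a b) := fun k => hcont.iterate hmaps k
  have key : ∀ k ≤ n, ∃ p q, c 0 ≤ p ∧ p ≤ q ∧ q ≤ d 0 ∧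
      (∀ i ≤ k, ∀ y ∈ Set.Icc p q, f^[i] y ∈ Set.Icc (c i) (d i)) ∧
      f^[k] '' Set.Icc p q = Set.Icc (c k) (d k) := by
    intro k
    induction k with
    | zero =>
      intro _
      refine ⟨c 0, d 0, le_rfl, (hsub 0 (Nat.zero_le _)).2.1, le_rfl, ?_, by simp⟩
      intro i hi y hy
      obtain rfl : i = 0 := by omega
      simpa using hy
    | succ k ih =>
      intro hk
      obtain ⟨p, q, h1, h2, h3, h4, h5⟩ := ih (by omega)
      have h0 := hsub 0 (Nat.zero_le _)
      have him : Set.Icc (c (k+1)) (d (k+1)) ⊆ f^[k+1] '' Set.Icc p q := by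
        rw [Function.iterate_succ', Set.image_comp, h5]
        exact hcyc k (by omega)
      obtain ⟨p', q', g1, g2, g3, g4⟩ := aux_image_Icc' f^[k+1] p q _ _
        ((hit (k+1)).mono (Set.Icc_subset_Icc (by linarith) (by linarith)))
        (hsub (k+1) hk).2.1 him
      refine ⟨p', q', by linarith, g2, by linarith, ?_, g4⟩
      intro i hi y hy
      rcases Nat.lt_or_ge k i with hki | hki
      · obtain rfl : i = k + 1 := by omega
        rw [← g4]
        exact Set.mem_image_of_mem _ hy
      · exact h4 i hki y (Set.Icc_subset_Icc g1 g3 hy)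
  obtain ⟨p, q, h1, h2, h3, h4, h5⟩ := key n le_rfl
  have h0 := hsub 0 (Nat.zero_le _)
  obtain ⟨y, hy, hfix⟩ := exists_mem_Icc_isFixedPt_of_surjOn
    ((hit n).mono (Set.Icc_subset_Icc (by linarith) (by linarith))) h2
    (show Set.SurjOn f^[n] (Set.Icc p q) (Set.Icc p q) by
      intro z hz
      rw [h5, hc, hd]
      exact Set.Icc_subset_Icc h1 h3 hz)
  exact ⟨y, Set.Icc_subset_Icc h1 h3 hy, fun i hi => h4 i hi.le y hy, hfix⟩
end

section
/- Suppose there exist a point c ∈ I, a fixed point z of f, and an integer k ≥ 2 such that f(c) < c < z ≤ f^k(c). Then there exist a point d ∈ I and a fixed point ẑ of f such that f(d) < d < ẑ ≤ f^2(d); moreover f is turbulent and f has periodic points of all (least) periods n ≥ 1. -/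
/-- `f` is turbulent on `[a, b]`: there are two closed subintervals with at most one point in
common such that `f(I₀) ∩ f(I₁) ⊇ I₀ ∪ I₁`. -/
def Turbulent (f : ℝ → ℝ) (a b : ℝ) : Prop :=
  ∃ p q r s : ℝ, a ≤ p ∧ p ≤ q ∧ q ≤ b ∧ a ≤ r ∧ r ≤ s ∧ s ≤ b ∧
    (Set.Icc p q ∩ Set.Icc r s).Subsingleton ∧
    Set.Icc p q ∪ Set.Icc r s ⊆ f '' Set.Icc p q ∩ f '' Set.Icc r s

open Set

lemma last_pt {g : ℝ → ℝ} {p q v : ℝ} (hpq : p ≤ q) (hg : ContinuousOn g (Icc p q))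
    (h1 : g p ≤ v) (h2 : v ≤ g q) :
    ∃ t ∈ Icc p q, g t = v ∧ ∀ x ∈ Icc t q, v ≤ g x := by
  have hcl : IsClosed (Icc p q ∩ g ⁻¹' Iic v) :=
    hg.preimage_isClosed_of_isClosed isClosed_Icc isClosed_Iic
  have hcp : IsCompact (Icc p q ∩ g ⁻¹' Iic v) :=
    isCompact_Icc.of_isClosed_subset hcl inter_subset_left
  obtain ⟨t, ⟨ht, htv⟩, hmax⟩ := hcp.exists_isGreatest ⟨p, ⟨le_rfl, hpq⟩, h1⟩
  have htv' : g t ≤ v := htv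
  have heq : g t = v := by
    obtain ⟨t', ht', h⟩ := intermediate_value_Icc ht.2 (hg.mono (Icc_subset_Icc_left ht.1))
      ⟨htv', h2⟩
    have : t' ≤ t := hmax ⟨⟨ht.1.trans ht'.1, ht'.2⟩, (le_of_eq h : g t' ≤ v)⟩
    have : t' = t := le_antisymm this ht'.1
    rw [← this, h]
  refine ⟨t, ht, heq, fun x hx => ?_⟩
  by_contra hlt
  push Not at hlt
  have : x ≤ t := hmax ⟨⟨ht.1.trans hx.1, hx.2⟩, (hlt.le : g x ≤ v)⟩
  have : x = t := le_antisymm this hx.1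
  rw [this, heq] at hlt
  exact lt_irrefl _ hlt

lemma first_pt {g : ℝ → ℝ} {p q v : ℝ} (hpq : p ≤ q) (hg : ContinuousOn g (Icc p q))
    (h1 : v ≤ g p) (h2 : g q ≤ v) :
    ∃ t ∈ Icc p q, g t = v ∧ ∀ x ∈ Icc p t, v ≤ g x := by
  have hg' : ContinuousOn (fun x => g (-x)) (Icc (-q) (-p)) := by
    refine hg.comp continuous_neg.continuousOn ?_
    intro x hx
    exact ⟨by linarith [hx.2], by linarith [hx.1]⟩
  obtain ⟨t, ht, h, hx⟩ := last_pt (v := v) (neg_le_neg hpq) hg' (by simpa using h2)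
    (by simpa using h1)
  refine ⟨-t, ⟨by linarith [ht.2], by linarith [ht.1]⟩, h, fun x hx' => ?_⟩
  simpa using hx (-x) ⟨by linarith [hx'.2], by linarith [hx'.1]⟩

/-- Least fixed point to the right of a point moved to the left. -/
lemma least_fix {f : ℝ → ℝ} {c z : ℝ} (hcz : c < z) (hf : ContinuousOn f (Icc c z))
    (h1 : f c < c) (hz : f z = z) :
    ∃ w, c < w ∧ w ≤ z ∧ f w = w ∧ ∀ x ∈ Icc c w, f x ≤ x := by
  obtain ⟨w, hw, h, hx⟩ := first_pt (g := fun x => x - f x) (v := 0) hcz.le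
    (continuousOn_id.sub hf) (by simp [h1.le]) (by simp [hz])
  have hfw : f w = w := by linarith
  refine ⟨w, lt_of_le_of_ne hw.1 ?_, hw.2, hfw, fun x hx' => by
    have := hx x hx'; linarith⟩
  rintro rfl
  linarith

lemma exists_d (a b : ℝ) (f : ℝ → ℝ)
    (hcont : ContinuousOn f (Icc a b)) (hmaps : MapsTo f (Icc a b) (Icc a b)) (k : ℕ) :
    ∀ c z : ℝ, c ∈ Icc a b → z ∈ Icc a b → f z = z → 2 ≤ k → f c < c → c < z → z ≤ f^[k] c →
    ∃ d ∈ Icc a b, ∃ w ∈ Icc a b, f w = w ∧ f d < d ∧ d < w ∧ w ≤ f^[2] d := by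
  induction k using Nat.strong_induction_on with
  | _ k ih =>
  intro c z0 hc hz0 hfz0 hk h1 hcz0 h30
  obtain ⟨z, hcz, hzz0, hfz, hle⟩ :=
    least_fix hcz0 (hcont.mono (Icc_subset_Icc hc.1 hz0.2)) h1 hfz0
  have h3 : z ≤ f^[k] c := hzz0.trans h30
  have hz : z ∈ Icc a b := ⟨hc.1.trans hcz.le, hzz0.trans hz0.2⟩
  by_cases hA : ∃ j, j < k ∧ z ≤ f^[j] c
  · obtain ⟨j, hj, hzj⟩ := hA
    refine ih j hj c z hc hz hfz ?_ h1 hcz hzj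
    rcases j with _ | _ | j
    · simp at hzj; linarith
    · simp at hzj; linarith
    · omega
  push Not at hA
  by_cases hB : ∃ i, 1 ≤ i ∧ i + 2 ≤ k ∧ f^[i+1] c < f^[i] c
  · obtain ⟨i, hi, hik, hlt⟩ := hB
    refine ih (k - i) (by omega) (f^[i] c) z (hmaps.iterate i hc) hz hfz (by omega) ?_
      (hA i (by omega)) ?_
    · rwa [← Function.iterate_succ_apply' f]
    · rw [← Function.iterate_add_apply]
      rwa [Nat.sub_add_cancel (by omega)]
  push Not at hB
  have hmono : ∀ j, j + 2 ≤ k → f c ≤ f^[j+1] c := by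
    intro j
    induction j with
    | zero => intro _; simp
    | succ j ihj => intro h; exact (ihj (by omega)).trans (hB (j+1) (by omega) (by omega))
  obtain ⟨m, rfl⟩ : ∃ m, k = m + 2 := ⟨k - 2, by omega⟩
  set x := f^[m+1] c with hx
  have hfx : z ≤ f x := by
    rw [hx, ← Function.iterate_succ_apply' f]; exact h3
  have hxz : x < z := hA (m+1) (by omega)
  have hxc : x < c := by
    by_contra h
    push Not at h
    linarith [hle x ⟨h, hxz.le⟩]
  have hx1 : f c ≤ x := hmono m le_rfl
  obtain ⟨d, hd, hfd⟩ := intermediate_value_Icc hcz.le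
    (hcont.mono (Icc_subset_Icc hc.1 hz.2)) (⟨hx1, by rw [hfz]; exact hxz.le⟩ : x ∈ Icc (f c) (f z))
  refine ⟨d, ⟨hc.1.trans hd.1, hd.2.trans hz.2⟩, z, hz, hfz, by linarith [hd.1], ?_, ?_⟩
  · refine lt_of_le_of_ne hd.2 ?_
    rintro rfl
    linarith
  · change z ≤ f (f d)
    rwa [hfd]

lemma exists_p (f : ℝ → ℝ) (d z : ℝ) (hdz : d < z) (hf : ContinuousOn f (Icc d z))
    (hfz : f z = z) (h1 : f d < d) (hle : ∀ x ∈ Icc d z, f x ≤ x) (m : ℕ) :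
    ∃ p ∈ Icc d z, f^[m] p = d ∧ ∀ x ∈ Icc p z, ∀ i ≤ m, f^[i] x ∈ Icc d z := by
  induction m with
  | zero =>
    refine ⟨d, ⟨le_rfl, hdz.le⟩, rfl, fun x hx i hi => ?_⟩
    obtain rfl : i = 0 := by omega
    exact hx
  | succ m ih =>
    obtain ⟨p, hp, hpd, hpx⟩ := ih
    obtain ⟨t, ht, hft, htx⟩ := last_pt (v := p) hdz.le hf (by linarith [hp.1])
      (by rw [hfz]; exact hp.2)
    refine ⟨t, ht, ?_, fun x hx i hi => ?_⟩
    · rw [Function.iterate_succ_apply, hft, hpd]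
    · have hxd : x ∈ Icc d z := ⟨ht.1.trans hx.1, hx.2⟩
      rcases i with _ | i
      · exact hxd
      · rw [Function.iterate_succ_apply]
        exact hpx _ ⟨htx x hx, (hle x hxd).trans hx.2⟩ i (by omega)

theorem turbulence_from_orbit_data (a b : ℝ) (hab : a ≤ b) (f : ℝ → ℝ)
    (hcont : ContinuousOn f (Set.Icc a b))
    (hmaps : Set.MapsTo f (Set.Icc a b) (Set.Icc a b))
    (c z : ℝ) (hc : c ∈ Set.Icc a b) (hz : z ∈ Set.Icc a b) (hfz : f z = z)
    (k : ℕ) (hk : 2 ≤ k)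
    (h1 : f c < c) (h2 : c < z) (h3 : z ≤ f^[k] c) :
    (∃ d ∈ Set.Icc a b, ∃ w ∈ Set.Icc a b, f w = w ∧ f d < d ∧ d < w ∧ w ≤ f^[2] d) ∧
      Turbulent f a b ∧ ∀ n : ℕ, 1 ≤ n → ∃ x ∈ Set.Icc a b, PeriodPt f n x := by
  have hD := exists_d a b f hcont hmaps k c z hc hz hfz hk h1 h2 h3
  refine ⟨hD, ?_⟩
  obtain ⟨d, hd, w0, hw0, hfw0, hfd, hdw0, hw0f⟩ := hD
  obtain ⟨w, hdw, hww0, hfw, hle⟩ :=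
    least_fix hdw0 (hcont.mono (Icc_subset_Icc hd.1 hw0.2)) hfd hfw0
  have hw : w ∈ Icc a b := ⟨hd.1.trans hdw.le, hww0.trans hw0.2⟩
  have hwf : w ≤ f (f d) := hww0.trans hw0f
  have hy : f d ∈ Icc a b := hmaps hd
  have hc0 : ContinuousOn f (Icc (f d) d) := hcont.mono (Icc_subset_Icc hy.1 hd.2)
  have hc1 : ContinuousOn f (Icc d w) := hcont.mono (Icc_subset_Icc hd.1 hw.2)
  constructor
  · refine ⟨f d, d, d, w, hy.1, hfd.le, hd.2, hd.1, hdw.le, hw.2, ?_, ?_⟩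
    · rintro x ⟨hx1, hx2⟩ x' ⟨hx1', hx2'⟩
      linarith [hx1.2, hx2.1, hx1'.2, hx2'.1]
    · have key : ∀ x, f d ≤ x → x ≤ w → x ∈ f '' Icc (f d) d ∩ f '' Icc d w := by
        intro x hx hx'
        refine ⟨intermediate_value_Icc' hfd.le hc0 ⟨hx, hx'.trans hwf⟩,
          intermediate_value_Icc hdw.le hc1 ⟨hx, by rwa [hfw]⟩⟩
      rintro x (hx | hx)
      · exact key x hx.1 (hx.2.trans hdw.le)
      · exact key x (hfd.le.trans hx.1) hx.2
  · intro n hn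
    obtain rfl | ⟨m, rfl⟩ : n = 1 ∨ ∃ m, n = m + 2 := by
      rcases n with _ | _ | n
      · omega
      · exact Or.inl rfl
      · exact Or.inr ⟨n, rfl⟩
    · exact ⟨w, hw, hfw, fun i hi hi' => by omega⟩
    obtain ⟨p, hp, hpd, hpx⟩ := exists_p f d w hdw hc1 hfw hfd hle m
    obtain ⟨s, hs, hfs, hsx⟩ := last_pt (g := fun x => - f x) (v := -w) hfd.le hc0.neg
      (by simpa using hwf) (by linarith)
    have hfs' : f s = w := by simpa using hfs
    obtain ⟨t, ht, hft, htx⟩ := first_pt (v := p) hs.2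
      (hc0.mono (Icc_subset_Icc_left hs.1)) (by rw [hfs']; exact hp.2) (by linarith [hp.1])
    have hst : Icc s t ⊆ Icc (f d) d := Icc_subset_Icc hs.1 ht.2
    have hst' : Icc s t ⊆ Icc a b := hst.trans (Icc_subset_Icc hy.1 hd.2)
    have hcn : ContinuousOn (f^[m+2]) (Icc a b) := hcont.iterate hmaps (m+2)
    have hns : f^[m+2] s = w := by
      rw [Function.iterate_succ_apply, hfs']
      exact Function.iterate_fixed hfw _
    have hnt : f^[m+2] t = f d := by
      rw [Function.iterate_succ_apply, hft, Function.iterate_succ_apply', hpd]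
    obtain ⟨x, hx, hxe, -⟩ := first_pt (g := fun x => f^[m+2] x - x) (v := 0) ht.1
      ((hcn.mono hst').sub continuousOn_id)
      (by simp only [hns]; linarith [hs.2]) (by simp only [hnt]; linarith [hs.1, ht.1])
    have hfx : f x ∈ Icc p w := ⟨htx x hx, by
      have := hsx x ⟨hx.1, hx.2.trans ht.2⟩; linarith⟩
    refine ⟨x, hst' hx, by linarith, fun i hi hin heq => ?_⟩
    obtain ⟨j, rfl⟩ : ∃ j, i = j + 1 := ⟨i - 1, by omega⟩
    have hj := hpx _ hfx j (by omega)
    rw [← Function.iterate_succ_apply f, heq] at hj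
    have hxd : x = d := le_antisymm (hst hx).2 hj.1
    rw [hxd] at hfx
    linarith [hfx.1, hp.1]
end

section
/- Suppose there exist a point c ∈ I, a fixed point z of f, and an integer k ≥ 2 such that f(c) < c < z < f^k(c). Then there exist a point d ∈ I and a fixed point ẑ of f such that f(d) < d < ẑ < f^2(d); moreover f is strictly turbulent and f has periodic points of all (least) periods n ≥ 1. -/
/-- `f` is strictly turbulent on `[a, b]`: there are two disjoint closed subintervals such that
`f(I₀) ∩ f(I₁) ⊇ I₀ ∪ I₁`. -/
def StrictlyTurbulent (f : ℝ → ℝ) (a b : ℝ) : Prop :=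
  ∃ p q r s : ℝ, a ≤ p ∧ p ≤ q ∧ q ≤ b ∧ a ≤ r ∧ r ≤ s ∧ s ≤ b ∧
    Disjoint (Set.Icc p q) (Set.Icc r s) ∧
    Set.Icc p q ∪ Set.Icc r s ⊆ f '' Set.Icc p q ∩ f '' Set.Icc r s

/-- Covering lemma, decreasing orientation. -/
lemma cover_aux (g : ℝ → ℝ) (u v r s : ℝ) (huv : u ≤ v) (hg : ContinuousOn g (Set.Icc u v))
    (hrs : r < s) (hu : s ≤ g u) (hv : g v ≤ r) :
    ∃ u' v', u ≤ u' ∧ u' ≤ v' ∧ v' ≤ v ∧ g u' = s ∧ g v' = r ∧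
      ∀ x ∈ Set.Icc u' v', g x ∈ Set.Icc r s := by
  have hK : IsCompact (Set.Icc u v ∩ g ⁻¹' {s}) :=
    isCompact_Icc.of_isClosed_subset (hg.preimage_isClosed_of_isClosed isClosed_Icc
      isClosed_singleton) Set.inter_subset_left
  obtain ⟨x0, hx0, hx0'⟩ := intermediate_value_Icc' huv hg ⟨hv.trans hrs.le, hu⟩
  obtain ⟨u', ⟨hu'1, hu'2⟩, hu'3⟩ := hK.exists_isGreatest ⟨x0, hx0, hx0'⟩
  have hg' : ContinuousOn g (Set.Icc u' v) := hg.mono (Set.Icc_subset_Icc hu'1.1 le_rfl)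
  have hu'4 : g u' = s := hu'2
  have hK' : IsCompact (Set.Icc u' v ∩ g ⁻¹' {r}) :=
    isCompact_Icc.of_isClosed_subset (hg'.preimage_isClosed_of_isClosed isClosed_Icc
      isClosed_singleton) Set.inter_subset_left
  obtain ⟨y0, hy0, hy0'⟩ := intermediate_value_Icc' hu'1.2 hg' ⟨hv, by rw [hu'4]; exact hrs.le⟩
  obtain ⟨v', ⟨hv'1, hv'2⟩, hv'3⟩ := hK'.exists_isLeast ⟨y0, hy0, hy0'⟩
  have hv'4 : g v' = r := hv'2
  refine ⟨u', v', hu'1.1, hv'1.1, hv'1.2, hu'4, hv'4, fun x hx => ⟨?_, ?_⟩⟩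
  · by_contra! hlt
    obtain ⟨t, ht, ht'⟩ := intermediate_value_Icc' hx.1
      (hg'.mono (Set.Icc_subset_Icc le_rfl (hx.2.trans hv'1.2))) ⟨hlt.le, by rw [hu'4]; exact hrs.le⟩
    have h1 : v' ≤ t := hv'3 ⟨⟨ht.1, ht.2.trans (hx.2.trans hv'1.2)⟩, ht'⟩
    have h2 : x = v' := le_antisymm hx.2 (h1.trans ht.2)
    rw [h2, hv'4] at hlt
    exact lt_irrefl _ hlt
  · by_contra! hlt
    have hxv : x ≤ v := hx.2.trans hv'1.2
    obtain ⟨t, ht, ht'⟩ := intermediate_value_Icc' hxv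
      (hg'.mono (Set.Icc_subset_Icc hx.1 le_rfl)) ⟨hv.trans hrs.le, hlt.le⟩
    have h1 : t ≤ u' := hu'3 ⟨⟨hu'1.1.trans (hx.1.trans ht.1), ht.2⟩, ht'⟩
    have h2 : x = u' := le_antisymm (ht.1.trans h1) hx.1
    rw [h2, hu'4] at hlt
    exact lt_irrefl _ hlt

theorem strict_turbulence_from_orbit_data (a b : ℝ) (hab : a ≤ b) (f : ℝ → ℝ)
    (hcont : ContinuousOn f (Set.Icc a b))
    (hmaps : Set.MapsTo f (Set.Icc a b) (Set.Icc a b))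
    (c z : ℝ) (hc : c ∈ Set.Icc a b) (hz : z ∈ Set.Icc a b) (hfz : f z = z)
    (k : ℕ) (hk : 2 ≤ k)
    (h1 : f c < c) (h2 : c < z) (h3 : z < f^[k] c) :
    (∃ d ∈ Set.Icc a b, ∃ w ∈ Set.Icc a b, f w = w ∧ f d < d ∧ d < w ∧ w < f^[2] d) ∧
      StrictlyTurbulent f a b ∧ ∀ n : ℕ, 1 ≤ n → ∃ x ∈ Set.Icc a b, PeriodPt f n x := by
  have hit : ∀ n, ∀ x ∈ Set.Icc a b, f^[n] x ∈ Set.Icc a b := fun n x hx => hmaps.iterate n hx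
  have hci : ∀ n, ContinuousOn (f^[n]) (Set.Icc a b) := fun n => hcont.iterate hmaps n
  -- the least fixed point above c
  obtain ⟨w, hcw, hwz, hfw, hmin⟩ : ∃ w, c < w ∧ w ≤ z ∧ f w = w ∧
      ∀ x, c ≤ x → x < w → f x < x := by
    have hcz : ContinuousOn (fun x => f x - x) (Set.Icc c z) :=
      (hcont.mono (Set.Icc_subset_Icc hc.1 hz.2)).sub continuousOn_id
    have hK : IsCompact (Set.Icc c z ∩ (fun x => f x - x) ⁻¹' {0}) :=
      isCompact_Icc.of_isClosed_subset (hcz.preimage_isClosed_of_isClosed isClosed_Icc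
        isClosed_singleton) Set.inter_subset_left
    obtain ⟨w, ⟨hw1, hw2⟩, hw3⟩ := hK.exists_isLeast ⟨z, ⟨h2.le, le_rfl⟩, by simp [hfz]⟩
    have hfw : f w = w := sub_eq_zero.1 hw2
    refine ⟨w, lt_of_le_of_ne hw1.1 ?_, hw1.2, hfw, ?_⟩
    · rintro rfl
      exact h1.ne hfw
    · intro x hx hxw
      by_contra! hle
      obtain ⟨t, ht, ht'⟩ := intermediate_value_Icc hx
        (hcz.mono (Set.Icc_subset_Icc le_rfl (hxw.le.trans hw1.2)))
        (show (0 : ℝ) ∈ _ from ⟨by linarith, by linarith⟩)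
      have := hw3 ⟨⟨ht.1, ht.2.trans (hxw.le.trans hw1.2)⟩, ht'⟩
      linarith [ht.2]
  have hw : w ∈ Set.Icc a b := ⟨hc.1.trans hcw.le, hwz.trans hz.2⟩
  have hex : ∃ m, w < f^[m] c := ⟨k, hwz.trans_lt h3⟩
  -- the last orbit point before exceeding w
  obtain ⟨M, hM1, hM2⟩ : ∃ M, w < f^[M + 1] c ∧ ∀ i ≤ M, f^[i] c < w := by
    classical
    have hs := Nat.find_spec hex
    have hm := fun i (hi : i < Nat.find hex) => not_lt.1 (Nat.find_min hex hi)
    generalize Nat.find hex = m at hs hm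
    cases m with
    | zero => exact absurd hs (not_lt.2 hcw.le)
    | succ M =>
      refine ⟨M, hs, fun i hi => lt_of_le_of_ne (hm i (by omega)) ?_⟩
      intro he
      have : f^[M + 1] c = w := by
        rw [show M + 1 = (M + 1 - i) + i by omega, Function.iterate_add_apply, he]
        exact Function.iterate_fixed hfw _
      exact hs.ne this.symm
  obtain ⟨y, hy⟩ : ∃ y, y = f^[M] c := ⟨_, rfl⟩
  have hyab : y ∈ Set.Icc a b := hy ▸ hit M c hc
  have hyw : y < w := hy ▸ hM2 M le_rfl
  have hfy : w < f y := by rw [hy, ← Function.iterate_succ_apply' f]; exact hM1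
  have hyc : y < c := by
    by_contra! hle
    linarith [hmin y hle hyw]
  -- an orbit point above y mapped to a point at most y
  obtain ⟨e, heab, hye, hew, hfe⟩ : ∃ e ∈ Set.Icc a b, y < e ∧ e < w ∧ f e ≤ y := by
    by_contra! hcon
    have : ∀ i ≤ M, y < f^[i] c := by
      intro i
      induction i with
      | zero => intro _; exact hyc
      | succ i ih =>
        intro hi
        rw [Function.iterate_succ_apply']
        exact hcon _ (hit i c hc) (ih (by omega)) (hM2 i (by omega))
    exact (this M le_rfl).ne hy
  obtain ⟨d, hd, hfd⟩ := intermediate_value_Icc hew.le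
    (hcont.mono (Set.Icc_subset_Icc heab.1 hw.2)) (show y ∈ _ from ⟨hfe, by rw [hfw]; exact hyw.le⟩)
  have hyd : y < d := hye.trans_le hd.1
  have hdw : d < w := lt_of_le_of_ne hd.2 (by rintro rfl; linarith)
  have hdab : d ∈ Set.Icc a b := ⟨heab.1.trans hd.1, hdw.le.trans hw.2⟩
  -- the two intervals [p, q] and [d, w]
  obtain ⟨p, hp, hfp⟩ := intermediate_value_Icc' hyd.le
    (hcont.mono (Set.Icc_subset_Icc hyab.1 hdab.2)) (show w ∈ _ from ⟨by rw [hfd]; exact hyw.le, hfy.le⟩)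
  have hyp : y < p := lt_of_le_of_ne hp.1 (by rintro rfl; linarith)
  obtain ⟨q, hq, hfq⟩ := intermediate_value_Icc' hp.2
    (hcont.mono (Set.Icc_subset_Icc (hyab.1.trans hp.1) hdab.2))
    (show p ∈ _ from ⟨by rw [hfd]; exact hp.1, by rw [hfp]; linarith [hp.2]⟩)
  have hqd : q < d := lt_of_le_of_ne hq.2 (by rintro rfl; linarith)
  have hap : a ≤ p := hyab.1.trans hp.1
  have hqb : q ≤ b := hqd.le.trans hdab.2
  refine ⟨⟨d, hdab, w, hw, hfw, by rw [hfd]; exact hyd, hdw, ?_⟩, ⟨p, q, d, w, hap, hq.1, hqb,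
    hdab.1, hdw.le, hw.2, ?_, ?_⟩, ?_⟩
  · show w < f (f d)
    rw [hfd]; exact hfy
  · rw [Set.disjoint_left]
    intro x hx hx'
    linarith [hx.2, hx'.1]
  · have key : Set.Icc p q ∪ Set.Icc d w ⊆ Set.Icc p w := by
      rintro x (hx | hx)
      · exact ⟨hx.1, by linarith [hx.2]⟩
      · exact ⟨by linarith [hx.1, hq.1], hx.2⟩
    refine key.trans (Set.subset_inter ?_ ?_)
    · have := intermediate_value_Icc' hq.1 (hcont.mono (Set.Icc_subset_Icc hap hqb))
      rwa [hfp, hfq] at this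
    · have := intermediate_value_Icc hdw.le (hcont.mono (Set.Icc_subset_Icc hdab.1 hw.2))
      rw [hfd, hfw] at this
      exact (Set.Icc_subset_Icc hp.1 le_rfl).trans this
  · intro n hn
    have hinv : ∃ u v, p ≤ u ∧ u ≤ v ∧ v ≤ q ∧ f^[n] u = w ∧ f^[n] v ≤ p ∧
        ∀ x ∈ Set.Icc u v, ∀ i, 0 < i → i < n → f^[i] x ∈ Set.Icc d w := by
      induction n, hn using Nat.le_induction with
      | base => exact ⟨p, q, le_rfl, hq.1, le_rfl, hfp, hfq.le, fun x _ i _ _ => by omega⟩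
      | succ n hn ih =>
        obtain ⟨u, v, hpu, huv, hvq, hu, hv, hI⟩ := ih
        obtain ⟨u', v', h1, h2, h3, h4, h5, h6⟩ := cover_aux (f^[n]) u v d w huv
          ((hci n).mono (Set.Icc_subset_Icc (hap.trans hpu) (hvq.trans hqb))) hdw hu.ge
          (hv.trans hp.2)
        refine ⟨u', v', hpu.trans h1, h2, h3.trans hvq, ?_, ?_, ?_⟩
        · rw [Function.iterate_succ_apply', h4, hfw]
        · rw [Function.iterate_succ_apply', h5, hfd]; exact hp.1
        · intro x hx i hi0 hi
          rcases Nat.lt_succ_iff_lt_or_eq.1 hi with hi | rfl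
          · exact hI x ⟨h1.trans hx.1, hx.2.trans h3⟩ i hi0 hi
          · exact h6 x hx
    obtain ⟨u, v, hpu, huv, hvq, hu, hv, hI⟩ := hinv
    have hsub : Set.Icc u v ⊆ Set.Icc a b := Set.Icc_subset_Icc (hap.trans hpu) (hvq.trans hqb)
    obtain ⟨x, hx, hx0⟩ := intermediate_value_Icc' huv
      (((hci n).mono hsub).sub continuousOn_id)
      (show (0 : ℝ) ∈ _ from ⟨by simp only [Pi.sub_apply, id]; linarith,
        by simp only [Pi.sub_apply, id]; linarith⟩)
    refine ⟨x, hsub hx, sub_eq_zero.1 hx0, fun i hi0 hi he => ?_⟩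
    have := (hI x hx i hi0 hi).1
    rw [he] at this
    linarith [hx.2]
end

section
/- Let m ≥ 3 be odd, let P be a period-m orbit of f, and suppose f has no period-ℓ point for any odd ℓ with 1 < ℓ < m. Then P is a Štefan cycle of f, and f has periodic points of all even least periods as well as periodic points of every least period n > m. -/
/-- For odd `m ≥ 3`, `P` is a Štefan cycle of `f` with least period `m`: there is `p ∈ P` with
`f^m(p) = p` whose orbit is ordered as
`f^{m-2}(p) < ⋯ < f^3(p) < f(p) < p < f^2(p) < f^4(p) < ⋯ < f^{m-1}(p)`
or as its mirror image. -/
def IsStefanCycle (f : ℝ → ℝ) (m : ℕ) (P : Set ℝ) : Prop :=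
  ∃ p ∈ P, f^[m] p = p ∧
    (((∀ i : ℕ, Odd i → i + 2 ≤ m - 2 → f^[i + 2] p < f^[i] p) ∧ f p < p ∧
        (∀ i : ℕ, Even i → i + 2 ≤ m - 1 → f^[i] p < f^[i + 2] p)) ∨
      ((∀ i : ℕ, Even i → i + 2 ≤ m - 1 → f^[i + 2] p < f^[i] p) ∧ p < f p ∧
        (∀ i : ℕ, Odd i → i + 2 ≤ m - 2 → f^[i] p < f^[i + 2] p)))

/-- Two preimages can be chosen so that the segment between them maps into the target segment. -/
lemma tighten (g : ℝ → ℝ) (α β : ℝ) (hg : ContinuousOn g (Set.uIcc α β)) :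
    ∃ u ∈ Set.uIcc α β, ∃ v ∈ Set.uIcc α β, g u = g α ∧ g v = g β ∧
      ∀ y ∈ Set.uIcc u v, g y ∈ Set.uIcc (g α) (g β) := by
  have hclosed : ∀ w : ℝ, IsCompact (Set.uIcc α β ∩ g ⁻¹' {w}) := fun w =>
    (isCompact_uIcc).of_isClosed_subset
      (hg.preimage_isClosed_of_isClosed isCompact_uIcc.isClosed isClosed_singleton) Set.inter_subset_left
  have hK := (hclosed (g α)).prod (hclosed (g β))
  have hne : ((Set.uIcc α β ∩ g ⁻¹' {g α}) ×ˢ (Set.uIcc α β ∩ g ⁻¹' {g β})).Nonempty :=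
    ⟨(α, β), ⟨Set.left_mem_uIcc, rfl⟩, ⟨Set.right_mem_uIcc, rfl⟩⟩
  obtain ⟨⟨u, v⟩, ⟨⟨hu, hgu⟩, ⟨hv, hgv⟩⟩, hmin⟩ :=
    hK.exists_isMinOn hne (f := fun z : ℝ × ℝ => |z.1 - z.2|) (by fun_prop)
  simp only [Set.mem_preimage, Set.mem_singleton_iff] at hu hgu hv hgv
  refine ⟨u, hu, v, hv, hgu, hgv, ?_⟩
  have hmin' : ∀ u' ∈ Set.uIcc α β, ∀ v' ∈ Set.uIcc α β, g u' = g α → g v' = g β →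
      |u - v| ≤ |u' - v'| := by
    intro u' hu' v' hv' h1 h2
    exact hmin (a := (u', v')) ⟨⟨hu', h1⟩, ⟨hv', h2⟩⟩
  intro y hy
  by_contra hcon
  have hyS : y ∈ Set.uIcc α β := Set.uIcc_subset_uIcc hu hv hy
  have hyu : y ≠ u := by
    rintro rfl; exact hcon (by rw [hgu]; exact Set.left_mem_uIcc)
  have hyv : y ≠ v := by
    rintro rfl; exact hcon (by rw [hgv]; exact Set.right_mem_uIcc)
  have hcase : g α ∈ Set.uIcc (g y) (g v) ∨ g β ∈ Set.uIcc (g y) (g u) := by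
    rw [hgu, hgv]
    simp only [Set.mem_uIcc] at hcon ⊢
    grind
  rcases hcase with h | h
  · have hsub : Set.uIcc y v ⊆ Set.uIcc α β := Set.uIcc_subset_uIcc hyS hv
    obtain ⟨z, hz, hgz⟩ := intermediate_value_uIcc (hg.mono hsub) h
    have := hmin' z (hsub hz) v hv hgz hgv
    rw [Set.mem_uIcc] at hz hy
    grind
  · have hsub : Set.uIcc y u ⊆ Set.uIcc α β := Set.uIcc_subset_uIcc hyS hu
    obtain ⟨z, hz, hgz⟩ := intermediate_value_uIcc (hg.mono hsub) h
    have := hmin' u hu z (hsub hz) hgu hgz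
    rw [Set.mem_uIcc] at hz hy
    grind

lemma fixed_of_cover (g : ℝ → ℝ) (u v : ℝ) (hg : ContinuousOn g (Set.uIcc u v))
    (hu : u ∈ Set.uIcc (g u) (g v)) (hv : v ∈ Set.uIcc (g u) (g v)) :
    ∃ y ∈ Set.uIcc u v, g y = y := by
  have h0 : (0 : ℝ) ∈ Set.uIcc ((fun x => g x - x) u) ((fun x => g x - x) v) := by
    simp only [Set.mem_uIcc] at *
    grind
  obtain ⟨y, hy, h⟩ := intermediate_value_uIcc (hg.sub continuousOn_id) h0
  exact ⟨y, hy, by simp at h; linarith⟩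

lemma chain (a b : ℝ) (f : ℝ → ℝ) (hcont : ContinuousOn f (Set.Icc a b)) (n : ℕ) :
    ∀ (s t : ℕ → ℝ), (∀ i ≤ n, s i ∈ Set.Icc a b ∧ t i ∈ Set.Icc a b) →
      (∀ i < n, s (i+1) ∈ Set.uIcc (f (s i)) (f (t i)) ∧ t (i+1) ∈ Set.uIcc (f (s i)) (f (t i))) →
      ∃ u v, u ∈ Set.uIcc (s 0) (t 0) ∧ v ∈ Set.uIcc (s 0) (t 0) ∧ f^[n] u = s n ∧ f^[n] v = t n ∧
        ∀ y ∈ Set.uIcc u v, ∀ i ≤ n, f^[i] y ∈ Set.uIcc (s i) (t i) := by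
  induction n with
  | zero =>
    intro s t _ _
    refine ⟨s 0, t 0, Set.left_mem_uIcc, Set.right_mem_uIcc, rfl, rfl, ?_⟩
    intro y hy i hi
    obtain rfl : i = 0 := by omega
    exact hy
  | succ n ih =>
    intro s t hst hcov
    obtain ⟨u', v', hu', hv', hfu', hfv', hall⟩ := ih (fun i => s (i+1)) (fun i => t (i+1))
      (fun i hi => hst (i+1) (by omega)) (fun i hi => hcov (i+1) (by omega))
    have h0 := hst 0 (by omega)
    have hsub : Set.uIcc (s 0) (t 0) ⊆ Set.Icc a b := by
      exact Set.uIcc_subset_Icc h0.1 h0.2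
    have hc0 := hcont.mono hsub
    have hcov0 := hcov 0 (by omega)
    have hsub2 := Set.uIcc_subset_uIcc hcov0.1 hcov0.2
    obtain ⟨α, hα, rfl⟩ := intermediate_value_uIcc hc0 (hsub2 hu')
    obtain ⟨β, hβ, rfl⟩ := intermediate_value_uIcc hc0 (hsub2 hv')
    have hab := Set.uIcc_subset_uIcc hα hβ
    obtain ⟨u, hu, v, hv, hgu, hgv, ht⟩ := tighten f α β (hc0.mono hab)
    refine ⟨u, v, hab hu, hab hv, ?_, ?_, ?_⟩
    · rw [Function.iterate_succ_apply, hgu, hfu']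
    · rw [Function.iterate_succ_apply, hgv, hfv']
    · intro y hy i hi
      cases i with
      | zero => exact hab (Set.uIcc_subset_uIcc hu hv hy)
      | succ i =>
        rw [Function.iterate_succ_apply]
        exact hall _ (ht y hy) i (by omega)

lemma loop (a b : ℝ) (f : ℝ → ℝ) (hcont : ContinuousOn f (Set.Icc a b))
    (hmaps : Set.MapsTo f (Set.Icc a b) (Set.Icc a b)) (n : ℕ)
    (s t : ℕ → ℝ) (hst : ∀ i ≤ n, s i ∈ Set.Icc a b ∧ t i ∈ Set.Icc a b)
    (hcov : ∀ i < n, s (i+1) ∈ Set.uIcc (f (s i)) (f (t i)) ∧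
      t (i+1) ∈ Set.uIcc (f (s i)) (f (t i)))
    (hs : s n = s 0) (ht : t n = t 0) :
    ∃ y ∈ Set.Icc a b, f^[n] y = y ∧ ∀ i ≤ n, f^[i] y ∈ Set.uIcc (s i) (t i) := by
  obtain ⟨u, v, hu, hv, hfu, hfv, hall⟩ := chain a b f hcont n s t hst hcov
  have h0 := hst 0 (by omega)
  have hsub : Set.uIcc (s 0) (t 0) ⊆ Set.Icc a b := by
    exact Set.uIcc_subset_Icc h0.1 h0.2
  have hsub2 : Set.uIcc u v ⊆ Set.Icc a b := (Set.uIcc_subset_uIcc hu hv).trans hsub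
  obtain ⟨y, hy, hfy⟩ := fixed_of_cover (f^[n]) u v ((hcont.iterate hmaps n).mono hsub2)
    (by rw [hfu, hfv, hs, ht]; exact hu) (by rw [hfu, hfv, hs, ht]; exact hv)
  exact ⟨y, hsub2 hy, hfy, hall y hy⟩

lemma part_two (a b : ℝ) (f : ℝ → ℝ) (hcont : ContinuousOn f (Set.Icc a b))
    (hmaps : Set.MapsTo f (Set.Icc a b) (Set.Icc a b))
    (m : ℕ) (hm : 3 ≤ m) (hodd : Odd m) (p : ℝ) (hp : p ∈ Set.Icc a b) (hper : PeriodPt f m p)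
    (hE : ∀ i : ℕ, Even i → i + 2 ≤ m - 1 → f^[i + 2] p < f^[i] p) (h01 : p < f p)
    (hO : ∀ i : ℕ, Odd i → i + 2 ≤ m - 2 → f^[i] p < f^[i + 2] p)
    (n : ℕ) (hn : (Even n ∧ 0 < n) ∨ m < n) : ∃ y ∈ Set.Icc a b, PeriodPt f n y := by
  have hnm : n ≠ m := by
    rintro rfl
    rcases hn with h | h
    · exact (Nat.not_even_iff_odd.mpr hodd) h.1
    · omega
  have hn0 : 0 < n := by omega
  obtain ⟨M, hM⟩ := hodd
  set q : ℕ → ℝ := fun i => f^[i] p with hq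
  have q_succ : ∀ i, f (q i) = q (i+1) := fun i => (Function.iterate_succ_apply' f i p).symm
  have qmem : ∀ i, q i ∈ Set.Icc a b := fun i => (hmaps.iterate i) hp
  have qm : q m = q 0 := hper.1
  have q01 : q 0 < q 1 := h01
  have monoE : ∀ d c : ℕ, 2 * (c + d) ≤ m - 1 → q (2 * (c + d)) ≤ q (2 * c) := by
    intro d
    induction d with
    | zero => intro c _; exact le_rfl
    | succ d ih =>
      intro c hc
      have h1 := ih c (by omega)
      have h2 : q (2 * (c + d) + 2) < q (2 * (c + d)) := hE (2 * (c + d)) ⟨c + d, by ring⟩ (by omega)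
      have h3 : 2 * (c + (d + 1)) = 2 * (c + d) + 2 := by ring
      rw [h3]; linarith
  have monoO : ∀ d c : ℕ, 2 * (c + d) + 1 ≤ m - 2 → q (2 * c + 1) ≤ q (2 * (c + d) + 1) := by
    intro d
    induction d with
    | zero => intro c _; exact le_rfl
    | succ d ih =>
      intro c hc
      have h1 := ih c (by omega)
      have h2 : q (2 * (c + d) + 1) < q (2 * (c + d) + 1 + 2) :=
        hO (2 * (c + d) + 1) ⟨c + d, by ring⟩ (by omega)
      have h3 : 2 * (c + (d + 1)) + 1 = 2 * (c + d) + 1 + 2 := by ring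
      rw [h3]; linarith
  have evle : ∀ i j, i ≤ j → j ≤ M → q (2 * j) ≤ q (2 * i) := by
    intro i j hij hj
    have := monoE (j - i) i (by omega)
    rwa [show i + (j - i) = j by omega] at this
  have odle : ∀ i j, i ≤ j → j < M → q (2 * i + 1) ≤ q (2 * j + 1) := by
    intro i j hij hj
    have := monoO (j - i) i (by omega)
    rwa [show i + (j - i) = j by omega] at this
  have q20 : q 2 < q 0 := hE 0 ⟨0, rfl⟩ (by omega)
  have qlast : q (m - 1) < q 0 := by
    have := evle 1 M (by omega) le_rfl
    rw [show m - 1 = 2 * M by omega]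
    simp only [mul_one] at this
    linarith
  have hlast2 : q (m - 1) < q (m - 3) := by
    have := hE (m - 3) ⟨M - 1, by omega⟩ (by omega)
    rwa [show m - 3 + 2 = m - 1 by omega] at this
  -- the itinerary
  let e : ℕ → ℕ := fun i => if i = 0 then m - 2 else i + m - 2 - n
  have e0 : e 0 = m - 2 := rfl
  have epos : ∀ i, 0 < i → e i = i + m - 2 - n := fun i hi => if_neg (by omega)
  have en : e n = m - 2 := by rw [epos n hn0]; omega
  obtain ⟨y, hy, hfy, hity⟩ := loop a b f hcont hmaps n (fun i => q (e i - 1)) (fun i => q (e i + 1))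
    (fun i _ => ⟨qmem _, qmem _⟩) (by
      intro i hi
      simp only [q_succ]
      rcases Nat.eq_zero_or_pos i with rfl | hi0
      · rw [e0, epos _ (Nat.succ_pos _)]
        rw [show m - 2 - 1 + 1 = m - 2 by omega, show m - 2 + 1 + 1 = m by omega, qm]
        have hodd : ∀ j, j < M → q (2 * j + 1) ∈ Set.uIcc (q (m - 2)) (q 0) := by
          intro j hj
          rw [Set.mem_uIcc]
          right
          have h1 := odle 0 j (by omega) hj
          have h2 := odle j (M - 1) (by omega) (by omega)
          rw [show 2 * (M - 1) + 1 = m - 2 by omega] at h2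
          simp only [mul_zero, zero_add] at h1
          constructor <;> linarith
        by_cases hlt : n < m - 1
        · have hev : Even n := by
            rcases hn with h | h
            · exact h.1
            · omega
          obtain ⟨r, hr⟩ := hev
          have h1 := hodd (M - r - 1) (by omega)
          have h2 := hodd (M - r) (by omega)
          rw [show 2 * (M - r - 1) + 1 = 0 + 1 + m - 2 - n - 1 by omega] at h1
          rw [show 2 * (M - r) + 1 = 0 + 1 + m - 2 - n + 1 by omega] at h2
          exact ⟨h1, h2⟩
        · rw [show 0 + 1 + m - 2 - n = 0 by omega]
          exact ⟨Set.right_mem_uIcc, hodd 0 (by omega)⟩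
      · rw [epos i hi0, epos (i+1) (by omega)]
        by_cases h : n < i + m - 2
        · rw [show i + m - 2 - n - 1 + 1 = i + 1 + m - 2 - n - 1 by omega,
            show i + m - 2 - n + 1 + 1 = i + 1 + m - 2 - n + 1 by omega]
          exact ⟨Set.left_mem_uIcc, Set.right_mem_uIcc⟩
        · rw [show i + m - 2 - n = 0 by omega]
          have h2 : i + 1 + m - 2 - n = 0 ∨ i + 1 + m - 2 - n = 1 := by omega
          rcases h2 with h2 | h2 <;> rw [h2] <;> simp only [Set.mem_uIcc] <;> norm_num
          · constructor
            · right; constructor <;> linarith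
            · right; linarith
          · refine ⟨Or.inr ⟨by linarith, by linarith⟩, Or.inr (by linarith)⟩)
    (by simp only [e0, en]) (by simp only [e0, en])
  refine ⟨y, hy, hfy, ?_⟩
  intro i hi hin hfix
  have hy0 := hity 0 (by omega)
  have hyi := hity i (by omega)
  have hy1 := hity 1 (by omega)
  have hy2 := hity 2 (by omega)
  simp only [Function.iterate_zero, id] at hy0
  rw [hfix] at hyi
  simp only [e0, epos i hi] at hy0 hyi
  rw [show m - 2 - 1 = m - 3 by omega, show m - 2 + 1 = m - 1 by omega,
    Set.uIcc_of_ge hlast2.le] at hy0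
  -- y must be q (m-3)
  have hge : q (m - 3) ≤ y := by
    obtain ⟨j, hj⟩ : ∃ j, j = i + m - 2 - n := ⟨_, rfl⟩
    rw [← hj] at hyi
    have hjm : j < m - 2 := by omega
    have h30 : q (m - 3) ≤ q 0 := by
      have := evle 0 (M - 1) (by omega) (by omega)
      rwa [show 2 * (M - 1) = m - 3 by omega] at this
    rcases Nat.even_or_odd' j with ⟨r, hr | hr⟩
    · have h1 : q 0 ≤ q (j + 1) := by
        have := odle 0 r (by omega) (by omega)
        rw [hr]; simp only [mul_zero, zero_add] at this; linarith
      have h2 : q 0 ≤ q (j - 1) := by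
        rcases Nat.eq_zero_or_pos r with h | h
        · rw [show j - 1 = 0 by omega]
        · have := odle 0 (r - 1) (by omega) (by omega)
          rw [show 2 * (r - 1) + 1 = j - 1 by omega] at this
          simp only [mul_zero, zero_add] at this; linarith
      rw [Set.mem_uIcc] at hyi
      rcases hyi with h | h <;> linarith [h.1]
    · have h1 := evle (r + 1) (M - 1) (by omega) (by omega)
      have h2 := evle r (M - 1) (by omega) (by omega)
      rw [show 2 * (M - 1) = m - 3 by omega] at h1 h2
      rw [show j + 1 = 2 * (r + 1) by omega, show j - 1 = 2 * r by omega, Set.mem_uIcc] at hyi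
      rcases hyi with h | h <;> linarith [h.1]
  have hyq : y = q (m - 3) := le_antisymm hy0.2 hge
  by_cases hlt : n < m
  · have hp' : Function.IsPeriodicPt f n p := by
      have h1 : f^[n] (f^[3] y) = f^[3] y := by
        rw [← Function.iterate_add_apply, add_comm, Function.iterate_add_apply, hfy]
      have h2 : f^[3] y = p := by
        rw [hyq, hq]
        simp only
        rw [← Function.iterate_add_apply, show 3 + (m - 3) = m by omega]
        exact hper.1
      rw [h2] at h1
      exact h1
    exact hper.2 n hn0 hlt hp'
  · rw [epos 2 (by omega), show 2 + m - 2 - n = 0 by omega] at hy2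
    have h2 : f^[2] y = q (m - 1) := by
      rw [hyq, hq]
      simp only
      rw [← Function.iterate_add_apply, show 2 + (m - 3) = m - 1 by omega]
    rw [h2, Set.mem_uIcc] at hy2
    norm_num at hy2
    rcases hy2 with h | h <;> linarith [h.1]

lemma part_one (a b : ℝ) (f : ℝ → ℝ) (hcont : ContinuousOn f (Set.Icc a b))
    (hmaps : Set.MapsTo f (Set.Icc a b) (Set.Icc a b))
    (m : ℕ) (hm : 3 ≤ m) (hodd : Odd m)
    (x : ℝ) (hx : x ∈ Set.Icc a b) (hper : PeriodPt f m x)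
    (hno : ∀ ℓ : ℕ, Odd ℓ → 1 < ℓ → ℓ < m → ¬ ∃ y ∈ Set.Icc a b, PeriodPt f ℓ y) :
    ∃ p, (∃ i < m, p = f^[i] x) ∧ p ∈ Set.Icc a b ∧ PeriodPt f m p ∧
    (((∀ i : ℕ, Odd i → i + 2 ≤ m - 2 → f^[i + 2] p < f^[i] p) ∧ f p < p ∧
        (∀ i : ℕ, Even i → i + 2 ≤ m - 1 → f^[i] p < f^[i + 2] p)) ∨
      ((∀ i : ℕ, Even i → i + 2 ≤ m - 1 → f^[i + 2] p < f^[i] p) ∧ p < f p ∧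
        (∀ i : ℕ, Odd i → i + 2 ≤ m - 2 → f^[i] p < f^[i + 2] p))) := by
  classical
  have mp : Function.minimalPeriod f x = m := by
    have h1 : Function.IsPeriodicPt f m x := hper.1
    have h2 := h1.minimalPeriod_le (by omega)
    have h3 := h1.minimalPeriod_pos (by omega)
    by_contra hne
    exact hper.2 _ h3 (by omega) (Function.isPeriodicPt_minimalPeriod f x)
  have xper : x ∈ Function.periodicPts f := ⟨m, by omega, hper.1⟩
  set P : Finset ℝ := (Finset.range m).image (fun i => f^[i] x) with hP
  have memP : ∀ y, y ∈ P ↔ ∃ i < m, y = f^[i] x := by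
    intro y; simp [hP, eq_comm]
  have Pmp : ∀ y ∈ P, Function.minimalPeriod f y = m := by
    intro y hy
    obtain ⟨i, _, rfl⟩ := (memP y).1 hy
    rw [Function.minimalPeriod_apply_iterate xper, mp]
  have Pab : ∀ y ∈ P, y ∈ Set.Icc a b := by
    intro y hy
    obtain ⟨i, _, rfl⟩ := (memP y).1 hy
    exact (hmaps.iterate i) hx
  have Piter : ∀ i, f^[i] x ∈ P := by
    intro i
    refine (memP _).2 ⟨i % m, Nat.mod_lt _ (by omega), ?_⟩
    exact (Function.IsPeriodicPt.iterate_mod_apply (f := f) (n := m) hper.1 i).symm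
  have Pf : ∀ y ∈ P, f y ∈ P := by
    intro y hy
    obtain ⟨i, _, rfl⟩ := (memP y).1 hy
    rw [← Function.iterate_succ_apply' f]
    exact Piter _
  have Pfi : ∀ y ∈ P, ∀ i, f^[i] y ∈ P := by
    intro y hy i
    induction i with
    | zero => exact hy
    | succ i ih => rw [Function.iterate_succ_apply']; exact Pf _ ih
  have Pcard : P.card ≤ m := by
    have := Finset.card_image_le (s := Finset.range m) (f := fun i => f^[i] x)
    simpa using this
  have inj : ∀ y ∈ P, ∀ k ≤ m, ((Finset.range k).image (fun i => f^[i] y)).card = k := by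
    intro y hy k hk
    rw [Finset.card_image_of_injOn, Finset.card_range]
    intro i hi j hj hij
    have := Function.iterate_injOn_Iio_minimalPeriod (f := f) (x := y)
    rw [Pmp y hy] at this
    simp only [Finset.coe_range, Set.mem_Iio] at hi hj
    exact this (show i < m by omega) (show j < m by omega) hij
  have Pnf : ∀ y ∈ P, f y ≠ y := by
    intro y hy h
    have h1 := Pmp y hy
    have h2 : Function.minimalPeriod f y = 1 := Function.minimalPeriod_eq_one_iff_isFixedPt.2 h
    omega
  have xP : x ∈ P := Piter 0
  -- c and d
  obtain ⟨c, hcL, hcmax⟩ : ∃ c ∈ P.filter (fun y => y < f y), ∀ y ∈ P.filter (fun y => y < f y),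
      y ≤ c := by
    have hne : (P.filter (fun y => y < f y)).Nonempty := by
      obtain ⟨z, hz, hzmin⟩ := P.exists_min_image id ⟨x, xP⟩
      exact ⟨z, Finset.mem_filter.2 ⟨hz, lt_of_le_of_ne (hzmin _ (Pf z hz)) (Ne.symm (Pnf z hz))⟩⟩
    exact Finset.exists_max_image _ id hne
  rw [Finset.mem_filter] at hcL
  obtain ⟨cP, hc⟩ := hcL
  obtain ⟨d, hdL, hdmin⟩ : ∃ d ∈ P.filter (fun y => c < y), ∀ y ∈ P.filter (fun y => c < y),
      d ≤ y := Finset.exists_min_image _ id ⟨f c, Finset.mem_filter.2 ⟨Pf c cP, hc⟩⟩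
  rw [Finset.mem_filter] at hdL
  obtain ⟨dP, hcd⟩ := hdL
  have side : ∀ y ∈ P, ¬ y ≤ c → d ≤ y := fun y hy h =>
    hdmin y (Finset.mem_filter.2 ⟨hy, not_le.1 h⟩)
  have hfc : d ≤ f c := side _ (Pf c cP) (not_le.2 hc)
  have hfd : f d ≤ c := by
    by_contra h
    have h1 := side _ (Pf d dP) h
    have h2 := hcmax d (Finset.mem_filter.2 ⟨dP, lt_of_le_of_ne h1 (Ne.symm (Pnf d dP))⟩)
    linarith
  -- the growing images
  let A : ℕ → Set ℝ := fun j => f^[j] '' Set.uIcc c d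
  have cdsub : Set.uIcc c d ⊆ Set.Icc a b := by
    exact Set.uIcc_subset_Icc (Pab c cP) (Pab d dP)
  have Aord : ∀ j, ∀ u ∈ A j, ∀ v ∈ A j, Set.uIcc u v ⊆ A j := by
    intro j u hu v hv
    have h1 : IsPreconnected (A j) :=
      (isPreconnected_uIcc).image _ ((hcont.iterate hmaps j).mono cdsub)
    exact h1.ordConnected.uIcc_subset hu hv
  have Asucc : ∀ j, A (j+1) = f '' A j := by
    intro j
    simp only [A]
    rw [Set.image_image]
    exact Set.image_congr (fun y _ => Function.iterate_succ_apply' f j y)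
  have A0 : A 0 = Set.uIcc c d := by simp [A]
  have A01 : A 0 ⊆ A 1 := by
    rw [Asucc 0, A0]
    have h := intermediate_value_uIcc (hcont.mono cdsub)
    refine subset_trans (Set.uIcc_subset_uIcc ?_ ?_) h <;> rw [Set.mem_uIcc] <;> right <;>
      constructor <;> linarith
  have Amono1 : ∀ j, A j ⊆ A (j+1) := by
    intro j
    induction j with
    | zero => exact A01
    | succ j ih =>
      rw [Asucc (j+1), Asucc j]
      exact Set.image_mono (by rw [← Asucc j]; exact ih)
  have Amono : Monotone A := monotone_nat_of_le_succ Amono1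
  have Acd : ∀ j, c ∈ A j ∧ d ∈ A j := fun j =>
    ⟨Amono (Nat.zero_le j) (by rw [A0]; exact Set.left_mem_uIcc),
      Amono (Nat.zero_le j) (by rw [A0]; exact Set.right_mem_uIcc)⟩
  -- nonswitching points are not in A (m-3)
  have key : ∀ q ∈ P, q ∈ A (m - 3) → ∀ e ∈ P, (e = c ∧ q ≤ c ∧ f q ≤ c ∨ e = d ∧ d ≤ q ∧ d ≤ f q) →
      False := by
    intro q hqP hqA e heP hqe
    have heA : e ∈ A (m - 3) := by
      rcases hqe with h | h <;> rw [h.1]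
      · exact (Acd _).1
      · exact (Acd _).2
    have qesub : Set.uIcc q e ⊆ Set.Icc a b := by
      exact Set.uIcc_subset_Icc (Pab q hqP) (Pab e heP)
    have hcov : Set.uIcc c d ⊆ f '' Set.uIcc q e := by
      refine subset_trans (Set.uIcc_subset_uIcc ?_ ?_) (intermediate_value_uIcc (hcont.mono qesub)) <;>
      rw [Set.mem_uIcc] <;> rcases hqe with h | h <;> rw [h.1]
      · left; constructor <;> linarith
      · right; constructor <;> linarith
      · left; constructor <;> linarith
      · right; constructor <;> linarith
    obtain ⟨u', hu', hfu'⟩ := hcov Set.left_mem_uIcc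
    obtain ⟨v', hv', hfv'⟩ := hcov Set.right_mem_uIcc
    have hqeA := Aord _ q hqA e heA
    obtain ⟨α, hα, hαu⟩ := hqeA hu'
    obtain ⟨β, hβ, hβv⟩ := hqeA hv'
    have hαβ := Set.uIcc_subset_uIcc hα hβ
    obtain ⟨u, hu, v, hv, hgu, hgv, ht⟩ := tighten (f^[m-3]) α β
      ((hcont.iterate hmaps _).mono (hαβ.trans cdsub))
    have huv := (Set.uIcc_subset_uIcc hu hv).trans hαβ
    have hm2 : m - 2 = (m - 3) + 1 := by omega
    have h1 : f^[m-2] u = c := by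
      rw [hm2, Function.iterate_succ_apply', hgu, hαu, hfu']
    have h2 : f^[m-2] v = d := by
      rw [hm2, Function.iterate_succ_apply', hgv, hβv, hfv']
    obtain ⟨y, hy, hfy⟩ := fixed_of_cover (f^[m-2]) u v
      ((hcont.iterate hmaps _).mono (huv.trans cdsub))
      (by rw [h1, h2]; exact hαβ hu) (by rw [h1, h2]; exact hαβ hv)
    have hyi : f^[m-3] y ∈ Set.uIcc q e := by
      have := ht y hy
      rw [hαu, hβv] at this
      exact Set.uIcc_subset_uIcc hu' hv' this
    have hyab := cdsub (huv hy)
    have hyp : Function.IsPeriodicPt f (m-2) y := hfy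
    have hpos := hyp.minimalPeriod_pos (by omega)
    have hle := hyp.minimalPeriod_le (by omega)
    have hodd2 : Odd (Function.minimalPeriod f y) := by
      refine Odd.of_dvd_nat ?_ hyp.minimalPeriod_dvd
      obtain ⟨r, hr⟩ := hodd
      exact ⟨r - 1, by omega⟩
    have hone : Function.minimalPeriod f y = 1 := by
      by_contra hne
      refine hno _ hodd2 (by omega) (by omega) ⟨y, hyab, Function.isPeriodicPt_minimalPeriod f y, ?_⟩
      intro i hi0 hi h
      exact absurd (Function.IsPeriodicPt.minimalPeriod_le hi0 h) (by omega)
    have hfix : Function.IsFixedPt f y := Function.minimalPeriod_eq_one_iff_isFixedPt.1 hone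
    rw [(hfix.iterate (m-3)).eq] at hyi
    have hycd := huv hy
    have hye : y = e := by
      rw [Set.mem_uIcc] at hyi hycd
      rcases hqe with h | h <;> rw [h.1] at hyi ⊢ <;> grind
    rw [hye] at hfix
    exact Pnf e heP hfix
  have switch : ∀ q ∈ P, q ∈ A (m - 3) → (f q ≤ c ↔ ¬ q ≤ c) := by
    intro q hq hqA
    constructor
    · intro h1 h2
      exact key q hq hqA c cP (Or.inl ⟨rfl, h2, h1⟩)
    · intro h1
      by_contra h2
      exact key q hq hqA d dP (Or.inr ⟨rfl, side q hq h1, side _ (Pf q hq) h2⟩)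
  -- there is a nonswitching point
  have nosub : ¬ ∀ q ∈ P, q ∈ A (m - 3) := by
    intro hall
    have : ∀ i, (f^[i] c ≤ c ↔ Even i) := by
      intro i
      induction i with
      | zero => simp
      | succ i ih =>
        rw [Function.iterate_succ_apply', switch _ (Pfi c cP i) (hall _ (Pfi c cP i)), ih,
          Nat.even_add_one]
    have h1 := (this m).1 (by
      have := Function.iterate_minimalPeriod (f := f) (x := c)
      rw [Pmp c cP] at this
      rw [this])
    exact (Nat.not_even_iff_odd.2 hodd) h1
  let B : ℕ → Finset ℝ := fun j => P.filter (fun y => y ∈ A j)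
  have memB : ∀ j y, y ∈ B j ↔ y ∈ P ∧ y ∈ A j := fun j y => Finset.mem_filter
  have Bgrow : ∀ j, j ≤ m - 3 → (B j).card < (B (j+1)).card := by
    intro j hj
    apply Finset.card_lt_card
    rw [Finset.ssubset_iff_subset_ne]
    refine ⟨fun y hy => (memB _ _).2 ⟨((memB _ _).1 hy).1, Amono1 j ((memB _ _).1 hy).2⟩, ?_⟩
    intro heq
    have hinv : ∀ i, f^[i] c ∈ B j := by
      intro i
      induction i with
      | zero => exact (memB _ _).2 ⟨cP, (Acd j).1⟩
      | succ i ih =>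
        rw [heq, Function.iterate_succ_apply']
        refine (memB _ _).2 ⟨Pf _ ((memB _ _).1 ih).1, ?_⟩
        rw [Asucc]
        exact ⟨_, ((memB _ _).1 ih).2, rfl⟩
    have hsub : (Finset.range m).image (fun i => f^[i] c) ⊆ B j := by
      intro y hy
      obtain ⟨i, _, rfl⟩ := Finset.mem_image.1 hy
      exact hinv i
    have hBP : B j = P := by
      apply Finset.eq_of_subset_of_card_le (Finset.filter_subset _ _)
      have := Finset.card_le_card hsub
      rw [inj c cP m le_rfl] at this
      exact Pcard.trans this
    apply nosub
    intro q hq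
    rw [← hBP] at hq
    exact Amono hj ((memB _ _).1 hq).2
  have Bge : ∀ i j, j + i ≤ m - 2 → (B j).card + i ≤ (B (j+i)).card := by
    intro i
    induction i with
    | zero => intro j _; exact le_rfl
    | succ i ih =>
      intro j hj
      have h1 := ih j (by omega)
      have h2 := Bgrow (j+i) (by omega)
      rw [← add_assoc j i 1]
      omega
  have Bcard : ∀ j ≤ m - 2, (B j).card ≤ j + 2 := by
    intro j hj
    have h1 := Bge (m - 2 - j) j (by omega)
    have h2 : (B (j + (m - 2 - j))).card ≤ P.card := Finset.card_filter_le _ _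
    omega
  -- p
  obtain ⟨p, hpP, hpcd⟩ : ∃ p ∈ P, (p = c ∧ f p = d) ∨ (p = d ∧ f p = c) := by
    by_cases h1 : f c = d
    · exact ⟨c, cP, Or.inl ⟨rfl, h1⟩⟩
    by_cases h2 : f d = c
    · exact ⟨d, dP, Or.inr ⟨rfl, h2⟩⟩
    exfalso
    have hlt1 : d < f c := lt_of_le_of_ne hfc (Ne.symm h1)
    have hlt2 : f d < c := lt_of_le_of_ne hfd h2
    have hsub : ({f d, c, d, f c} : Finset ℝ) ⊆ B 1 := by
      intro y hy
      simp only [Finset.mem_insert, Finset.mem_singleton] at hy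
      rcases hy with rfl | rfl | rfl | rfl
      · exact (memB _ _).2 ⟨Pf _ dP, by rw [Asucc 0]; exact ⟨d, (Acd 0).2, rfl⟩⟩
      · exact (memB _ _).2 ⟨cP, (Acd 1).1⟩
      · exact (memB _ _).2 ⟨dP, (Acd 1).2⟩
      · exact (memB _ _).2 ⟨Pf _ cP, by rw [Asucc 0]; exact ⟨c, (Acd 0).1, rfl⟩⟩
    have h4 : ({f d, c, d, f c} : Finset ℝ).card = 4 := by
      rw [Finset.card_insert_of_notMem, Finset.card_insert_of_notMem, Finset.card_insert_of_notMem,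
        Finset.card_singleton] <;> simp <;> grind
    have := Finset.card_le_card hsub
    have := Bcard 1 (by omega)
    omega
  have pA : ∀ j, p ∈ A j := by
    intro j
    rcases hpcd with h | h <;> rw [h.1]
    · exact (Acd j).1
    · exact (Acd j).2
  have fpA : ∀ j, f^[j+1] p ∈ A j := by
    intro j
    induction j with
    | zero =>
      rcases hpcd with h | h
      · show f p ∈ A 0
        rw [h.2]; exact (Acd 0).2
      · show f p ∈ A 0
        rw [h.2]; exact (Acd 0).1
    | succ j ih =>
      rw [Function.iterate_succ_apply', Asucc]
      exact ⟨_, ih, rfl⟩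
  have fpA2 : ∀ i j, i ≤ j + 1 → f^[i] p ∈ A j := by
    intro i j hij
    cases i with
    | zero => exact pA j
    | succ i => exact Amono (show i ≤ j by omega) (fpA i)
  have notA : ∀ j, j + 2 < m → f^[j+2] p ∉ A j := by
    intro j hj hmem
    have hsub : (Finset.range (j+3)).image (fun i => f^[i] p) ⊆ B j := by
      intro y hy
      obtain ⟨i, hi, rfl⟩ := Finset.mem_image.1 hy
      rw [Finset.mem_range] at hi
      refine (memB _ _).2 ⟨Pfi p hpP i, ?_⟩
      by_cases h : i = j + 2
      · rw [h]; exact hmem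
      · exact fpA2 i j (by omega)
    have h1 := Finset.card_le_card hsub
    rw [inj p hpP _ (by omega)] at h1
    have := Bcard j (by omega)
    omega
  have alt : ∀ i, i < m → (f^[i] p ≤ c ↔ (p ≤ c ↔ Even i)) := by
    intro i
    induction i with
    | zero => intro _; simp
    | succ i ih =>
      intro hi
      rw [Function.iterate_succ_apply', switch _ (Pfi p hpP i) (fpA2 i (m-3) (by omega)),
        ih (by omega), Nat.even_add_one]
      tauto
  have left : ∀ i, i + 2 < m → f^[i] p ≤ c → f^[i+2] p ≤ c → f^[i+2] p < f^[i] p := by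
    intro i hi h1 h2
    by_contra h
    exact notA i hi (Aord i _ (fpA2 i i (by omega)) _ (Acd i).1
      (Set.mem_uIcc.2 (Or.inl ⟨not_lt.1 h, h2⟩)))
  have right : ∀ i, i + 2 < m → ¬ f^[i] p ≤ c → ¬ f^[i+2] p ≤ c → f^[i] p < f^[i+2] p := by
    intro i hi h1 h2
    by_contra h
    exact notA i hi (Aord i _ (Acd i).2 _ (fpA2 i i (by omega))
      (Set.mem_uIcc.2 (Or.inl ⟨side _ (Pfi p hpP _) h2, not_lt.1 h⟩)))
  have ev2 : ∀ i, Even (i+2) ↔ Even i := fun i => by simp [Nat.even_add]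
  refine ⟨p, (memP p).1 hpP, Pab p hpP, ⟨?_, ?_⟩, ?_⟩
  · have := Function.iterate_minimalPeriod (f := f) (x := p)
    rwa [Pmp p hpP] at this
  · intro i hi0 hi h
    have := Function.IsPeriodicPt.minimalPeriod_le (f := f) (x := p) hi0 h
    rw [Pmp p hpP] at this
    omega
  rcases hpcd with ⟨h1, h2⟩ | ⟨h1, h2⟩
  · right
    have hpc : p ≤ c := h1.le
    refine ⟨?_, by rw [h2, h1]; exact hcd, ?_⟩
    · intro i hi him
      apply left i (by omega)
      · rw [alt i (by omega)]; tauto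
      · rw [alt (i+2) (by omega), ev2]; tauto
    · intro i hi him
      rw [← Nat.not_even_iff_odd] at hi
      apply right i (by omega)
      · rw [alt i (by omega)]; tauto
      · rw [alt (i+2) (by omega), ev2]; tauto
  · left
    have hpc : ¬ p ≤ c := by rw [h1]; exact not_le.2 hcd
    refine ⟨?_, by rw [h2, h1]; exact hcd, ?_⟩
    · intro i hi him
      rw [← Nat.not_even_iff_odd] at hi
      apply left i (by omega)
      · rw [alt i (by omega)]; tauto
      · rw [alt (i+2) (by omega), ev2]; tauto
    · intro i hi him
      apply right i (by omega)
      · rw [alt i (by omega)]; tauto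
      · rw [alt (i+2) (by omega), ev2]; tauto

lemma conj_iter (f : ℝ → ℝ) (i : ℕ) (y : ℝ) : (fun z => -f (-z))^[i] y = -f^[i] (-y) := by
  induction i with
  | zero => simp
  | succ i ih => rw [Function.iterate_succ_apply', ih, Function.iterate_succ_apply']; simp

lemma conj_period (f : ℝ → ℝ) (n : ℕ) (y : ℝ) (h : PeriodPt f n y) :
    PeriodPt (fun z => -f (-z)) n (-y) := by
  refine ⟨by rw [conj_iter, neg_neg, h.1], fun i h0 hi => ?_⟩
  rw [conj_iter, neg_neg]
  intro h'
  exact h.2 i h0 hi (neg_injective h')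

theorem stefan_structure_of_minimal_odd_orbit (a b : ℝ) (hab : a ≤ b) (f : ℝ → ℝ)
    (hcont : ContinuousOn f (Set.Icc a b))
    (hmaps : Set.MapsTo f (Set.Icc a b) (Set.Icc a b))
    (m : ℕ) (hm : 3 ≤ m) (hodd : Odd m)
    (x : ℝ) (hx : x ∈ Set.Icc a b) (hper : PeriodPt f m x)
    (P : Set ℝ) (hP : P = {y | ∃ i < m, y = f^[i] x})
    (hno : ∀ ℓ : ℕ, Odd ℓ → 1 < ℓ → ℓ < m → ¬ ∃ y ∈ Set.Icc a b, PeriodPt f ℓ y) :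
    IsStefanCycle f m P ∧
      (∀ n : ℕ, Even n → 0 < n → ∃ y ∈ Set.Icc a b, PeriodPt f n y) ∧
      (∀ n : ℕ, m < n → ∃ y ∈ Set.Icc a b, PeriodPt f n y) := by
  obtain ⟨p, hpP, hpab, hpper, hst⟩ := part_one a b f hcont hmaps m hm hodd x hx hper hno
  refine ⟨⟨p, by rw [hP]; exact hpP, hpper.1, hst⟩, ?_⟩
  have main : ∀ n : ℕ, (Even n ∧ 0 < n) ∨ m < n → ∃ y ∈ Set.Icc a b, PeriodPt f n y := by
    intro n hn
    rcases hst with ⟨h1, h2, h3⟩ | ⟨h1, h2, h3⟩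
    · have hneg : Set.MapsTo (fun z : ℝ => -z) (Set.Icc (-b) (-a)) (Set.Icc a b) := by
        intro z hz
        exact ⟨by linarith [hz.2], by linarith [hz.1]⟩
      obtain ⟨y, hy, hyp⟩ := part_two (-b) (-a) (fun z => -f (-z))
        ((hcont.comp continuous_neg.continuousOn hneg).neg)
        (fun z hz => by
          have := hmaps (hneg hz)
          exact ⟨neg_le_neg this.2, neg_le_neg this.1⟩)
        m hm hodd (-p) ⟨neg_le_neg hpab.2, neg_le_neg hpab.1⟩ (conj_period f m p hpper)
        (by
          intro i hi him
          rw [conj_iter, conj_iter, neg_neg]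
          exact neg_lt_neg (h3 i hi him))
        (by rw [neg_neg]; exact neg_lt_neg h2)
        (by
          intro i hi him
          rw [conj_iter, conj_iter, neg_neg]
          exact neg_lt_neg (h1 i hi him)) n hn
      refine ⟨-y, hneg hy, ?_⟩
      have := conj_period _ n y hyp
      simpa using this
    · exact part_two a b f hcont hmaps m hm hodd p hpab hpper h1 h2 h3 n hn
  exact ⟨fun n h h0 => main n (Or.inl ⟨h, h0⟩), fun n h => main n (Or.inr h)⟩
end

section
/- If a continuous map f : I → I of a compact interval I has a period-6 point, then f has periodic points of all even least periods. -/
namespace PerSix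
open Set Function

/-- IVT in unordered form. -/
lemma ivt {h : ℝ → ℝ} (hc : Continuous h) {u w t : ℝ} (hu : h u ≤ t) (hw : t ≤ h w) :
    ∃ y ∈ uIcc u w, h y = t := by
  have := intermediate_value_uIcc (a := u) (b := w) hc.continuousOn
  obtain ⟨y, hy, e⟩ := this (Icc_subset_uIcc ⟨hu, hw⟩)
  exact ⟨y, hy, e⟩

/-- increasing -/
lemma ivt1 {h : ℝ → ℝ} (hc : Continuous h) {u w t : ℝ} (huw : u ≤ w) (hu : h u ≤ t)
    (hw : t ≤ h w) : ∃ y, u ≤ y ∧ y ≤ w ∧ h y = t := by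
  obtain ⟨y, hy, e⟩ := ivt hc hu hw
  rw [uIcc_of_le huw] at hy
  exact ⟨y, hy.1, hy.2, e⟩

/-- decreasing -/
lemma ivt2 {h : ℝ → ℝ} (hc : Continuous h) {u w t : ℝ} (huw : u ≤ w) (hu : t ≤ h u)
    (hw : h w ≤ t) : ∃ y, u ≤ y ∧ y ≤ w ∧ h y = t := by
  obtain ⟨y, hy, e⟩ := ivt hc hw hu
  rw [uIcc_of_ge huw] at hy
  exact ⟨y, hy.1, hy.2, e⟩

lemma fixpt {h : ℝ → ℝ} (hc : Continuous h) {u w : ℝ} (hu : h u ≤ u) (hw : w ≤ h w) :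
    ∃ y ∈ uIcc u w, h y = y := by
  obtain ⟨y, hy, e⟩ := ivt (h := fun x => h x - x) (by fun_prop) (u := u) (w := w) (t := 0)
    (by linarith) (by linarith)
  exact ⟨y, hy, by linarith⟩

lemma fixpt2 {h : ℝ → ℝ} (hc : Continuous h) {u w : ℝ} (huw : u ≤ w) (hu : u ≤ h u)
    (hw : h w ≤ w) : ∃ y, u ≤ y ∧ y ≤ w ∧ h y = y := by
  obtain ⟨y, hy, e⟩ := fixpt hc hw hu
  rw [uIcc_of_ge huw] at hy
  exact ⟨y, hy.1, hy.2, e⟩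

lemma exLeast {h : ℝ → ℝ} (hc : Continuous h) {u w t : ℝ}
    (hex : ∃ y, u ≤ y ∧ y ≤ w ∧ h y = t) :
    ∃ y, (u ≤ y ∧ y ≤ w ∧ h y = t) ∧ ∀ x, u ≤ x → x ≤ w → h x = t → y ≤ x := by
  have hcomp : IsCompact (Icc u w ∩ h ⁻¹' {t}) :=
    isCompact_Icc.inter_right (isClosed_singleton.preimage hc)
  obtain ⟨y, h1, h2, h3⟩ := hex
  obtain ⟨s, hs, hs'⟩ := hcomp.exists_isLeast ⟨y, ⟨h1, h2⟩, h3⟩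
  exact ⟨s, ⟨hs.1.1, hs.1.2, hs.2⟩, fun x a b c => hs' ⟨⟨a, b⟩, c⟩⟩

lemma exGreatest {h : ℝ → ℝ} (hc : Continuous h) {u w t : ℝ}
    (hex : ∃ y, u ≤ y ∧ y ≤ w ∧ h y = t) :
    ∃ y, (u ≤ y ∧ y ≤ w ∧ h y = t) ∧ ∀ x, u ≤ x → x ≤ w → h x = t → x ≤ y := by
  have hcomp : IsCompact (Icc u w ∩ h ⁻¹' {t}) :=
    isCompact_Icc.inter_right (isClosed_singleton.preimage hc)
  obtain ⟨y, h1, h2, h3⟩ := hex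
  obtain ⟨s, hs, hs'⟩ := hcomp.exists_isGreatest ⟨y, ⟨h1, h2⟩, h3⟩
  exact ⟨s, ⟨hs.1.1, hs.1.2, hs.2⟩, fun x a b c => hs' ⟨⟨a, b⟩, c⟩⟩

lemma sub1 {g : ℝ → ℝ} (hg : Continuous g) {u w c d : ℝ} (hcd : c ≤ d) (huw : u ≤ w)
    (hu : g u = c) (hw : g w = d) :
    ∃ p q, p ≤ q ∧ u ≤ p ∧ q ≤ w ∧ MapsTo g (Icc p q) (Icc c d) ∧ g p = c ∧ g q = d := by
  obtain ⟨p, ⟨p1, p2, p3⟩, p4⟩ := exGreatest hg ⟨u, le_refl u, huw, hu⟩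
  obtain ⟨q, ⟨q1, q2, q3⟩, q4⟩ := exLeast hg ⟨w, p2, le_refl w, hw⟩
  refine ⟨p, q, q1, p1, q2, ?_, p3, q3⟩
  rintro x ⟨hx1, hx2⟩
  constructor
  · by_contra! hlt
    obtain ⟨y, y1, y2, y3⟩ := ivt1 hg hx2 hlt.le (hcd.trans q3.ge)
    have := p4 y (by linarith) (by linarith) y3
    have : x = p := by linarith
    subst this
    linarith
  · by_contra! hlt
    obtain ⟨y, y1, y2, y3⟩ := ivt1 hg hx1 (p3.trans_le hcd) hlt.le
    have := q4 y (by linarith) (by linarith) y3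
    have : x = q := by linarith
    subst this
    linarith

lemma sub2 {g : ℝ → ℝ} (hg : Continuous g) {p q c d : ℝ} (hcd : c ≤ d)
    (hcov : Icc c d ⊆ g '' Icc p q) :
    ∃ p' q', p' ≤ q' ∧ Icc p' q' ⊆ Icc p q ∧ MapsTo g (Icc p' q') (Icc c d) ∧
      Icc c d ⊆ g '' Icc p' q' := by
  obtain ⟨u, hu, eu⟩ := hcov ⟨le_refl c, hcd⟩
  obtain ⟨w, hw, ew⟩ := hcov ⟨hcd, le_refl d⟩
  rcases le_total u w with h | h
  · obtain ⟨p', q', h1, h2, h3, h4, h5, h6⟩ := sub1 hg hcd h eu ew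
    refine ⟨p', q', h1, Icc_subset_Icc (hu.1.trans h2) (h3.trans hw.2), h4, ?_⟩
    rintro t ⟨t1, t2⟩
    obtain ⟨y, y1, y2, y3⟩ := ivt1 hg h1 (h5.trans_le t1) (t2.trans h6.ge)
    exact ⟨y, ⟨y1, y2⟩, y3⟩
  · obtain ⟨p', q', h1, h2, h3, h4, h5, h6⟩ := sub1 (g := fun x => - g x) hg.neg
      (neg_le_neg hcd) h (by simp [ew]) (by simp [eu])
    simp only [neg_inj] at h5 h6
    refine ⟨p', q', h1, Icc_subset_Icc (hw.1.trans h2) (h3.trans hu.2), ?_, ?_⟩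
    · intro x hx
      have := h4 hx
      exact ⟨by linarith [this.2], by linarith [this.1]⟩
    rintro t ⟨t1, t2⟩
    obtain ⟨y, y1, y2, y3⟩ := ivt2 hg h1 (t2.trans h5.ge) (h6.trans_le t1)
    exact ⟨y, ⟨y1, y2⟩, y3⟩

lemma chain {g : ℝ → ℝ} (hg : Continuous g) {j1 j2 k1 k2 : ℝ} (hj : j1 ≤ j2)
    (hKK : Icc k1 k2 ⊆ g '' Icc k1 k2) (hKJ : Icc j1 j2 ⊆ g '' Icc k1 k2) (n : ℕ) :
    ∃ c d, c ≤ d ∧ Icc c d ⊆ Icc k1 k2 ∧ (∀ x ∈ Icc c d, ∀ i ≤ n, g^[i] x ∈ Icc k1 k2) ∧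
      Icc j1 j2 ⊆ g^[n+1] '' Icc c d := by
  induction n with
  | zero =>
    obtain ⟨p, q, h1, h2, h3, h4⟩ := sub2 hg hj hKJ
    refine ⟨p, q, h1, h2, ?_, by simpa using h4⟩
    intro x hx i hi
    obtain rfl : i = 0 := by omega
    exact h2 hx
  | succ n ih =>
    obtain ⟨c, d, h1, h2, h3, h4⟩ := ih
    obtain ⟨p, q, h5, h6, h7, h8⟩ := sub2 hg h1 (h2.trans hKK)
    refine ⟨p, q, h5, h6, ?_, ?_⟩
    · intro x hx i hi
      cases i with
      | zero => exact h6 hx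
      | succ i => exact h3 _ (h7 hx) i (by omega)
    · intro t ht
      obtain ⟨y, hy, e⟩ := h4 ht
      obtain ⟨w, hw, e'⟩ := h8 hy
      refine ⟨w, hw, ?_⟩
      rw [iterate_succ_apply, e', e]

lemma loop {g : ℝ → ℝ} (hg : Continuous g) {j1 j2 k1 k2 : ℝ} (hj : j1 ≤ j2)
    (hKK : Icc k1 k2 ⊆ g '' Icc k1 k2) (hKJ : Icc j1 j2 ⊆ g '' Icc k1 k2)
    (hJK : Icc k1 k2 ⊆ g '' Icc j1 j2) (k : ℕ) (hk : 2 ≤ k) :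
    ∃ y ∈ Icc j1 j2, (∀ i, 0 < i → i < k → g^[i] y ∈ Icc k1 k2) ∧ g^[k] y = y := by
  obtain ⟨n, rfl⟩ : ∃ n, k = n + 2 := ⟨k - 2, by omega⟩
  obtain ⟨c, d, h1, h2, h3, h4⟩ := chain hg hj hKK hKJ n
  obtain ⟨p, q, h5, h6, h7, h8⟩ := sub2 hg h1 (h2.trans hJK)
  have hsurj : ∀ t ∈ Icc j1 j2, ∃ x ∈ Icc p q, g^[n+2] x = t := by
    intro t ht
    obtain ⟨y, hy, e⟩ := h4 ht
    obtain ⟨w, hw, e'⟩ := h8 hy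
    refine ⟨w, hw, ?_⟩
    rw [iterate_succ_apply, e', e]
  obtain ⟨u, hu, eu⟩ := hsurj j1 ⟨le_refl _, hj⟩
  obtain ⟨w, hw, ew⟩ := hsurj j2 ⟨hj, le_refl _⟩
  obtain ⟨y, hy, e⟩ := fixpt (hg.iterate (n+2)) (u := u) (w := w)
    (eu.trans_le (h6 hu).1) ((h6 hw).2.trans ew.ge)
  have hy' : y ∈ Icc p q := (ordConnected_Icc.uIcc_subset hu hw) hy
  refine ⟨y, h6 hy', ?_, e⟩
  intro i hi hik
  obtain ⟨i, rfl⟩ : ∃ l, i = l + 1 := ⟨i - 1, by omega⟩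
  rw [iterate_succ_apply]
  exact h3 _ (h7 hy') i (by omega)

lemma cov {g : ℝ → ℝ} (hg : Continuous g) {u w c d p q : ℝ} (hu : u ∈ Icc p q)
    (hw : w ∈ Icc p q) (h1 : g u ≤ c) (h2 : d ≤ g w) : Icc c d ⊆ g '' Icc p q := by
  rintro t ⟨t1, t2⟩
  obtain ⟨y, hy, e⟩ := ivt hg (h1.trans t1) (t2.trans h2)
  exact ⟨y, ordConnected_Icc.uIcc_subset hu hw hy, e⟩

/-- from `f^2`-period `k` to `f`-period `2k` -/
lemma lift {f : ℝ → ℝ} {z y : ℝ} (hz : f z = z) {k : ℕ}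
    (hk : (f^[2])^[k] y = y) (hne : ∀ j, 0 < j → j < k → (f^[2])^[j] y ≠ y)
    (hle : ∀ j, j < k → (f^[2])^[j] y ≤ z) (hf : z ≤ f y) (hyz : y < z) :
    PeriodPt f (2 * k) y := by
  refine ⟨by rw [iterate_mul]; exact hk, ?_⟩
  intro i hi hik e
  rcases Nat.even_or_odd' i with ⟨j, rfl | rfl⟩
  · rw [iterate_mul] at e
    exact hne j (by omega) (by omega) e
  · have e2 : (f^[2])^[j+1] y = f y := by
      rw [← iterate_mul, show 2 * (j+1) = (2*j+1)+1 by ring, iterate_succ_apply', e]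
    have h3 : (f^[2])^[j+1] y ≤ z := by
      rcases Nat.lt_or_ge (j+1) k with h | h
      · exact hle _ h
      · obtain rfl : k = j + 1 := by omega
        rw [hk]; exact hyz.le
    have h4 : f y = z := le_antisymm (e2 ▸ h3) hf
    rw [iterate_succ_apply, h4, iterate_fixed hz] at e
    linarith

lemma main {f : ℝ → ℝ} (hf : Continuous f) {x : ℝ} (hx : PeriodPt f 6 x) (k : ℕ) (hk : 0 < k) :
    ∃ y, PeriodPt f (2 * k) y := by
  -- minimal point
  obtain ⟨m, hm6, hmne, hmin⟩ : ∃ m, f^[6] m = m ∧ (∀ i, 0 < i → i < 6 → f^[i] m ≠ m) ∧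
      ∀ j, m ≤ f^[j] m := by
    obtain ⟨i, hi, hmin⟩ := Finset.exists_min_image (Finset.range 6) (fun i => f^[i] x)
      ⟨0, by simp⟩
    have hp : IsPeriodicPt f 6 x := hx.1
    refine ⟨f^[i] x, (hp.apply_iterate i), ?_, ?_⟩
    · intro j hj hj6 e
      have h1 : IsPeriodicPt f j (f^[i] x) := e
      have h2 := h1.apply_iterate (6 - i)
      have hi' : i < 6 := by simpa using hi
      rw [← iterate_add_apply, show 6 - i + i = 6 by omega, hx.1] at h2
      exact hx.2 j hj hj6 h2
    · intro j
      rw [← iterate_add_apply, ← hp.iterate_mod_apply (j + i)]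
      exact hmin ((j + i) % 6) (Finset.mem_range.2 (Nat.mod_lt _ (by norm_num)))
  obtain ⟨g, hgdef⟩ : ∃ g, g = f^[2] := ⟨_, rfl⟩
  have hg : Continuous g := hgdef ▸ hf.iterate 2
  have gf : ∀ t, g t = f (f t) := by intro t; rw [hgdef]; rfl
  obtain ⟨b, hb⟩ : ∃ b, b = f^[5] m := ⟨_, rfl⟩
  have hfb : f b = m := by rw [hb, ← iterate_succ_apply' f 5]; exact hm6
  have hmb : m < b := lt_of_le_of_ne (hb ▸ hmin 5) (by rw [hb]; exact (hmne 5 (by norm_num) (by norm_num)).symm)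
  obtain ⟨v, hmv, hvb, hfv⟩ : ∃ v, m ≤ v ∧ v ≤ b ∧ f v = b := by
    have : ∃ t, m ≤ t ∧ t ≤ b ∧ b ≤ f t := by
      by_contra! hcon
      have : ∀ j, f^[j] m < b := by
        intro j
        induction j with
        | zero => exact hmb
        | succ j ih =>
          rw [iterate_succ_apply']
          exact hcon _ (hmin j) ih.le
      exact absurd (this 5) (by rw [hb]; exact lt_irrefl _)
    obtain ⟨t, t1, t2, t3⟩ := this
    obtain ⟨v, v1, v2, v3⟩ := ivt2 hf t2 t3 (hfb.trans_le hmb.le)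
    exact ⟨v, t1.trans v1, v2, v3⟩
  have hgv : g v = m := by rw [gf, hfv, hfb]
  have hmv : m < v := by
    refine lt_of_le_of_ne hmv ?_
    rintro rfl
    exact hmne 2 (by norm_num) (by norm_num) (by rw [← hgdef]; exact hgv)
  have hvb : v < b := by
    refine lt_of_le_of_ne hvb ?_
    rintro rfl
    linarith
  obtain ⟨z, hvz, hzb, hz⟩ := fixpt2 hf hvb.le (hvb.le.trans hfv.ge) (hfb.trans_le hmb.le)
  have hvz : v < z := by
    refine lt_of_le_of_ne hvz ?_
    rintro rfl
    linarith
  have hzb : z < b := by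
    refine lt_of_le_of_ne hzb ?_
    rintro rfl
    linarith
  have hgz : g z = z := by rw [gf, hz, hz]
  obtain ⟨z0, ⟨hvz0, hz0z, hz0⟩, hz0min⟩ := exLeast (h := fun t => g t - t) (by fun_prop)
    (u := v) (w := z) (t := 0) ⟨z, hvz.le, le_refl z, by linarith⟩
  have hz0 : g z0 = z0 := by linarith
  have hvz0 : v < z0 := by
    refine lt_of_le_of_ne hvz0 ?_
    rintro rfl
    linarith
  have hlt : ∀ t, v ≤ t → t < z0 → g t < t := by
    intro t t1 t2
    by_contra! hcon
    obtain ⟨s, s1, s2, s3⟩ := ivt1 (h := fun t => g t - t) (by fun_prop) (t := 0) t1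
      (by linarith) (by linarith)
    have := hz0min s s1 (by linarith) s3
    linarith
  have hfz : ∀ t, v ≤ t → t < z0 → z < f t := by
    intro t t1 t2
    by_contra! hcon
    obtain ⟨s, s1, s2, s3⟩ := ivt2 hf t1 (t := z) (by linarith) hcon
    have := hlt s s1 (by linarith)
    rw [gf, s3, hz] at this
    linarith
  by_cases hA : ∃ t, m ≤ t ∧ t ≤ v ∧ z0 ≤ g t
  · obtain ⟨t, t1, t2, t3⟩ := hA
    obtain ⟨d', d1', d2', d3'⟩ := ivt2 hg t2 t3 (by linarith)
    obtain ⟨d, ⟨d1, d2, d3⟩, d4⟩ := exGreatest hg ⟨d', t1.trans d1', d2', d3'⟩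
    have hdv : ∀ t, d < t → t ≤ v → g t < z0 := by
      intro t t1 t2
      by_contra! hcon
      obtain ⟨s, s1, s2, s3⟩ := ivt2 hg t2 hcon (by linarith)
      have := d4 s (by linarith) s2 s3
      linarith
    have hfd : ∀ t, d ≤ t → t ≤ v → z ≤ f t := by
      intro t t1 t2
      by_contra! hcon
      obtain ⟨s, s1, s2, s3⟩ := ivt1 hf t2 hcon.le (t := z) (by linarith)
      have hne : t ≠ s := by rintro rfl; linarith
      have := hdv s (lt_of_le_of_lt t1 (lt_of_le_of_ne s1 hne)) s2
      rw [gf, s3, hz] at this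
      linarith
    rcases Nat.lt_or_ge k 2 with h1 | h2
    · obtain rfl : k = 1 := by omega
      obtain ⟨y, y1, y2, y3⟩ := fixpt2 hg d2 (by linarith) (by linarith)
      refine ⟨y, lift hz ?_ ?_ ?_ (hfd y y1 y2) (by linarith)⟩
      · rw [← hgdef]; simpa using y3
      · intro j _ _; omega
      · intro j hj
        obtain rfl : j = 0 := by omega
        simp; linarith
    · have m1 : v ∈ Icc d v := ⟨d2, le_refl v⟩
      have m2 : d ∈ Icc d v := ⟨le_refl d, d2⟩
      have m3 : v ∈ Icc v z0 := ⟨le_refl v, hvz0.le⟩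
      have m4 : z0 ∈ Icc v z0 := ⟨hvz0.le, le_refl _⟩
      obtain ⟨y, ⟨y1, y2⟩, yK, yk⟩ := loop hg d2 (cov hg m3 m4 (by linarith) (by linarith))
        (cov hg m3 m4 (by linarith) (by linarith)) (cov hg m1 m2 (by linarith) (by linarith)) k h2
      refine ⟨y, lift hz (by rwa [← hgdef]) ?_ ?_ (hfd y y1 y2) (by linarith)⟩ <;> rw [← hgdef]
      · intro j j1 j2 e
        have h3 := (yK j j1 j2).1
        rw [e] at h3
        obtain rfl : y = v := le_antisymm y2 h3
        have h4 := (yK 1 (by norm_num) (by omega)).1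
        simp at h4
        linarith
      · intro j hj
        rcases Nat.eq_zero_or_pos j with rfl | h
        · simp; linarith
        · exact (yK j h hj).2.trans hz0z
  · push Not at hA
    have hfL : ∀ t, m ≤ t → t < z0 → z < f t := by
      intro t t1 t2
      rcases le_total v t with h | h
      · exact hfz t h t2
      by_contra! hcon
      obtain ⟨s, s1, s2, s3⟩ := ivt1 hf h hcon (by linarith)
      have := hA s (by linarith) s2
      rw [gf, s3, hz] at this
      linarith
    have hgL : ∀ t, m ≤ t → t < z0 → g t < z0 := by
      intro t t1 t2
      rcases le_total v t with h | h
      · exact (hlt t h t2).trans t2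
      · exact hA t t1 h
    have e1 : f^[2] m = g m := by rw [hgdef]
    have e2 : f^[4] m = g (g m) := by rw [hgdef]; rfl
    have e3 : g (g (g m)) = m := by rw [hgdef]; exact hm6
    have l1 : m < g m := lt_of_le_of_ne (e1 ▸ hmin 2)
      (e1 ▸ (hmne 2 (by norm_num) (by norm_num)).symm)
    have l2 : m < g (g m) := lt_of_le_of_ne (e2 ▸ hmin 4)
      (e2 ▸ (hmne 4 (by norm_num) (by norm_num)).symm)
    have u1 : g m < z0 := hgL m le_rfl (by linarith)
    have u2 : g (g m) < z0 := hgL _ l1.le u1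
    obtain ⟨p, hp⟩ : ∃ p, p = g m := ⟨_, rfl⟩
    obtain ⟨q, hq⟩ : ∃ q, q = g p := ⟨_, rfl⟩
    rw [← hp] at e3 l1 l2 u1 u2
    rw [← hp, ← hq] at e2
    rw [← hq] at e3 l2 u2
    have hpq : p ≠ q := by
      intro h
      have h1 : g p = m := by rw [h]; exact e3
      linarith
    -- assemble
    have fin : ∀ y, m ≤ y → y < z0 → g^[k] y = y → (∀ j, 0 < j → j < k → g^[j] y ≠ y) →
        (∀ j, 0 < j → j < k → g^[j] y ≤ z) → ∃ y, PeriodPt f (2 * k) y := by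
      intro y y1 y2 y3 y4 y5
      refine ⟨y, lift hz (by rwa [← hgdef]) (by rwa [← hgdef]) ?_ (hfL y y1 y2).le (by linarith)⟩
      intro j hj
      rcases Nat.eq_zero_or_pos j with rfl | h
      · simp; linarith
      · rw [← hgdef]; exact y5 j h hj
    rcases Nat.lt_or_ge k 2 with h1 | h2
    · obtain rfl : k = 1 := by omega
      rcases lt_or_gt_of_ne hpq with h | h
      · obtain ⟨y, y1, y2, y3⟩ := fixpt2 hg h.le (by linarith) (by linarith)
        exact fin y (by linarith) (by linarith) (by simpa using y3) (fun j _ _ => by omega)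
          (fun j _ _ => by omega)
      · obtain ⟨y, y1, y2, y3⟩ := fixpt2 hg l2.le (by linarith) (by linarith)
        exact fin y (by linarith) (by linarith) (by simpa using y3) (fun j _ _ => by omega)
          (fun j _ _ => by omega)
    rcases lt_or_gt_of_ne hpq with h | h
    · -- m → p → q → m, m < p < q
      have m1 : m ∈ Icc m p := ⟨le_rfl, l1.le⟩
      have m2 : p ∈ Icc m p := ⟨l1.le, le_rfl⟩
      have m3 : p ∈ Icc p q := ⟨le_rfl, h.le⟩
      have m4 : q ∈ Icc p q := ⟨h.le, le_rfl⟩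
      obtain ⟨y, ⟨y1, y2⟩, yK, yk⟩ := loop hg l1.le (cov hg m4 m3 (by linarith) (by linarith))
        (cov hg m4 m3 (by linarith) (by linarith)) (cov hg m1 m2 (by linarith) (by linarith)) k h2
      refine fin y y1 (by linarith) yk ?_ ?_
      · intro j j1 j2 e
        have h3 := (yK j j1 j2).1
        rw [e] at h3
        obtain rfl : y = p := le_antisymm y2 h3
        have h5 : g^[2] y = m := by
          change g (g y) = m
          rw [← hq, e3]
        rcases Nat.lt_or_ge 2 k with h6 | h6
        · have := (yK 2 (by norm_num) h6).1
          linarith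
        · obtain rfl : k = 2 := by omega
          linarith
      · intro j a b
        linarith [(yK j a b).2]
    · -- m < q < p
      have m1 : m ∈ Icc m q := ⟨le_rfl, l2.le⟩
      have m2 : q ∈ Icc m q := ⟨l2.le, le_rfl⟩
      have m3 : q ∈ Icc q p := ⟨le_rfl, h.le⟩
      have m4 : p ∈ Icc q p := ⟨h.le, le_rfl⟩
      obtain ⟨y, ⟨y1, y2⟩, yK, yk⟩ := loop hg h.le (cov hg m2 m1 (by linarith) (by linarith))
        (cov hg m2 m1 (by linarith) (by linarith)) (cov hg m3 m4 (by linarith) (by linarith)) k h2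
      refine fin y (by linarith) (by linarith) yk ?_ ?_
      · intro j j1 j2 e
        have h3 := (yK j j1 j2).2
        rw [e] at h3
        obtain rfl : y = q := le_antisymm h3 y1
        have h5 : g^[2] y = p := by
          change g (g y) = p
          rw [e3, hp]
        rcases Nat.lt_or_ge 2 k with h6 | h6
        · have := (yK 2 (by norm_num) h6).2
          linarith
        · obtain rfl : k = 2 := by omega
          linarith
      · intro j a b
        linarith [(yK j a b).2]

end PerSix

theorem period_six_implies_all_even_periods (a b : ℝ) (hab : a ≤ b) (f : ℝ → ℝ)
    (hcont : ContinuousOn f (Set.Icc a b))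
    (hmaps : Set.MapsTo f (Set.Icc a b) (Set.Icc a b))
    (x : ℝ) (hx : x ∈ Set.Icc a b) (hper : PeriodPt f 6 x) :
    ∀ n : ℕ, Even n → 0 < n → ∃ y ∈ Set.Icc a b, PeriodPt f n y := by
  intro n hn hn0
  obtain ⟨F, hF⟩ : ∃ F : ℝ → ℝ, F = Set.IccExtend hab ((Set.Icc a b).domRestrict f) := ⟨_, rfl⟩
  have hFc : Continuous F := by
    rw [hF]; exact (continuousOn_iff_continuous_domRestrict.1 hcont).Icc_extend'
  have hFf : ∀ t ∈ Set.Icc a b, F t = f t := by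
    intro t ht
    rw [hF, Set.IccExtend_of_mem hab _ ht]; rfl
  have hFm : ∀ t, F t ∈ Set.Icc a b := by
    intro t
    rw [hF]
    exact hmaps (Set.projIcc a b hab t).2
  have hit : ∀ t ∈ Set.Icc a b, ∀ i, F^[i] t = f^[i] t := by
    intro t ht i
    induction i with
    | zero => rfl
    | succ i ih =>
      rw [Function.iterate_succ_apply', Function.iterate_succ_apply', ih]
      exact hFf _ (hmaps.iterate i ht)
  have htr : ∀ t ∈ Set.Icc a b, ∀ i, PeriodPt F i t ↔ PeriodPt f i t := by
    intro t ht i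
    simp only [PeriodPt, hit t ht]
  obtain ⟨k, rfl⟩ := hn.two_dvd
  obtain ⟨y, hy⟩ := PerSix.main hFc ((htr x hx 6).2 hper) k (by omega)
  have hyI : y ∈ Set.Icc a b := by
    have h := hy.1
    obtain ⟨l, hl⟩ : ∃ l, 2 * k = l + 1 := ⟨2 * k - 1, by omega⟩
    rw [hl, Function.iterate_succ_apply'] at h
    rw [← h]
    exact hFm _
  exact ⟨y, hyI, (htr y hyI _).1 hy⟩
end
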